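/- arXiv:2102.06889 — 2 statements merged into one kernel-verified Lean document; each statement's English description precedes it below -/
import Mathlib

section
/- Let A be a demonic VASS with d counters and let D(A) be the DAG of its strongly connected components. For a path η_1,…,η_m in D(A) starting at a root of D(A), define v_0 = (1,…,1) and v_i = V_{η_i}(v_{i−1}) for 1 ≤ i ≤ m. Then for every counter c_i and every k ∈ ℕ: C_A[c_i] ∈ Ω(n^k) if and only if there is a path η_1,…,η_m in D(A) from a root with v_m(i) ≥ k; and C_A[c_i] ∈ O(n^k) if and only if for every path η_1,…,η_m in D(A) from a root, v_m(i) ≤ k. -/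
/-!
# Counter complexity of demonic VASS along paths of strongly connected components

One strongly connected component is abstracted to a `Net`: a finite graph with integer updates,
whose counter `x` starts at order `n ^ v x` with `v x ≥ 1`.  A net is stratified into layers.  At
layer `l` one considers the feasible circulations (`Net.Feas`): those supported on edges of all
earlier layers whose effect on a counter of known exponent `l - j` is nonnegative on every class
(connected component) of the graph of layer `j`.  `Net.G l` is the set of edges used by feasible
circulations, and `Net.B l` the set of counters, not bounded before and with `v x ≤ l`, which no
feasible circulation increases.

*Upper bound in a component.*  The Farkas lemma (`farkas_dot`, `Net.exists_dual`, `Net.exists_rank`)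
turns the definition of the layer `l` into a rank function, which shows that edges outside `G l`
are used `O(n ^ l)` times and that counters in `B l` are `O(n ^ l)` (`Net.upper_step`,
`Net.upper`).

*Lower bound in a component.*  A maximal feasible circulation has Eulerian circuits on the classes
of its layer (`Net.exists_mu`, `Net.euler_class`).  Nesting the circuits of all layers into one
another (`Net.weave`, `rep`, `Net.build`) gives closed walks which are affordable and pump each
counter outside `B 0 ∪ ⋯ ∪ B (K - 1)` to order `n ^ K`, all counters at once (`Net.growth`).  Hence
the exponent of `x` is the `k` with `x ∈ B k`, or `∞` if there is none (`Net.core`), and `scc_core`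
states this for the function `Vfun` of the component.

*Paths.*  Along a path of components the lower bounds compose after dividing `n` by a constant and
inserting connecting walks of bounded cost (`RPath.lower`).  Conversely, every computation
from a root component follows a path (`exists_thru`), its counters are bounded by the path
exponents (`RPath.upper`), and there are finitely many paths, because none repeats a component
(`RPath.nodup`); other initial states are reduced to root components by `exists_root`.  This gives
`bigOmega_of_path` and `bigO_of_paths`; the two remaining implications of the theorem follow since
`Ω(n ^ b)` and `O(n ^ a)` together force `b ≤ a` (`exp_le_of_BigO_BigOmega`).
-/

open scoped Classical

namespace VassPaper

noncomputable section

/-- A `d`-dimensional VASS (game): a finite nonempty set of control states together with a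
finite set of transitions, where states are partitioned into angelic and demonic ones
(via the predicate `angelic`; demonic states are those that are not angelic). -/
structure VASS (d : ℕ) where
  Q : Type
  [finQ : Fintype Q]
  [neQ : Nonempty Q]
  Tran : Finset (Q × (Fin d → ℤ) × Q)
  angelic : Q → Prop

attribute [instance] VASS.finQ VASS.neQ

variable {d : ℕ}

/-- Every control state has at least one outgoing transition. -/
def VASS.total (V : VASS d) : Prop := ∀ q : V.Q, ∃ u p, (q, u, p) ∈ V.Tran

/-- A demonic VASS: all states are demonic. -/
def VASS.demonic (V : VASS d) : Prop := ∀ q : V.Q, ¬ V.angelic q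

/-- A configuration: a control state together with a vector of counter values. -/
abbrev VASS.Config (V : VASS d) : Type := V.Q × (Fin d → ℕ)

/-- A transition is enabled in a configuration if it is a transition of the VASS, starts in the
current control state, and does not make any counter negative. -/
def VASS.enabled (V : VASS d) (c : V.Config) (t : V.Q × (Fin d → ℤ) × V.Q) : Prop :=
  t ∈ V.Tran ∧ t.1 = c.1 ∧ ∀ i, 0 ≤ (c.2 i : ℤ) + t.2.1 i

/-- The configuration resulting from taking transition `t` in configuration `c`. -/
def VASS.applyT (V : VASS d) (c : V.Config) (t : V.Q × (Fin d → ℤ) × V.Q) : V.Config :=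
  (t.2.2, fun i => ((c.2 i : ℤ) + t.2.1 i).toNat)

/-- A strategy for the player owning the states in `own`: it assigns to every finite computation
(represented by its strict past `h` and current configuration `c`) an outgoing transition of the
current control state; the chosen transition must be enabled whenever some enabled transition
exists. -/
structure Strategy (V : VASS d) (own : V.Q → Prop) where
  choose : List V.Config → V.Config → V.Q × (Fin d → ℤ) × V.Q
  choose_mem : ∀ h c, own c.1 → (∃ t ∈ V.Tran, t.1 = c.1) →
    choose h c ∈ V.Tran ∧ (choose h c).1 = c.1
  choose_enabled : ∀ h c, own c.1 → (∃ t, V.enabled c t) → V.enabled c (choose h c)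

abbrev AngelStrategy (V : VASS d) := Strategy V V.angelic
abbrev DemonStrategy (V : VASS d) := Strategy V (fun q => ¬ V.angelic q)

/-- The maximal computation determined by the pair of strategies `(σ, π)` and the initial
configuration `init`: `playAux σ π init n` is (the history together with) the `n`-th
configuration of the computation, or `none` if the computation has already ended. -/
def playAux {V : VASS d} (σ : AngelStrategy V) (π : DemonStrategy V) (init : V.Config) :
    ℕ → Option (List V.Config × V.Config)
  | 0 => some ([], init)
  | n+1 => (playAux σ π init n).bind fun hc =>
      let t := if V.angelic hc.2.1 then σ.choose hc.1 hc.2 else π.choose hc.1 hc.2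
      if V.enabled hc.2 t then some (hc.1 ++ [hc.2], V.applyT hc.2 t) else none

/-- `c` is visited by the maximal computation `Comp^{σ,π}(init)`. -/
def visits {V : VASS d} (σ : AngelStrategy V) (π : DemonStrategy V) (init : V.Config)
    (c : V.Config) : Prop := ∃ n h, playAux σ π init n = some (h, c)

/-- The length of the maximal computation `Comp^{σ,π}(init)` (number of configurations),
as an extended natural number. -/
def lenComp {V : VASS d} (σ : AngelStrategy V) (π : DemonStrategy V) (init : V.Config) : ℕ∞ :=
  ⨆ n ∈ {n : ℕ | (playAux σ π init n).isSome}, ((n : ℕ∞) + 1)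

/-- The supremum of the values of counter `i` along the maximal computation
`Comp^{σ,π}(init)`. -/
def maxCounter {V : VASS d} (σ : AngelStrategy V) (π : DemonStrategy V) (init : V.Config)
    (i : Fin d) : ℕ∞ :=
  ⨆ c ∈ {c : V.Config | visits σ π init c}, (c.2 i : ℕ∞)

/-- `Tval(pv) = inf_σ sup_π len(Comp^{σ,π}(pv))`. -/
def Tval (V : VASS d) (init : V.Config) : ℕ∞ :=
  ⨅ σ : AngelStrategy V, ⨆ π : DemonStrategy V, lenComp σ π init

/-- `Cval[c](pv) = inf_σ sup_π max_c(Comp^{σ,π}(pv))`. -/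
def Cval (V : VASS d) (i : Fin d) (init : V.Config) : ℕ∞ :=
  ⨅ σ : AngelStrategy V, ⨆ π : DemonStrategy V, maxCounter σ π init i

/-- Termination complexity: `L(n) = max_{p ∈ Q} Tval(p n⃗)`. -/
def Lcomp (V : VASS d) : ℕ → ℕ∞ := fun n => ⨆ p : V.Q, Tval V (p, fun _ => n)

/-- Counter complexity: `C[c](n) = max_{p ∈ Q} Cval[c](p n⃗)`. -/
def Ccomp (V : VASS d) (i : Fin d) : ℕ → ℕ∞ := fun n => ⨆ p : V.Q, Cval V i (p, fun _ => n)

/-- `f ∈ O(g)`: `f n ≤ C · g n` for some constant `C` and all sufficiently large `n`. -/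
def BigO (f : ℕ → ℕ∞) (g : ℕ → ℕ) : Prop := ∃ C N : ℕ, ∀ n ≥ N, f n ≤ ((C * g n : ℕ) : ℕ∞)

/-- `f ∈ Ω(g)`: `f n ≥ g n / c` (i.e. `g n ≤ c · f n`) for some constant `c > 0` and all
sufficiently large `n`. -/
def BigOmega (f : ℕ → ℕ∞) (g : ℕ → ℕ) : Prop :=
  ∃ c N : ℕ, 0 < c ∧ ∀ n ≥ N, (g n : ℕ∞) ≤ (c : ℕ∞) * f n

/-- `f ∈ Θ(g) = O(g) ∩ Ω(g)`. -/
def BigTheta (f : ℕ → ℕ∞) (g : ℕ → ℕ) : Prop := BigO f g ∧ BigOmega f g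

/-- `f ∈ 2^{Ω(n)}`: `f n ≥ 2^{εn}` for some `ε > 0` (taken of the form `1/c`) and all
sufficiently large `n`. -/
def ExpOmega (f : ℕ → ℕ∞) : Prop :=
  ∃ c N : ℕ, 0 < c ∧ ∀ n ≥ N, ((2 ^ (n / c) : ℕ) : ℕ∞) ≤ f n

/-- `S ∈ 2^{O(n)}`: `S n ≤ 2^{Cn}` for some constant `C` and all sufficiently large `n`. -/
def ExpO (S : ℕ → ℕ) : Prop := ∃ C N : ℕ, ∀ n ≥ N, S n ≤ 2 ^ (C * n)


/-- The edge relation on control states induced by the transitions. -/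
def VASS.edgeRel {d : ℕ} (V : VASS d) : V.Q → V.Q → Prop := fun p q => ∃ u, (p, u, q) ∈ V.Tran

/-- A VASS is strongly connected if every state is reachable from every other state. -/
def VASS.stronglyConnected {d : ℕ} (V : VASS d) : Prop :=
  ∀ p q : V.Q, Relation.ReflTransGen V.edgeRel p q

/-- `C[c,v](n) = max_{p ∈ Q} Cval[c](p u)` where `u = (n^{v 1}, …, n^{v d})`. -/
def CvecComp {d : ℕ} (V : VASS d) (c : Fin d) (v : Fin d → ℕ) : ℕ → ℕ∞ :=
  fun n => ⨆ p : V.Q, Cval V c (p, fun i => n ^ v i)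

/-- The VASS `A_v` obtained from `A` by zeroing the components of all update vectors at the
indices `i` with `v i = ∞`. -/
def VASS.modInf {d : ℕ} (V : VASS d) (v : Fin d → ℕ∞) : VASS d :=
  { V with Tran := V.Tran.image fun t =>
      (t.1, (fun i => if v i = ⊤ then 0 else t.2.1 i), t.2.2) }

/-- The vector `v'` obtained from `v` by changing all `∞` components into `1`. -/
def vTrunc {d : ℕ} (v : Fin d → ℕ∞) : Fin d → ℕ :=
  fun i => if v i = ⊤ then 1 else (v i).toNat

/-- `C_A[c,v] = C_{A_v}[c,v']` for `v ∈ ℕ∞^d`. -/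
def CInf {d : ℕ} (V : VASS d) (c : Fin d) (v : Fin d → ℕ∞) : ℕ → ℕ∞ :=
  CvecComp (V.modInf v) c (vTrunc v)

/-- `F : ℕ → ℕ^d` is `v`-consistent: the `i`-th projection of `F` is in `Θ(n^k)` when
`v i = k ∈ ℕ`, and in `2^{Ω(n)}` when `v i = ∞`. -/
def vConsistent {d : ℕ} (v : Fin d → ℕ∞) (F : ℕ → Fin d → ℕ) : Prop :=
  ∀ i : Fin d,
    (∀ k : ℕ, v i = (k : ℕ∞) → BigTheta (fun n => ((F n i : ℕ) : ℕ∞)) (fun n => n ^ k)) ∧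
    (v i = ⊤ → ExpOmega (fun n => ((F n i : ℕ) : ℕ∞)))

/-- Mutual reachability of control states. -/
def mutReach {d : ℕ} (V : VASS d) (p q : V.Q) : Prop :=
  Relation.ReflTransGen V.edgeRel p q ∧ Relation.ReflTransGen V.edgeRel q p

/-- The strongly connected component of a state. -/
def sccOf {d : ℕ} (V : VASS d) (p : V.Q) : Set V.Q := {q | mutReach V p q}

/-- A strongly connected component of `A` (a vertex of the DAG `D(A)`). -/
def IsSCC {d : ℕ} (V : VASS d) (C : Set V.Q) : Prop := ∃ p : V.Q, C = sccOf V p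

/-- The edges of the DAG `D(A)` of strongly connected components. -/
def sccEdge {d : ℕ} (V : VASS d) (C C' : Set V.Q) : Prop :=
  C ≠ C' ∧ ∃ p ∈ C, ∃ q ∈ C', V.edgeRel p q

/-- A root of `D(A)`: an SCC with no incoming edge. -/
def IsRootSCC {d : ℕ} (V : VASS d) (C : Set V.Q) : Prop :=
  IsSCC V C ∧ ∀ C' : Set V.Q, IsSCC V C' → ¬ sccEdge V C' C

/-- The restriction of `A` to a set `C` of states: all transitions leading from/to states
outside `C` are deleted.  (States outside `C` become isolated and do not affect the
functions `C[c,v]`, since an isolated state contributes exactly the initial counter value.) -/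
def VASS.restrictTo {d : ℕ} (V : VASS d) (C : Set V.Q) : VASS d :=
  { V with Tran := V.Tran.filter fun t => t.1 ∈ C ∧ t.2.2 ∈ C }

/-- The function `V_A : ℕ∞^d → ℕ∞^d`: `V_A(v)(i) = k` if `v i ≠ ∞` and
`C_A[c_i,v] ∈ Θ(n^k)`, and `V_A(v)(i) = ∞` otherwise. -/
def Vfun {d : ℕ} (V : VASS d) (v : Fin d → ℕ∞) : Fin d → ℕ∞ := fun i =>
  if h : v i ≠ ⊤ ∧ ∃ k : ℕ, BigTheta (CInf V i v) (fun n => n ^ k) then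
    ((h.2.choose : ℕ) : ℕ∞)
  else ⊤

/-- `v_m` for a path `η_1, …, η_m` in `D(A)`:
`v_0 = (1,…,1)` and `v_i = V_{η_i}(v_{i-1})`. -/
def pathVec {d : ℕ} (V : VASS d) (ηs : List (Set V.Q)) : Fin d → ℕ∞ :=
  ηs.foldl (fun w C => Vfun (V.restrictTo C) w) (fun _ => (1 : ℕ∞))

/-- A path in `D(A)` starting at a root. -/
def IsRootedSCCPath {d : ℕ} (V : VASS d) (ηs : List (Set V.Q)) : Prop :=
  (∀ C ∈ ηs, IsSCC V C) ∧ List.Chain' (sccEdge V) ηs ∧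
    ∃ C₀ rest, ηs = C₀ :: rest ∧ IsRootSCC V C₀

section

/-! ### The Farkas lemma -/

/-- The Farkas lemma for finitely many linear functionals on an arbitrary `ℚ`-vector space, by
induction on the number of functionals (no finite dimension is needed). -/
theorem farkas_linear {W I : Type*} [AddCommGroup W] [Module ℚ W] (s : Finset I) :
    ∀ (a : I → W →ₗ[ℚ] ℚ) (b : W →ₗ[ℚ] ℚ),
      (∀ x, (∀ i ∈ s, a i x ≤ 0) → b x ≤ 0) →
      ∃ c : I → ℚ, (∀ i, 0 ≤ c i) ∧ b = ∑ i ∈ s, c i • a i := by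
  induction s using Finset.induction_on with
  | empty =>
    intro a b h
    refine ⟨0, fun _ => le_rfl, ?_⟩
    ext x
    have h1 := h x (by simp)
    have h2 := h (-x) (by simp)
    simp only [map_neg] at h2
    simp
    linarith
  | insert m s hm ih =>
    intro a b h
    by_cases hs : ∀ x, (∀ i ∈ s, a i x ≤ 0) → b x ≤ 0
    · obtain ⟨c, hc, hb⟩ := ih a b hs
      refine ⟨fun i => if i = m then 0 else c i, fun i => by
        dsimp only; split_ifs <;> simp [hc], ?_⟩
      rw [Finset.sum_insert hm, hb]
      simp only [if_true, zero_smul, zero_add]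
      refine Finset.sum_congr rfl fun i hi => ?_
      rw [if_neg (ne_of_mem_of_not_mem hi hm)]
    · push Not at hs
      obtain ⟨x₁, hx₁, hbx₁⟩ := hs
      have hpos : 0 < a m x₁ := by
        by_contra hneg
        push Not at hneg
        have := h x₁ (by
          intro i hi
          rcases Finset.mem_insert.1 hi with rfl | hi
          · exact hneg
          · exact hx₁ i hi)
        linarith
      set x₀ : W := (a m x₁)⁻¹ • x₁ with hx₀
      have h1 : a m x₀ = 1 := by
        simp [hx₀, hpos.ne']
      have h2 : ∀ i ∈ s, a i x₀ ≤ 0 := by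
        intro i hi
        simp only [hx₀, map_smul, smul_eq_mul]
        exact mul_nonpos_of_nonneg_of_nonpos (inv_nonneg.2 hpos.le) (hx₁ i hi)
      have h3 : 0 < b x₀ := by
        simp only [hx₀, map_smul, smul_eq_mul]
        exact mul_pos (inv_pos.2 hpos) hbx₁
      obtain ⟨c, hc, hb⟩ := ih (fun i => a i - (a i x₀) • a m) (b - (b x₀) • a m) (by
        intro x hx
        have := h (x - (a m x) • x₀) (by
          intro i hi
          rcases Finset.mem_insert.1 hi with rfl | hi
          · simp [h1]
          · have := hx i hi
            simp only [LinearMap.sub_apply, LinearMap.smul_apply, smul_eq_mul] at this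
            simp only [map_sub, map_smul, smul_eq_mul]
            linarith)
        simp only [map_sub, map_smul, smul_eq_mul] at this
        simp only [LinearMap.sub_apply, LinearMap.smul_apply, smul_eq_mul]
        linarith)
      have hcoef : 0 ≤ b x₀ - ∑ i ∈ s, c i * a i x₀ := by
        have : ∑ i ∈ s, c i * a i x₀ ≤ 0 :=
          Finset.sum_nonpos fun i hi => mul_nonpos_of_nonneg_of_nonpos (hc i) (h2 i hi)
        linarith
      refine ⟨fun i => if i = m then b x₀ - ∑ i ∈ s, c i * a i x₀ else c i, fun i => by
        dsimp only; split_ifs <;> simp [hc, hcoef, -sub_nonneg], ?_⟩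
      rw [Finset.sum_insert hm]
      have hsum : ∑ i ∈ s, (if i = m then b x₀ - ∑ i ∈ s, c i * a i x₀ else c i) • a i
          = ∑ i ∈ s, c i • a i := by
        refine Finset.sum_congr rfl fun i hi => ?_
        rw [if_neg (ne_of_mem_of_not_mem hi hm)]
      rw [hsum]
      simp only [if_true]
      ext x
      have := congrArg (fun f : W →ₗ[ℚ] ℚ => f x) hb
      simp only [LinearMap.sub_apply, LinearMap.smul_apply, smul_eq_mul, LinearMap.sum_apply,
        mul_sub, Finset.sum_sub_distrib] at this
      simp only [LinearMap.add_apply, LinearMap.smul_apply, smul_eq_mul, LinearMap.sum_apply]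
      have e2 : ∑ i ∈ s, c i * (a i x₀ * a m x) = (∑ i ∈ s, c i * a i x₀) * a m x := by
        rw [Finset.sum_mul]; exact Finset.sum_congr rfl fun i _ => by ring
      rw [e2] at this
      linarith

/-- The Farkas lemma in coordinates. -/
theorem farkas_dot {E I : Type*} [Fintype E] [Fintype I] (a : I → E → ℚ) (b : E → ℚ)
    (h : ∀ x : E → ℚ, (∀ i, ∑ e, x e * a i e ≤ 0) → ∑ e, x e * b e ≤ 0) :
    ∃ c : I → ℚ, (∀ i, 0 ≤ c i) ∧ ∀ e, b e = ∑ i, c i * a i e := by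
  let lin : (E → ℚ) → ((E → ℚ) →ₗ[ℚ] ℚ) := fun k => Fintype.linearCombination ℚ k
  have hlin : ∀ k x, lin k x = ∑ e, x e * k e := by
    intro k x; simp [lin, Fintype.linearCombination_apply]
  obtain ⟨c, hc, hb⟩ := farkas_linear Finset.univ (fun i => lin (a i)) (lin b) (by
    intro x hx
    rw [hlin]
    exact h x fun i => by rw [← hlin]; exact hx i (Finset.mem_univ i))
  refine ⟨c, hc, fun e => ?_⟩
  have := congrArg (fun f : (E → ℚ) →ₗ[ℚ] ℚ => f (Pi.single e 1)) hb
  simpa [hlin, LinearMap.sum_apply, Pi.single_apply] using this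

/-! ### Stratification of a net -/

/-- A finite directed graph whose edges update counters: `src` and `tgt` are the ends of an edge,
`u e x` is the update of the counter `x` along `e`, and `v x` is the exponent of the initial value
of `x`, which is of order `n ^ v x`. Every strongly connected component of a VASS is studied in
this form. -/
structure Net (Q E ι : Type) where
  src : E → Q
  tgt : E → Q
  u : E → ι → ℤ
  v : ι → ℕ

set_option linter.unusedSectionVars false

variable {Q E ι : Type} [Fintype Q] [Fintype E] [Fintype ι]

/-- There is an edge of `G` from `p` to `q`. -/
def Net.adj (N : Net Q E ι) (G : Set E) (p q : Q) : Prop := ∃ e ∈ G, N.src e = p ∧ N.tgt e = q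

/-- `p` and `q` lie in the same connected component of the undirected graph with edge set `G`.
These components are called the `G`-classes. -/
def Net.sim (N : Net Q E ι) (G : Set E) : Q → Q → Prop := Relation.EqvGen (N.adj G)

/-- `m` is a circulation: a multiset of edges entering every state as often as leaving it. -/
def Net.Circ (N : Net Q E ι) (m : E → ℕ) : Prop :=
  ∀ q, (∑ e, if N.tgt e = q then m e else 0) = ∑ e, if N.src e = q then m e else 0

/-- The first layer `j` in which the counter `x` is bounded, i.e. `x ∈ (g j).2`, cut off at `l`.
It is the exponent known for `x` when layer `l` is computed. -/
def wl (g : ℕ → Set E × Set ι) (l : ℕ) (x : ι) : ℕ := sInf {j | x ∈ (g j).2 ∨ l ≤ j}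

/-- The circulations allowed at layer `l`: they use only edges surviving all the earlier layers,
and a counter of known exponent `l - j` must not be decreased on any class of layer `j`. The
reason for the last condition: a run leaves the classes of layer `j` only `O(n ^ j)` times, so a
counter of order `n ^ (l - j)` can lose only `O(n ^ l)` on a class altogether, and a circulation
to be repeated more often must not decrease it there. -/
structure Net.Feas (N : Net Q E ι) (g : ℕ → Set E × Set ι) (l : ℕ) (m : E → ℕ) : Prop where
  circ : N.Circ m
  supp : ∀ j < l, ∀ e, m e ≠ 0 → e ∈ (g j).1
  row : ∀ x, N.v x ≤ l → ∀ j < l, j + wl g l x = l → ∀ p,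
    0 ≤ ∑ e, if N.sim (g j).1 p (N.src e) then (m e : ℤ) * N.u e x else 0

/-- Layer `l`, computed from the earlier layers `g`: the edges used by some feasible circulation,
and the counters with `v x ≤ l`, not bounded in an earlier layer, that no feasible circulation
increases. -/
def Net.layerStep (N : Net Q E ι) (l : ℕ) (g : ℕ → Set E × Set ι) : Set E × Set ι :=
  ({e | ∃ m, N.Feas g l m ∧ m e ≠ 0},
   {x | N.v x ≤ l ∧ (∀ j < l, x ∉ (g j).2) ∧
      ∀ m, N.Feas g l m → ∑ e, (m e : ℤ) * N.u e x ≤ 0})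

theorem wl_congr {g g' : ℕ → Set E × Set ι} {l : ℕ} (h : ∀ j < l, g j = g' j) (x : ι) :
    wl g l x = wl g' l x := by
  unfold wl
  congr 1
  ext j
  by_cases hj : j < l
  · simp [h j hj]
  · simp [not_lt.1 hj]

theorem Net.Feas.congr {N : Net Q E ι} {g g' : ℕ → Set E × Set ι} {l : ℕ}
    (h : ∀ j < l, g j = g' j) {m : E → ℕ} (hm : N.Feas g l m) : N.Feas g' l m where
  circ := hm.circ
  supp := fun j hj => by rw [← h j hj]; exact hm.supp j hj
  row := fun x hx j hj hjw => by
    rw [← h j hj]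
    exact hm.row x hx j hj (by rw [wl_congr h]; exact hjw)

theorem Net.layerStep_congr (N : Net Q E ι) {g g' : ℕ → Set E × Set ι} {l : ℕ}
    (h : ∀ j < l, g j = g' j) : N.layerStep l g = N.layerStep l g' := by
  have hf : ∀ m, N.Feas g l m ↔ N.Feas g' l m := fun m =>
    ⟨fun hm => hm.congr h, fun hm => hm.congr fun j hj => (h j hj).symm⟩
  have hb : ∀ x, (∀ j < l, x ∉ (g j).2) ↔ (∀ j < l, x ∉ (g' j).2) := fun x =>
    forall₂_congr fun j hj => by rw [h j hj]
  unfold Net.layerStep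
  simp only [hf, hb]

/-- The layers of a net, by well-founded recursion: layer `l` depends on the layers `j < l` only.
-/
def Net.lay (N : Net Q E ι) (l : ℕ) : Set E × Set ι :=
  N.layerStep l (fun j => if _h : j < l then N.lay j else (∅, ∅))
termination_by l

theorem Net.lay_eq (N : Net Q E ι) (l : ℕ) : N.lay l = N.layerStep l N.lay := by
  rw [Net.lay]
  exact N.layerStep_congr fun j hj => by simp [hj]

/-- The edges of layer `l`; the edges outside `G l` can be used only `O(n ^ l)` times. -/
def Net.G (N : Net Q E ι) (l : ℕ) : Set E := (N.lay l).1

/-- The counters bounded in layer `l`, which in a strongly connected net are those of exponent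
exactly `l`. -/
def Net.B (N : Net Q E ι) (l : ℕ) : Set ι := (N.lay l).2

theorem Net.mem_G {N : Net Q E ι} {l : ℕ} {e : E} :
    e ∈ N.G l ↔ ∃ m, N.Feas N.lay l m ∧ m e ≠ 0 := by
  unfold Net.G; rw [Net.lay_eq]; rfl

theorem Net.mem_B {N : Net Q E ι} {l : ℕ} {x : ι} :
    x ∈ N.B l ↔ N.v x ≤ l ∧ (∀ j < l, x ∉ N.B j) ∧
      ∀ m, N.Feas N.lay l m → ∑ e, (m e : ℤ) * N.u e x ≤ 0 := by
  unfold Net.B; rw [Net.lay_eq]; rfl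

theorem Net.G_anti {N : Net Q E ι} {j l : ℕ} (h : j ≤ l) : N.G l ⊆ N.G j := by
  rcases h.eq_or_lt with rfl | h
  · exact subset_rfl
  · intro e he
    obtain ⟨m, hm, hme⟩ := Net.mem_G.1 he
    exact hm.supp j h e hme

theorem Net.sim_refl (N : Net Q E ι) (G : Set E) (p : Q) : N.sim G p p := Relation.EqvGen.refl p
theorem Net.sim_symm {N : Net Q E ι} {G : Set E} {p q : Q} (h : N.sim G p q) : N.sim G q p :=
  Relation.EqvGen.symm _ _ h
theorem Net.sim_trans {N : Net Q E ι} {G : Set E} {p q r : Q} (h : N.sim G p q)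
    (h' : N.sim G q r) : N.sim G p r := Relation.EqvGen.trans _ _ _ h h'
theorem Net.sim_edge {N : Net Q E ι} {G : Set E} {e : E} (h : e ∈ G) :
    N.sim G (N.src e) (N.tgt e) := Relation.EqvGen.rel _ _ ⟨e, h, rfl, rfl⟩
theorem Net.sim_mono {N : Net Q E ι} {G G' : Set E} (h : G ⊆ G') {p q : Q} (hs : N.sim G p q) :
    N.sim G' p q := by
  induction hs with
  | rel p q h1 => obtain ⟨e, he, h2⟩ := h1; exact Relation.EqvGen.rel _ _ ⟨e, h he, h2⟩
  | refl => exact Relation.EqvGen.refl _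
  | symm _ _ _ ih => exact Net.sim_symm ih
  | trans _ _ _ _ _ ih1 ih2 => exact Net.sim_trans ih1 ih2

theorem wl_le (g : ℕ → Set E × Set ι) (l : ℕ) (x : ι) : wl g l x ≤ l :=
  Nat.sInf_le (Or.inr le_rfl)

theorem Net.wl_of_mem {N : Net Q E ι} {k l : ℕ} {x : ι} (h : x ∈ N.B k) (hk : k ≤ l) :
    wl N.lay l x = k := by
  apply le_antisymm
  · exact Nat.sInf_le (Or.inl h)
  · refine le_csInf ⟨l, Or.inr le_rfl⟩ ?_
    rintro j (hj | hj)
    · by_contra hlt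
      exact (Net.mem_B.1 h).2.1 j (not_le.1 hlt) hj
    · omega

theorem Net.wl_of_not_mem {N : Net Q E ι} {l : ℕ} {x : ι} (h : ∀ j < l, x ∉ N.B j) :
    wl N.lay l x = l := by
  apply le_antisymm (wl_le _ _ _)
  refine le_csInf ⟨l, Or.inr le_rfl⟩ ?_
  rintro j (hj | hj)
  · by_contra hlt
    exact h j (not_le.1 hlt) hj
  · exact hj

theorem Net.Feas.zero (N : Net Q E ι) (g : ℕ → Set E × Set ι) (l : ℕ) :
    N.Feas g l (fun _ => 0) where
  circ := fun q => by simp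
  supp := fun j _ e h => absurd rfl h
  row := fun x _ j _ _ p => by simp

theorem Net.Feas.add {N : Net Q E ι} {g : ℕ → Set E × Set ι} {l : ℕ} {m m' : E → ℕ}
    (h : N.Feas g l m) (h' : N.Feas g l m') : N.Feas g l (fun e => m e + m' e) where
  circ := fun q => by
    have h1 := h.circ q
    have h2 := h'.circ q
    have : ∀ (f : E → Q), (∑ e, if f e = q then m e + m' e else 0)
        = (∑ e, if f e = q then m e else 0) + ∑ e, if f e = q then m' e else 0 := by
      intro f; rw [← Finset.sum_add_distrib]
      exact Finset.sum_congr rfl fun e _ => by split_ifs <;> simp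
    rw [this, this, h1, h2]
  supp := fun j hj e he => by
    by_cases h0 : m e = 0
    · exact h'.supp j hj e (by omega)
    · exact h.supp j hj e h0
  row := fun x hx j hj hjw p => by
    have h1 := h.row x hx j hj hjw p
    have h2 := h'.row x hx j hj hjw p
    have := add_nonneg h1 h2
    rw [← Finset.sum_add_distrib] at this
    refine this.trans_eq (Finset.sum_congr rfl fun e _ => ?_)
    split_ifs
    · push_cast; ring
    · simp

/-! ### Dual certificates -/

/-- Linear programming duality for feasible circulations. If the cost `c` is nonpositive on all of
them, there are nonnegative weights `R`, constant on the classes of the appropriate layers and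
zero on the counters with `v x > l`, and a potential `z` that together dominate `c` on every edge
surviving the earlier layers. -/
theorem Net.exists_dual (N : Net Q E ι) (g : ℕ → Set E × Set ι) (l : ℕ) (c : E → ℤ)
    (hc : ∀ m, N.Feas g l m → ∑ e, (m e : ℤ) * c e ≤ 0) :
    ∃ (R : ι → Q → ℚ) (z : Q → ℚ), (∀ x q, 0 ≤ R x q) ∧
      (∀ x q, ¬ N.v x ≤ l → R x q = 0) ∧
      (∀ x, ∀ j < l, j + wl g l x = l → ∀ q q', N.sim (g j).1 q q' → R x q = R x q') ∧
      ∀ e, (∀ j < l, e ∈ (g j).1) →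
        (c e : ℚ) + ∑ x, R x (N.src e) * N.u e x + z (N.tgt e) - z (N.src e) ≤ 0 := by
  let P : ι → Q → Q → Prop := fun x p q =>
    N.v x ≤ l ∧ ∃ j < l, j + wl g l x = l ∧ N.sim (g j).1 p q
  let a : (E ⊕ (ι × Q)) ⊕ ((Q ⊕ Q) ⊕ E) → E → ℚ := fun i e => match i with
    | .inl (.inl e') => if e = e' then -1 else 0
    | .inl (.inr (x, p)) => if P x p (N.src e) then -(N.u e x : ℚ) else 0
    | .inr (.inl (.inl q)) => (if N.tgt e = q then 1 else 0) - (if N.src e = q then 1 else 0)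
    | .inr (.inl (.inr q)) => (if N.src e = q then 1 else 0) - (if N.tgt e = q then 1 else 0)
    | .inr (.inr e') => if e = e' ∧ ¬ (∀ j < l, e ∈ (g j).1) then 1 else 0
  obtain ⟨t, ht, htc⟩ := farkas_dot a (fun e => (c e : ℚ)) (by
    intro x hx
    have hx0 : ∀ e, 0 ≤ x e := fun e => by
      have := hx (.inl (.inl e))
      simp [a] at this
      exact this
    have hxs : ∀ e, ¬ (∀ j < l, e ∈ (g j).1) → x e = 0 := fun e he => by
      have := hx (.inr (.inr e))
      simp only [a] at this
      have h2 : ∑ e₁, x e₁ * (if e₁ = e ∧ ¬ (∀ j < l, e₁ ∈ (g j).1) then (1 : ℚ) else 0)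
          = x e := by
        rw [Finset.sum_eq_single e]
        · rw [if_pos ⟨rfl, he⟩, mul_one]
        · intro b _ hb; rw [if_neg (fun h => hb h.1), mul_zero]
        · simp
      rw [h2] at this
      exact le_antisymm this (hx0 e)
    -- clearing denominators turns the rational solution into a natural one
    let D : ℕ := ∏ e, (x e).den
    have hD : 0 < D := Finset.prod_pos fun e _ => (x e).den_pos
    have hnat : ∀ e, ∃ k : ℕ, (k : ℚ) = D * x e := by
      intro e
      obtain ⟨r, hr⟩ : (x e).den ∣ D := Finset.dvd_prod_of_mem _ (Finset.mem_univ e)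
      refine ⟨r * (x e).num.toNat, ?_⟩
      have h1 : ((x e).num.toNat : ℚ) = (x e).num := by
        have : ((x e).num.toNat : ℤ) = (x e).num :=
          Int.toNat_of_nonneg (Rat.num_nonneg.2 (hx0 e))
        exact_mod_cast this
      have h2 : (x e) * (x e).den = (x e).num := Rat.mul_den_eq_num _
      rw [hr]; push_cast; rw [h1, ← h2]; ring
    choose m hm using hnat
    have hDq : (0 : ℚ) < D := by exact_mod_cast hD
    have hfeas : N.Feas g l m := by
      refine ⟨fun q => ?_, fun j hj e he => ?_, fun y hy j hj hjw p => ?_⟩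
      · have h1 := hx (.inr (.inl (.inl q)))
        have h2 := hx (.inr (.inl (.inr q)))
        simp only [a, mul_sub, Finset.sum_sub_distrib] at h1 h2
        have h3 : ∑ e, x e * (if N.tgt e = q then (1 : ℚ) else 0)
            = ∑ e, x e * (if N.src e = q then (1 : ℚ) else 0) := by linarith
        have : ∀ f : E → Q, ((∑ e, if f e = q then m e else 0 : ℕ) : ℚ)
            = D * ∑ e, x e * (if f e = q then (1 : ℚ) else 0) := by
          intro f
          push_cast
          rw [Finset.mul_sum]
          refine Finset.sum_congr rfl fun e _ => ?_
          split_ifs <;> simp [hm]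
        have h4 : ((∑ e, if N.tgt e = q then m e else 0 : ℕ) : ℚ)
            = ((∑ e, if N.src e = q then m e else 0 : ℕ) : ℚ) := by
          rw [this, this, h3]
        exact_mod_cast h4
      · by_contra hcon
        have := hxs e (fun h => hcon (h j hj))
        have h2 := hm e
        rw [this, mul_zero] at h2
        exact he (by exact_mod_cast h2)
      · have h1 := hx (.inl (.inr (y, p)))
        simp only [a] at h1
        have hP : ∀ e, P y p (N.src e) ↔ N.sim (g j).1 p (N.src e) := by
          intro e
          constructor
          · rintro ⟨_, j', hj', hjw', hs⟩
            have : j' = j := by omega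
            exact this ▸ hs
          · exact fun hs => ⟨hy, j, hj, hjw, hs⟩
        have h2 : ((∑ e, if N.sim (g j).1 p (N.src e) then (m e : ℤ) * N.u e y else 0 : ℤ) : ℚ)
            = - (D * ∑ e, x e * (if P y p (N.src e) then -(N.u e y : ℚ) else 0)) := by
          push_cast
          rw [Finset.mul_sum, ← Finset.sum_neg_distrib]
          refine Finset.sum_congr rfl fun e _ => ?_
          simp only [hP]
          split_ifs
          · rw [hm]; ring
          · simp
        have h3 : (0 : ℚ) ≤
            ((∑ e, if N.sim (g j).1 p (N.src e) then (m e : ℤ) * N.u e y else 0 : ℤ) : ℚ) := by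
          rw [h2]
          have := mul_nonpos_of_nonneg_of_nonpos hDq.le h1
          linarith
        exact_mod_cast h3
    have h1 := hc m hfeas
    have h2 : ((∑ e, (m e : ℤ) * c e : ℤ) : ℚ) = D * ∑ e, x e * (c e : ℚ) := by
      push_cast
      rw [Finset.mul_sum]
      exact Finset.sum_congr rfl fun e _ => by rw [hm]; ring
    have h3 : (D : ℚ) * ∑ e, x e * (c e : ℚ) ≤ 0 := by
      rw [← h2]; exact_mod_cast h1
    by_contra hcon
    push Not at hcon
    exact absurd h3 (not_le.2 (mul_pos hDq hcon)))
  refine ⟨fun x q => ∑ p, if P x p q then t (.inl (.inr (x, p))) else 0,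
    fun q => t (.inr (.inl (.inr q))) - t (.inr (.inl (.inl q))), ?_, ?_, ?_, ?_⟩
  · intro x q
    exact Finset.sum_nonneg fun p _ => by split_ifs <;> simp [ht]
  · intro x q hx
    exact Finset.sum_eq_zero fun p _ => if_neg fun h => hx h.1
  · intro x j hj hjw q q' hs
    refine Finset.sum_congr rfl fun p _ => ?_
    have : P x p q ↔ P x p q' := by
      constructor
      · rintro ⟨h1, j', hj', hjw', hs'⟩
        have hjj : j' = j := by omega
        subst hjj
        exact ⟨h1, j', hj', hjw', Net.sim_trans hs' hs⟩
      · rintro ⟨h1, j', hj', hjw', hs'⟩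
        have hjj : j' = j := by omega
        subst hjj
        exact ⟨h1, j', hj', hjw', Net.sim_trans hs' (Net.sim_symm hs)⟩
    simp only [this]
  · intro e he
    have h1 := htc e
    simp only [Fintype.sum_sum_type, a] at h1
    have e1 : ∑ e', t (.inl (.inl e')) * (if e = e' then (-1 : ℚ) else 0)
        = - t (.inl (.inl e)) := by simp
    have e2 : ∑ xp : ι × Q, t (.inl (.inr xp)) *
          (if P xp.1 xp.2 (N.src e) then -(N.u e xp.1 : ℚ) else 0)
        = - ∑ x, (∑ p, if P x p (N.src e) then t (.inl (.inr (x, p))) else 0) * N.u e x := by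
      rw [Fintype.sum_prod_type, ← Finset.sum_neg_distrib]
      refine Finset.sum_congr rfl fun x _ => ?_
      rw [Finset.sum_mul, ← Finset.sum_neg_distrib]
      refine Finset.sum_congr rfl fun p _ => ?_
      split_ifs <;> simp
    have e3 : ∑ q, t (.inr (.inl (.inl q))) *
          ((if N.tgt e = q then (1 : ℚ) else 0) - (if N.src e = q then 1 else 0))
        = t (.inr (.inl (.inl (N.tgt e)))) - t (.inr (.inl (.inl (N.src e)))) := by
      simp [mul_sub, Finset.sum_sub_distrib]
    have e4 : ∑ q, t (.inr (.inl (.inr q))) *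
          ((if N.src e = q then (1 : ℚ) else 0) - (if N.tgt e = q then 1 else 0))
        = t (.inr (.inl (.inr (N.src e)))) - t (.inr (.inl (.inr (N.tgt e)))) := by
      simp [mul_sub, Finset.sum_sub_distrib]
    have e5 : ∑ e', t (.inr (.inr e')) *
          (if e = e' ∧ ¬ (∀ j < l, e ∈ (g j).1) then (1 : ℚ) else 0) = 0 :=
      Finset.sum_eq_zero fun e' _ => by rw [if_neg (fun h => h.2 he), mul_zero]
    rw [e1, e3, e4, e5] at h1
    erw [e2] at h1
    have := ht (.inl (.inl e))
    linarith

/-! ### Walks, ranks and upper bounds -/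

/-- The list of edges is a walk from the first state to the last one; counters are ignored. -/
def Net.Walk (N : Net Q E ι) : Q → List E → Q → Prop
  | p, [], q => p = q
  | p, e :: w, q => N.src e = p ∧ N.Walk (N.tgt e) w q

theorem Net.Walk.append {N : Net Q E ι} {w w' : List E} {p q r : Q} (h : N.Walk p w q)
    (h' : N.Walk q w' r) : N.Walk p (w ++ w') r := by
  induction w generalizing p with
  | nil => cases h; exact h'
  | cons e w ih => exact ⟨h.1, ih h.2⟩

theorem Net.Walk.of_append {N : Net Q E ι} {w w' : List E} {p r : Q}
    (h : N.Walk p (w ++ w') r) : ∃ q, N.Walk p w q ∧ N.Walk q w' r := by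
  induction w generalizing p with
  | nil => exact ⟨p, rfl, h⟩
  | cons e w ih =>
    obtain ⟨q, h1, h2⟩ := ih h.2
    exact ⟨q, ⟨h.1, h1⟩, h2⟩

/-- In a walk from `p` to `q`, entries into and departures from a state `r` balance up to the two
ends. -/
theorem Net.Walk.flow {N : Net Q E ι} {w : List E} {p q : Q} (h : N.Walk p w q) (r : Q) :
    (∑ e, if N.tgt e = r then w.count e else 0) + (if p = r then 1 else 0)
      = (∑ e, if N.src e = r then w.count e else 0) + (if q = r then 1 else 0) := by
  induction w generalizing p with
  | nil => cases h; simp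
  | cons a w ih =>
    have h1 := ih h.2
    have key : ∀ f : E → Q, (∑ e, if f e = r then (a :: w).count e else 0)
        = (∑ e, if f e = r then w.count e else 0) + (if f a = r then 1 else 0) := by
      intro f
      have : (if f a = r then 1 else 0) = ∑ e, if a = e then (if f e = r then 1 else 0) else 0 := by
        simp
      rw [this, ← Finset.sum_add_distrib]
      refine Finset.sum_congr rfl fun e _ => ?_
      rw [List.count_cons]
      by_cases hae : a = e <;> simp [hae]
      split_ifs <;> rfl
    rw [key, key]
    have h2 := h.1
    rw [h2]
    omega

/-- In a strongly connected net every edge lies on a closed walk, and no row condition is imposed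
at layer `0`; so every edge is in `G 0`. -/
theorem Net.G_zero {N : Net Q E ι} (hv : ∀ x, 1 ≤ N.v x) (hS : ∀ p q, ∃ w, N.Walk p w q)
    (e : E) : e ∈ N.G 0 := by
  obtain ⟨w, hw⟩ := hS (N.tgt e) (N.src e)
  have hcl : N.Walk (N.src e) (e :: w) (N.src e) := ⟨rfl, hw⟩
  refine Net.mem_G.2 ⟨fun e' => (e :: w).count e', ⟨fun q => ?_, fun j hj => ?_, fun x hx => ?_⟩, ?_⟩
  · have := hcl.flow q; omega
  · omega
  · have := hv x; omega
  · simp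

theorem Net.one_le_of_mem_B {N : Net Q E ι} (hv : ∀ x, 1 ≤ N.v x) {x : ι} {k : ℕ}
    (h : x ∈ N.B k) : 1 ≤ k := (hv x).trans (Net.mem_B.1 h).1

theorem Net.one_le_wl {N : Net Q E ι} (hv : ∀ x, 1 ≤ N.v x) {x : ι} {l : ℕ}
    (hl : N.v x ≤ l) : 1 ≤ wl N.lay l x := by
  refine le_csInf ⟨l, Or.inr le_rfl⟩ ?_
  rintro j (hj | hj)
  · exact Net.one_le_of_mem_B hv hj
  · exact (hv x).trans (hl.trans hj)

/-- The dual certificate of layer `l`, for the cost counting the edges outside `G l` together with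
the increase of the counters in `B l`. Moving the latter part of the cost into the weights makes
them at least `1` on `B l`. -/
theorem Net.exists_rank (N : Net Q E ι) (hv : ∀ x, 1 ≤ N.v x) (l : ℕ) :
    ∃ (R : ι → Q → ℚ) (z : Q → ℚ), (∀ x q, 0 ≤ R x q) ∧
      (∀ x q, ¬ N.v x ≤ l → R x q = 0) ∧
      (∀ x, ∀ j < l, j + wl N.lay l x = l → ∀ q q', N.sim (N.G j) q q' → R x q = R x q') ∧
      (∀ x ∈ N.B l, ∀ q, 1 ≤ R x q) ∧
      ∀ e, (∀ j < l, e ∈ N.G j) →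
        (if e ∉ N.G l then (1 : ℚ) else 0) + ∑ x, R x (N.src e) * N.u e x
          + z (N.tgt e) - z (N.src e) ≤ 0 := by
  obtain ⟨R, z, hR0, hRv, hRs, hd⟩ := N.exists_dual N.lay l
    (fun e => (if e ∉ N.G l then 1 else 0) + ∑ x, if x ∈ N.B l then N.u e x else 0) (by
      intro m hm
      simp only [mul_add, Finset.sum_add_distrib]
      have h1 : ∑ e, (m e : ℤ) * (if e ∉ N.G l then 1 else 0) = 0 := by
        refine Finset.sum_eq_zero fun e _ => ?_
        by_cases h0 : m e = 0
        · simp [h0]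
        · simp [Net.mem_G.2 ⟨m, hm, h0⟩]
      have h2 : ∑ e, (m e : ℤ) * (∑ x, if x ∈ N.B l then N.u e x else 0) ≤ 0 := by
        simp only [Finset.mul_sum]
        rw [Finset.sum_comm]
        refine Finset.sum_nonpos fun x _ => ?_
        by_cases hx : x ∈ N.B l
        · simp only [hx, if_true]
          exact (Net.mem_B.1 hx).2.2 m hm
        · simp [hx]
      rw [h1, zero_add]
      exact h2)
  refine ⟨fun x q => R x q + if x ∈ N.B l then 1 else 0, z, ?_, ?_, ?_, ?_, ?_⟩
  · intro x q
    have := hR0 x q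
    dsimp only
    split_ifs <;> linarith
  · intro x q hx
    have : x ∉ N.B l := fun h => hx (Net.mem_B.1 h).1
    simp [hRv x q hx, this]
  · intro x j hj hjw q q' hs
    dsimp only
    rw [hRs x j hj hjw q q' hs]
  · intro x hx q
    have := hR0 x q
    simp only [hx, if_true]
    linarith
  · intro e he
    have := hd e he
    simp only [add_mul, Finset.sum_add_distrib]
    have e1 : ∑ x, (if x ∈ N.B l then (1 : ℚ) else 0) * (N.u e x : ℚ)
        = ((∑ x, if x ∈ N.B l then N.u e x else 0 : ℤ) : ℚ) := by
      push_cast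
      refine Finset.sum_congr rfl fun x _ => ?_
      split_ifs <;> simp
    rw [e1]
    push_cast at this ⊢
    linarith

/-- A walk from `p` with initial counter values `y` along which all counters stay nonnegative. The
list of edges is in reverse order, the latest edge first. -/
inductive Net.Run (N : Net Q E ι) (p : Q) (y : ι → ℤ) : List E → Q → (ι → ℤ) → Prop
  | nil : Net.Run N p y [] p y
  | snoc {w : List E} {q : Q} {z : ι → ℤ} (e : E) (h : Net.Run N p y w q z) (hq : N.src e = q)
      (hz : ∀ x, 0 ≤ z x + N.u e x) :
      Net.Run N p y (e :: w) (N.tgt e) (fun x => z x + N.u e x)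

theorem Net.Run.nonneg {N : Net Q E ι} {p q : Q} {y z : ι → ℤ} {w : List E}
    (h : N.Run p y w q z) (hy : ∀ x, 0 ≤ y x) : ∀ x, 0 ≤ z x := by
  cases h with
  | nil => exact hy
  | snoc e h hq hz => exact hz

/-- The number of edges of `w` outside `G`, with multiplicity. -/
def cntOut (G : Set E) (w : List E) : ℕ := w.countP (fun e => decide (e ∉ G))

theorem cntOut_cons (G : Set E) (e : E) (w : List E) :
    cntOut G (e :: w) = cntOut G w + if e ∉ G then 1 else 0 := by
  unfold cntOut
  rw [List.countP_cons]
  simp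

/-- Admissible initial counter values at scale `n`. -/
def Net.Start (N : Net Q E ι) (n : ℕ) (y : ι → ℤ) : Prop :=
  ∀ x, 0 ≤ y x ∧ y x ≤ (n : ℤ) ^ N.v x

/-- Every run from an admissible start at scale `n` uses edges outside `G l` at most `C * n ^ l`
times. -/
def Net.CntBd (N : Net Q E ι) (l : ℕ) (C : ℚ) : Prop :=
  ∀ n : ℕ, 1 ≤ n → ∀ p y w q z, N.Start n y → N.Run p y w q z →
    (cntOut (N.G l) w : ℚ) ≤ C * (n : ℚ) ^ l

/-- Along every run from an admissible start at scale `n`, the counter `x` is at most `C * n ^ l`.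
-/
def Net.ValBd (N : Net Q E ι) (l : ℕ) (x : ι) (C : ℚ) : Prop :=
  ∀ n : ℕ, 1 ≤ n → ∀ p y w q z, N.Start n y → N.Run p y w q z →
    (z x : ℚ) ≤ C * (n : ℚ) ^ l

/-- The upper bounds of layer `l`, from those of the earlier layers. The rank `∑ x, R x q * y x +
z q` does not increase along an edge that lies in all earlier layers, and decreases by `1` if that
edge is outside `G l`. An edge outside `G i`, `i < l`, may change only the weights of counters of
size `O(n ^ (l - i))`, so it raises the rank by `O(n ^ (l - i))`; and it is used `O(n ^ i)` times.
Altogether the rank gains `O(n ^ l)`, which bounds both the number of edges outside `G l` and, as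
their weight is at least `1`, the counters in `B l`. -/
theorem Net.upper_step {N : Net Q E ι} (hv : ∀ x, 1 ≤ N.v x)
    (hS : ∀ p q, ∃ w, N.Walk p w q) (l : ℕ) (C : ℚ) (hC : 0 ≤ C)
    (hcnt : ∀ j < l, N.CntBd j C) (hval : ∀ j < l, ∀ x ∈ N.B j, N.ValBd j x C) :
    ∃ C' : ℚ, N.CntBd l C' ∧ ∀ x ∈ N.B l, N.ValBd l x C' := by
  obtain ⟨R, z, hR0, hRv, hRs, hRB, hd⟩ := N.exists_rank hv l
  -- uniform constants bounding weights, updates and potentials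
  let Rm : ℚ := ∑ x, ∑ q, R x q
  have hRm0 : 0 ≤ Rm := Finset.sum_nonneg fun x _ => Finset.sum_nonneg fun q _ => hR0 x q
  have hRm : ∀ x q, R x q ≤ Rm := fun x q =>
    (Finset.single_le_sum (f := fun q => R x q) (fun q _ => hR0 x q) (Finset.mem_univ q)).trans
      (Finset.single_le_sum (f := fun x => ∑ q, R x q)
        (fun x _ => Finset.sum_nonneg fun q _ => hR0 x q) (Finset.mem_univ x))
  let U : ℚ := ∑ e, ∑ x, |(N.u e x : ℚ)|
  have hU0 : 0 ≤ U := Finset.sum_nonneg fun e _ => Finset.sum_nonneg fun x _ => abs_nonneg _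
  have hU : ∀ e x, (N.u e x : ℚ) ≤ U := fun e x => (le_abs_self _).trans
    ((Finset.single_le_sum (f := fun x => |(N.u e x : ℚ)|) (fun x _ => abs_nonneg _)
      (Finset.mem_univ x)).trans
      (Finset.single_le_sum (f := fun e => ∑ x, |(N.u e x : ℚ)|)
        (fun e _ => Finset.sum_nonneg fun x _ => abs_nonneg _) (Finset.mem_univ e)))
  let Z : ℚ := ∑ q, |z q|
  have hZ : ∀ q, |z q| ≤ Z := fun q =>
    Finset.single_le_sum (f := fun q => |z q|) (fun q _ => abs_nonneg _) (Finset.mem_univ q)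
  have hZ0 : 0 ≤ Z := Finset.sum_nonneg fun q _ => abs_nonneg _
  let I : ℚ := Fintype.card ι
  have hI0 : 0 ≤ I := by positivity
  let M : ℚ := I * (Rm * (C + U)) + 2 * Z
  have hM0 : 0 ≤ M := by positivity
  let Φ : Q → (ι → ℤ) → ℚ := fun q y => ∑ x, R x q * y x + z q
  let ind : Set E → E → ℚ := fun G e => if e ∉ G then 1 else 0
  -- the effect of one step on the rank
  have hstep : ∀ n : ℕ, 1 ≤ n → ∀ (e : E) (y : ι → ℤ), (∀ x, 0 ≤ y x) →
      (∀ x, 0 ≤ y x + N.u e x) →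
      (∀ j < l, ∀ x ∈ N.B j, (y x : ℚ) ≤ C * (n : ℚ) ^ j) →
      Φ (N.tgt e) (fun x => y x + N.u e x) + ind (N.G l) e ≤ Φ (N.src e) y
        + ∑ i ∈ Finset.range l, (M + 1) * (n : ℚ) ^ (l - i) * ind (N.G i) e := by
    intro n hn e y hy hy' hb
    have hn1 : (1 : ℚ) ≤ n := by exact_mod_cast hn
    by_cases he : ∀ j < l, e ∈ N.G j
    · have h1 := hd e he
      have h2 : ∑ i ∈ Finset.range l, (M + 1) * (n : ℚ) ^ (l - i) * ind (N.G i) e = 0 := by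
        refine Finset.sum_eq_zero fun i hi => ?_
        have := he i (Finset.mem_range.1 hi)
        simp [ind, this]
      rw [h2, add_zero]
      have h3 : ∀ x, R x (N.tgt e) = R x (N.src e) := by
        intro x
        by_cases hx : N.v x ≤ l
        · have hw := Net.one_le_wl hv hx
          have hw2 := wl_le N.lay l x
          have hl : l - wl N.lay l x < l := by omega
          exact (hRs x (l - wl N.lay l x) hl (by omega) _ _ (Net.sim_edge (he _ hl))).symm
        · rw [hRv x _ hx, hRv x _ hx]
      have h4 : ∑ x, R x (N.tgt e) * ((y x + N.u e x : ℤ) : ℚ)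
          = ∑ x, R x (N.src e) * (y x : ℚ) + ∑ x, R x (N.src e) * (N.u e x : ℚ) := by
        rw [← Finset.sum_add_distrib]
        refine Finset.sum_congr rfl fun x _ => ?_
        rw [h3]; push_cast; ring
      simp only [Φ, h4, ind]
      linarith
    · push Not at he
      obtain ⟨j₀, hj₀, hej₀⟩ := he
      set T : ℚ := ∑ i ∈ Finset.range l, (n : ℚ) ^ (l - i) * ind (N.G i) e with hT
      have hterm : ∀ i < l, e ∉ N.G i → (n : ℚ) ^ (l - i) ≤ T := by
        intro i hi hei
        have := Finset.single_le_sum (f := fun i => (n : ℚ) ^ (l - i) * ind (N.G i) e)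
          (s := Finset.range l) (fun i _ => by
            simp only [ind]; split_ifs <;> positivity) (Finset.mem_range.2 hi)
        rw [hT]
        simpa [ind, hei] using this
      have hT1 : 1 ≤ T := (one_le_pow₀ hn1).trans (hterm j₀ hj₀ hej₀)
      have hsum : ∑ i ∈ Finset.range l, (M + 1) * (n : ℚ) ^ (l - i) * ind (N.G i) e
          = (M + 1) * T := by
        rw [hT, Finset.mul_sum]
        exact Finset.sum_congr rfl fun i _ => by ring
      rw [hsum]
      have hx : ∀ x, R x (N.tgt e) * ((y x + N.u e x : ℤ) : ℚ)
          ≤ R x (N.src e) * (y x : ℚ) + Rm * (C + U) * T := by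
        intro x
        have hyx : (0 : ℚ) ≤ y x := by exact_mod_cast hy x
        have hbase : 0 ≤ R x (N.src e) * (y x : ℚ) := mul_nonneg (hR0 _ _) hyx
        by_cases hx : N.v x ≤ l
        · have hw := Net.one_le_wl hv hx
          have hw2 := wl_le N.lay l x
          set i := l - wl N.lay l x with hi
          have hil : i < l := by omega
          by_cases hei : e ∈ N.G i
          · rw [← hRs x i hil (by omega) _ _ (Net.sim_edge hei)]
            push_cast
            have h1 : R x (N.src e) * (N.u e x : ℚ) ≤ Rm * (C + U) * T := by
              calc R x (N.src e) * (N.u e x : ℚ) ≤ R x (N.src e) * U :=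
                    mul_le_mul_of_nonneg_left (hU e x) (hR0 _ _)
                _ ≤ Rm * (C + U) := mul_le_mul (hRm _ _) (by linarith) hU0 hRm0
                _ ≤ Rm * (C + U) * T := le_mul_of_one_le_right (by positivity) hT1
            linarith
          · -- the counter is already bounded at an earlier stage, as `G 0` is everything
            have hi0 : i ≠ 0 := fun h => hei (h ▸ Net.G_zero hv hS e)
            have hex : ∃ j < l, x ∈ N.B j := by
              by_contra hcon
              push Not at hcon
              have := Net.wl_of_not_mem hcon
              omega
            obtain ⟨k, hk, hxk⟩ := hex
            have hwk := Net.wl_of_mem hxk hk.le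
            have hki : k = l - i := by omega
            have h1 := hb k hk x hxk
            have h2 : ((y x + N.u e x : ℤ) : ℚ) ≤ (C + U) * T := by
              push_cast
              have h3 := hterm i hil hei
              rw [← hki] at h3
              have h4 : C * (n : ℚ) ^ k ≤ C * T := mul_le_mul_of_nonneg_left h3 hC
              have h5 : U ≤ U * T := le_mul_of_one_le_right hU0 hT1
              have := hU e x
              linarith
            have h3 : (0 : ℚ) ≤ ((y x + N.u e x : ℤ) : ℚ) := by exact_mod_cast hy' x
            have h4 : R x (N.tgt e) * ((y x + N.u e x : ℤ) : ℚ) ≤ Rm * ((C + U) * T) :=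
              mul_le_mul (hRm _ _) h2 h3 hRm0
            linarith
        · rw [hRv x _ hx, hRv x _ hx]
          have : 0 ≤ Rm * (C + U) * T := by positivity
          linarith
      have hall : ∑ x, R x (N.tgt e) * ((y x + N.u e x : ℤ) : ℚ)
          ≤ ∑ x, R x (N.src e) * (y x : ℚ) + I * (Rm * (C + U)) * T := by
        calc _ ≤ ∑ x, (R x (N.src e) * (y x : ℚ) + Rm * (C + U) * T) :=
              Finset.sum_le_sum fun x _ => hx x
          _ = _ := by
            rw [Finset.sum_add_distrib]
            simp [I]
            ring
      have hz1 := abs_le.1 (hZ (N.src e))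
      have hz2 := abs_le.1 (hZ (N.tgt e))
      have hi1 : ind (N.G l) e ≤ T := by
        refine le_trans ?_ hT1
        simp only [ind]; split_ifs <;> norm_num
      have hz3 : 2 * Z ≤ 2 * Z * T := le_mul_of_one_le_right (by positivity) hT1
      simp only [Φ, M]
      linarith
  -- the rank along a run
  have hrun : ∀ n : ℕ, 1 ≤ n → ∀ p y w q y', N.Start n y → N.Run p y w q y' →
      Φ q y' + cntOut (N.G l) w ≤ Φ p y
        + ∑ i ∈ Finset.range l, (M + 1) * (n : ℚ) ^ (l - i) * cntOut (N.G i) w := by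
    intro n hn p y w q y' hst hr
    induction hr with
    | nil => simp [cntOut]
    | @snoc w q y' e h hq hz ih =>
      have h1 := hstep n hn e y' (h.nonneg fun x => (hst x).1) hz
        (fun j hj x hx => hval j hj x hx n hn _ _ _ _ _ hst h)
      have hc : ∀ G : Set E, (cntOut G (e :: w) : ℚ) = cntOut G w + ind G e := by
        intro G; rw [cntOut_cons]; simp only [ind]; push_cast; rfl
      simp only [hc, mul_add, Finset.sum_add_distrib]
      rw [hq] at h1
      linarith
  let C' : ℚ := I * Rm + 2 * Z + l * ((M + 1) * C)
  have hmain : ∀ n : ℕ, 1 ≤ n → ∀ p y w q y', N.Start n y → N.Run p y w q y' →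
      ∑ x, R x q * y' x + cntOut (N.G l) w ≤ C' * (n : ℚ) ^ l := by
    intro n hn p y w q y' hst hr
    have hn1 : (1 : ℚ) ≤ n := by exact_mod_cast hn
    have h1 := hrun n hn p y w q y' hst hr
    have h2 : ∑ i ∈ Finset.range l, (M + 1) * (n : ℚ) ^ (l - i) * cntOut (N.G i) w
        ≤ l * ((M + 1) * C) * (n : ℚ) ^ l := by
      calc _ ≤ ∑ i ∈ Finset.range l, ((M + 1) * C) * (n : ℚ) ^ l := by
            refine Finset.sum_le_sum fun i hi => ?_
            have hi' := Finset.mem_range.1 hi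
            have h3 := hcnt i hi' n hn p y w q y' hst hr
            have h4 : (n : ℚ) ^ l = (n : ℚ) ^ (l - i) * (n : ℚ) ^ i := by
              rw [← pow_add]; congr 1; omega
            calc (M + 1) * (n : ℚ) ^ (l - i) * cntOut (N.G i) w
                ≤ (M + 1) * (n : ℚ) ^ (l - i) * (C * (n : ℚ) ^ i) :=
                  mul_le_mul_of_nonneg_left h3 (by positivity)
              _ = (M + 1) * C * (n : ℚ) ^ l := by rw [h4]; ring
        _ = _ := by simp; ring
    have h3 : ∑ x, R x p * (y x : ℚ) ≤ I * Rm * (n : ℚ) ^ l := by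
      calc _ ≤ ∑ x : ι, Rm * (n : ℚ) ^ l := by
            refine Finset.sum_le_sum fun x _ => ?_
            by_cases hx : N.v x ≤ l
            · have h4 : (y x : ℚ) ≤ (n : ℚ) ^ N.v x := by exact_mod_cast (hst x).2
              have h5 : (0 : ℚ) ≤ y x := by exact_mod_cast (hst x).1
              exact mul_le_mul (hRm _ _) (h4.trans (pow_le_pow_right₀ hn1 hx)) h5 hRm0
            · rw [hRv x _ hx]
              have : 0 ≤ Rm * (n : ℚ) ^ l := by positivity
              linarith
        _ = _ := by simp [I]; ring
    have hz1 := abs_le.1 (hZ p)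
    have hz2 := abs_le.1 (hZ q)
    have h6 : 2 * Z ≤ 2 * Z * (n : ℚ) ^ l :=
      le_mul_of_one_le_right (by positivity) (one_le_pow₀ hn1)
    simp only [Φ] at h1
    simp only [C']
    linarith
  refine ⟨C', ?_, ?_⟩
  · intro n hn p y w q y' hst hr
    have h1 := hmain n hn p y w q y' hst hr
    have h2 : 0 ≤ ∑ x, R x q * (y' x : ℚ) := Finset.sum_nonneg fun x _ =>
      mul_nonneg (hR0 _ _) (by exact_mod_cast hr.nonneg (fun x => (hst x).1) x)
    linarith
  · intro x hx n hn p y w q y' hst hr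
    have h1 := hmain n hn p y w q y' hst hr
    have h0 : ∀ x, (0 : ℚ) ≤ y' x := fun x => by
      exact_mod_cast hr.nonneg (fun x => (hst x).1) x
    have h2 : R x q * (y' x : ℚ) ≤ ∑ x, R x q * (y' x : ℚ) :=
      Finset.single_le_sum (f := fun x => R x q * (y' x : ℚ))
        (fun x _ => mul_nonneg (hR0 _ _) (h0 x)) (Finset.mem_univ x)
    have h3 : (y' x : ℚ) ≤ R x q * y' x := le_mul_of_one_le_left (h0 x) (hRB x hx q)
    have h4 : (0 : ℚ) ≤ cntOut (N.G l) w := by positivity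
    linarith

theorem Net.upper {N : Net Q E ι} (hv : ∀ x, 1 ≤ N.v x)
    (hS : ∀ p q, ∃ w, N.Walk p w q) (l : ℕ) :
    ∃ C : ℚ, 0 ≤ C ∧ ∀ j < l, N.CntBd j C ∧ ∀ x ∈ N.B j, N.ValBd j x C := by
  induction l with
  | zero => exact ⟨0, le_rfl, fun j hj => absurd hj (by omega)⟩
  | succ l ih =>
    obtain ⟨C, hC, h⟩ := ih
    obtain ⟨C', h1, h2⟩ := Net.upper_step hv hS l C hC (fun j hj => (h j hj).1)
      (fun j hj => (h j hj).2)
    have hmono : ∀ (a b c : ℚ) (n k : ℕ), a ≤ b → c ≤ a * (n : ℚ) ^ k → c ≤ b * (n : ℚ) ^ k :=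
      fun a b c n k hab hc => hc.trans (mul_le_mul_of_nonneg_right hab (by positivity))
    refine ⟨max C C', le_max_of_le_left hC, fun j hj => ?_⟩
    rcases Nat.lt_succ_iff_lt_or_eq.1 hj with hj | rfl
    · exact ⟨fun n hn p y w q z hst hr =>
          hmono _ _ _ _ _ (le_max_left _ _) ((h j hj).1 n hn p y w q z hst hr),
        fun x hx n hn p y w q z hst hr =>
          hmono _ _ _ _ _ (le_max_left _ _) ((h j hj).2 x hx n hn p y w q z hst hr)⟩
    · exact ⟨fun n hn p y w q z hst hr =>
          hmono _ _ _ _ _ (le_max_right _ _) (h1 n hn p y w q z hst hr),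
        fun x hx n hn p y w q z hst hr =>
          hmono _ _ _ _ _ (le_max_right _ _) (h2 x hx n hn p y w q z hst hr)⟩

/-! ### Eulerian circuits -/

theorem Net.sim_closed {N : Net Q E ι} {G : Set E} {S : Set Q}
    (hS : ∀ e ∈ G, N.src e ∈ S ↔ N.tgt e ∈ S) {p q : Q} (h : N.sim G p q) : p ∈ S ↔ q ∈ S := by
  induction h with
  | rel p q h => obtain ⟨e, he, rfl, rfl⟩ := h; exact hS e he
  | refl => exact Iff.rfl
  | symm _ _ _ ih => exact ih.symm
  | trans _ _ _ _ _ ih1 ih2 => exact ih1.trans ih2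

theorem length_eq_sum_count (w : List E) : w.length = ∑ e, w.count e := by
  induction w with
  | nil => simp
  | cons a w ih =>
    simp only [List.length_cons, List.count_cons, Finset.sum_add_distrib, ih]
    simp

/-- A nonempty trail inside a circulation can be extended until it closes up; `k` bounds the
number of edges still unused. -/
theorem Net.exists_closed_trail {N : Net Q E ι} {m : E → ℕ} (hc : N.Circ m) {s : Q} :
    ∀ (k : ℕ) (w : List E) (q : Q), N.Walk s w q → w ≠ [] → (∀ e, w.count e ≤ m e) →
      (∑ e, m e) - w.length ≤ k → ∃ w', w' ≠ [] ∧ N.Walk s w' s ∧ ∀ e, w'.count e ≤ m e := by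
  intro k
  induction k with
  | zero =>
    intro w q hw hne hcnt hk
    by_cases hqs : q = s
    · subst hqs; exact ⟨w, hne, hw, hcnt⟩
    exfalso
    have hfl := hw.flow q
    rw [if_neg (Ne.symm hqs), if_pos rfl] at hfl
    have hcq := hc q
    have hle : ∑ e, m e ≤ ∑ e, w.count e := by rw [← length_eq_sum_count]; omega
    have heq : ∀ e, w.count e = m e := by
      intro e
      have := (Finset.sum_eq_sum_iff_of_le (s := Finset.univ) (fun e _ => hcnt e)).1
        (le_antisymm (Finset.sum_le_sum fun e _ => hcnt e) hle)
      exact this e (Finset.mem_univ e)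
    simp only [heq] at hfl
    omega
  | succ k ih =>
    intro w q hw hne hcnt hk
    by_cases hqs : q = s
    · subst hqs; exact ⟨w, hne, hw, hcnt⟩
    have hfl := hw.flow q
    rw [if_neg (Ne.symm hqs), if_pos rfl] at hfl
    have hcq := hc q
    have h1 : (∑ e, if N.tgt e = q then w.count e else 0)
        ≤ ∑ e, if N.tgt e = q then m e else 0 :=
      Finset.sum_le_sum fun e _ => by split_ifs <;> simp [hcnt e]
    obtain ⟨e, -, he⟩ := Finset.exists_lt_of_sum_lt (s := Finset.univ)
      (f := fun e => if N.src e = q then w.count e else 0)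
      (g := fun e => if N.src e = q then m e else 0) (by omega)
    by_cases hes : N.src e = q
    · simp only [hes, if_true] at he
      refine ih (w ++ [e]) (N.tgt e) (hw.append ⟨hes, rfl⟩) (by simp) (fun e' => ?_) ?_
      · rw [List.count_append, List.count_singleton]
        by_cases hee : e = e'
        · subst hee; simp; omega
        · simp [hee]; exact hcnt e'
      · simp only [List.length_append, List.length_singleton]; omega
    · simp [hes] at he

/-- A closed trail inside a connected circulation can be enlarged to an Eulerian circuit by
splicing in closed trails of the remaining circulation; `k` bounds the number of edges still
unused. -/
theorem Net.euler_aux {N : Net Q E ι} {m : E → ℕ} (hc : N.Circ m) {p : Q}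
    (hconn : ∀ e, m e ≠ 0 → N.sim {e | m e ≠ 0} p (N.src e)) :
    ∀ (k : ℕ) (w : List E), N.Walk p w p → (∀ e, w.count e ≤ m e) →
      (∑ e, m e) - w.length ≤ k → ∃ w', N.Walk p w' p ∧ ∀ e, w'.count e = m e := by
  intro k
  induction k with
  | zero =>
    intro w hw hcnt hk
    have hle : ∑ e, m e ≤ ∑ e, w.count e := by rw [← length_eq_sum_count]; omega
    refine ⟨w, hw, fun e => ?_⟩
    have := (Finset.sum_eq_sum_iff_of_le (s := Finset.univ) (fun e _ => hcnt e)).1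
      (le_antisymm (Finset.sum_le_sum fun e _ => hcnt e) hle)
    exact this e (Finset.mem_univ e)
  | succ k ih =>
    intro w hw hcnt hk
    by_cases hall : ∀ e, w.count e = m e
    · exact ⟨w, hw, hall⟩
    push Not at hall
    obtain ⟨e₀, he₀⟩ := hall
    have he₀lt : w.count e₀ < m e₀ := lt_of_le_of_ne (hcnt e₀) he₀
    let m' : E → ℕ := fun e => m e - w.count e
    have hm' : ∀ e, m e = m' e + w.count e := fun e => by
      have := hcnt e; simp only [m']; omega
    have hc' : N.Circ m' := by
      intro q
      have h1 := hc q
      have h2 := hw.flow q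
      have key : ∀ f : E → Q, (∑ e, if f e = q then m e else 0)
          = (∑ e, if f e = q then m' e else 0) + ∑ e, if f e = q then w.count e else 0 := by
        intro f
        rw [← Finset.sum_add_distrib]
        refine Finset.sum_congr rfl fun e _ => ?_
        split_ifs
        · exact hm' e
        · rfl
      rw [key, key] at h1
      omega
    let S : Set Q := {q | ∃ w₁ w₂, w = w₁ ++ w₂ ∧ N.Walk p w₁ q ∧ N.Walk q w₂ p}
    have hpS : p ∈ S := ⟨[], w, rfl, rfl, hw⟩
    have hmemS : ∀ e ∈ w, N.src e ∈ S ∧ N.tgt e ∈ S := by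
      intro e he
      obtain ⟨a, b, rfl⟩ := List.append_of_mem he
      obtain ⟨q, h1, h2⟩ := hw.of_append
      refine ⟨⟨a, e :: b, rfl, ?_, ⟨rfl, h2.2⟩⟩, ⟨a ++ [e], b, by simp, ?_, h2.2⟩⟩
      · rw [h2.1]; exact h1
      · exact h1.append ⟨h2.1, rfl⟩
    obtain ⟨e₁, he₁, he₁S⟩ : ∃ e, m' e ≠ 0 ∧ N.src e ∈ S := by
      by_contra hcon
      push Not at hcon
      have hcl : ∀ e ∈ {e | m e ≠ 0}, N.src e ∈ S ↔ N.tgt e ∈ S := by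
        intro e he
        by_cases hew : e ∈ w
        · simp [hmemS e hew]
        · have hm0 : m' e ≠ 0 := by
            have := hm' e
            rw [List.count_eq_zero_of_not_mem hew] at this
            have he' : m e ≠ 0 := he
            omega
          refine iff_of_false (hcon e hm0) fun ht => hm0 ?_
          have h1 := hc' (N.tgt e)
          have h2 : (∑ e', if N.src e' = N.tgt e then m' e' else 0) = 0 := by
            refine Finset.sum_eq_zero fun e' _ => ?_
            split_ifs with h
            · by_contra h0
              exact hcon e' h0 (h ▸ ht)
            · rfl
          rw [h2, Finset.sum_eq_zero_iff] at h1
          simpa using h1 e (Finset.mem_univ e)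
      have h1 : m' e₀ ≠ 0 := by simp only [m']; omega
      exact hcon e₀ h1 ((Net.sim_closed hcl (hconn e₀ (by omega))).1 hpS)
    obtain ⟨t, htne, ht, htc⟩ := Net.exists_closed_trail hc' (s := N.src e₁) _ [e₁] (N.tgt e₁)
      ⟨rfl, rfl⟩ (by simp) (fun e => by
        rw [List.count_singleton]
        by_cases h : e₁ = e
        · subst h; simp; omega
        · simp [h]) le_rfl
    obtain ⟨w₁, w₂, rfl, hw₁, hw₂⟩ := he₁S
    refine ih (w₁ ++ (t ++ w₂)) (hw₁.append (ht.append hw₂)) (fun e => ?_) ?_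
    · have h1 := htc e
      have h2 := hm' e
      simp only [List.count_append] at h2 ⊢
      omega
    · have : 0 < t.length := List.length_pos_iff.2 htne
      simp only [List.length_append] at hk ⊢
      omega

theorem Net.euler {N : Net Q E ι} {m : E → ℕ} (hc : N.Circ m) {p : Q}
    (hconn : ∀ e, m e ≠ 0 → N.sim {e | m e ≠ 0} p (N.src e)) :
    ∃ w, N.Walk p w p ∧ ∀ e, w.count e = m e :=
  Net.euler_aux hc hconn _ [] rfl (by simp) le_rfl

/-- A circulation with support `G` has an Eulerian circuit on every `G`-class. -/
theorem Net.euler_class {N : Net Q E ι} {m : E → ℕ} {G : Set E} (hc : N.Circ m)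
    (hG : ∀ e, m e ≠ 0 ↔ e ∈ G) (p : Q) :
    ∃ w, N.Walk p w p ∧ ∀ e, w.count e = if N.sim G p (N.src e) then m e else 0 := by
  let m' : E → ℕ := fun e => if N.sim G p (N.src e) then m e else 0
  have hst : ∀ e ∈ G, N.sim G p (N.src e) ↔ N.sim G p (N.tgt e) := fun e he =>
    ⟨fun h => Net.sim_trans h (Net.sim_edge he),
     fun h => Net.sim_trans h (Net.sim_symm (Net.sim_edge he))⟩
  apply Net.euler (m := m')
  · intro q
    by_cases hq : N.sim G p q
    · have h1 := hc q
      have e1 : (∑ e, if N.tgt e = q then m' e else 0) = ∑ e, if N.tgt e = q then m e else 0 := by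
        refine Finset.sum_congr rfl fun e _ => ?_
        split_ifs with h
        · by_cases hm : m e = 0
          · simp [m', hm]
          · have := (hst e ((hG e).1 hm)).2 (h ▸ hq)
            simp [m', this]
        · rfl
      have e2 : (∑ e, if N.src e = q then m' e else 0) = ∑ e, if N.src e = q then m e else 0 := by
        refine Finset.sum_congr rfl fun e _ => ?_
        split_ifs with h
        · have : N.sim G p (N.src e) := h ▸ hq
          simp [m', this]
        · rfl
      rw [e1, e2, h1]
    · rw [Finset.sum_eq_zero, Finset.sum_eq_zero]
      · intro e _
        split_ifs with h
        · have : ¬ N.sim G p (N.src e) := h ▸ hq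
          simp [m', this]
        · rfl
      · intro e _
        split_ifs with h
        · by_cases hm : m e = 0
          · simp [m', hm]
          · have : ¬ N.sim G p (N.src e) := fun h' => hq (h ▸ (hst e ((hG e).1 hm)).1 h')
            simp [m', this]
        · rfl
  · intro e he
    have hes : N.sim G p (N.src e) := by
      by_contra h
      exact he (by simp [m', h])
    let S : Set Q := {q | N.sim {e | m' e ≠ 0} p q ∧ N.sim G p q}
    have hcl : ∀ e ∈ G, N.src e ∈ S ↔ N.tgt e ∈ S := by
      intro e he
      have hm : N.sim G p (N.src e) → e ∈ {e | m' e ≠ 0} := fun h => by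
        simp [m', h, (hG e).2 he]
      constructor
      · rintro ⟨h1, h2⟩
        exact ⟨Net.sim_trans h1 (Net.sim_edge (hm h2)), (hst e he).1 h2⟩
      · rintro ⟨h1, h2⟩
        have h3 := (hst e he).2 h2
        exact ⟨Net.sim_trans h1 (Net.sim_symm (Net.sim_edge (hm h3))), h3⟩
    exact ((Net.sim_closed hcl hes).1 ⟨Net.sim_refl _ _ _, Net.sim_refl _ _ _⟩).1

/-! ### Effects, safety and nested walks -/

/-- The total effect of `w` on the counter `x`. -/
def Net.eff (N : Net Q E ι) (w : List E) (x : ι) : ℤ := (w.map fun e => N.u e x).sum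

theorem Net.eff_append (N : Net Q E ι) (w w' : List E) (x : ι) :
    N.eff (w ++ w') x = N.eff w x + N.eff w' x := by simp [Net.eff]

theorem Net.eff_cons (N : Net Q E ι) (e : E) (w : List E) (x : ι) :
    N.eff (e :: w) x = N.u e x + N.eff w x := by simp [Net.eff]

theorem Net.eff_eq_sum (N : Net Q E ι) (w : List E) (x : ι) :
    N.eff w x = ∑ e, (w.count e : ℤ) * N.u e x := by
  induction w with
  | nil => simp [Net.eff]
  | cons a w ih =>
    rw [Net.eff_cons, ih]
    simp only [List.count_cons]
    push_cast
    simp only [add_mul, Finset.sum_add_distrib]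
    have : ∑ e, (if (a == e) = true then (1 : ℤ) else 0) * N.u e x = N.u a x := by simp
    rw [this]
    ring

/-- The counter `x`, started at the given value, stays nonnegative along the list of edges. -/
def Net.safe (N : Net Q E ι) (x : ι) : ℤ → List E → Prop
  | b, [] => 0 ≤ b
  | b, e :: w => 0 ≤ b ∧ N.safe x (b + N.u e x) w

theorem Net.safe.mono {N : Net Q E ι} {x : ι} {w : List E} {b b' : ℤ} (h : N.safe x b w)
    (hb : b ≤ b') : N.safe x b' w := by
  induction w generalizing b b' with
  | nil => exact le_trans h hb
  | cons e w ih => exact ⟨h.1.trans hb, ih h.2 (by linarith)⟩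

theorem Net.safe.nonneg {N : Net Q E ι} {x : ι} {w : List E} {b : ℤ} (h : N.safe x b w) :
    0 ≤ b := by
  cases w with
  | nil => exact h
  | cons e w => exact h.1

theorem Net.safe.final {N : Net Q E ι} {x : ι} {w : List E} {b : ℤ} (h : N.safe x b w) :
    0 ≤ b + N.eff w x := by
  induction w generalizing b with
  | nil => simpa [Net.eff, Net.safe] using h
  | cons e w ih => rw [Net.eff_cons]; have := ih h.2; linarith

theorem Net.safe.append {N : Net Q E ι} {x : ι} {w w' : List E} {b : ℤ} (h : N.safe x b w)
    (h' : N.safe x (b + N.eff w x) w') : N.safe x b (w ++ w') := by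
  induction w generalizing b with
  | nil => simpa [Net.eff] using h'
  | cons e w ih =>
    refine ⟨h.1, ih h.2 ?_⟩
    rw [Net.eff_cons] at h'
    rwa [add_assoc]

/-- Inserts the closed walk `W q` into a walk whenever it visits a `G`-class, at a state `q`, for
the first time. The list `seen` holds representatives of the classes visited before. -/
def Net.weave (N : Net Q E ι) (G : Set E) (W : Q → List E) : List Q → List E → List E
  | _, [] => []
  | seen, e :: w =>
    if ∃ s ∈ seen, N.sim G s (N.src e) then e :: N.weave G W seen w
    else W (N.src e) ++ e :: N.weave G W (N.src e :: seen) w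

theorem Net.weave_walk {N : Net Q E ι} {G : Set E} {W : Q → List E}
    (hW : ∀ q, N.Walk q (W q) q) {w : List E} {p q : Q} (seen : List Q) (h : N.Walk p w q) :
    N.Walk p (N.weave G W seen w) q := by
  induction w generalizing p seen with
  | nil => exact h
  | cons e w ih =>
    unfold Net.weave
    split_ifs
    · exact ⟨h.1, ih _ h.2⟩
    · refine Net.Walk.append (q := p) ?_ ⟨h.1, ih _ h.2⟩
      rw [h.1]; exact hW p

/-- If `W q` uses the edge `e` exactly `c e` times when `e` lies in the class of `q`, and not at
all otherwise, then weaving adds `c e` uses of every edge `e` in a class newly visited, because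
each class receives exactly one inserted walk. -/
theorem Net.weave_count {N : Net Q E ι} {G : Set E} {W : Q → List E} {c : E → ℕ}
    (hW : ∀ q e, (W q).count e = if N.sim G q (N.src e) then c e else 0) (w : List E)
    (seen : List Q) (e : E) :
    (N.weave G W seen w).count e = w.count e +
      if (∃ a ∈ w, N.sim G (N.src a) (N.src e)) ∧ ¬ (∃ s ∈ seen, N.sim G s (N.src e))
      then c e else 0 := by
  induction w generalizing seen with
  | nil => simp [Net.weave]
  | cons a w ih =>
    unfold Net.weave
    by_cases hs : ∃ s ∈ seen, N.sim G s (N.src a)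
    · rw [if_pos hs, List.count_cons, List.count_cons, ih]
      have : ((∃ b ∈ a :: w, N.sim G (N.src b) (N.src e)) ∧
            ¬ (∃ s ∈ seen, N.sim G s (N.src e))) ↔
          ((∃ b ∈ w, N.sim G (N.src b) (N.src e)) ∧ ¬ (∃ s ∈ seen, N.sim G s (N.src e))) := by
        refine and_congr_left fun hns => ?_
        constructor
        · rintro ⟨b, hb, hbe⟩
          rcases List.mem_cons.1 hb with rfl | hb
          · obtain ⟨s, hs1, hs2⟩ := hs
            exact absurd ⟨s, hs1, Net.sim_trans hs2 hbe⟩ hns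
          · exact ⟨b, hb, hbe⟩
        · rintro ⟨b, hb, hbe⟩
          exact ⟨b, List.mem_cons_of_mem _ hb, hbe⟩
      simp only [this]
      omega
    · rw [if_neg hs, List.count_append, List.count_cons, List.count_cons, ih, hW]
      by_cases hae : N.sim G (N.src a) (N.src e)
      · have h1 : ¬ (∃ s ∈ seen, N.sim G s (N.src e)) := by
          rintro ⟨s, hs1, hs2⟩
          exact hs ⟨s, hs1, Net.sim_trans hs2 (Net.sim_symm hae)⟩
        have h2 : ∃ s ∈ N.src a :: seen, N.sim G s (N.src e) := ⟨_, List.mem_cons_self, hae⟩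
        have h3 : ∃ b ∈ a :: w, N.sim G (N.src b) (N.src e) := ⟨_, List.mem_cons_self, hae⟩
        have h4 : ¬ ((∃ b ∈ w, N.sim G (N.src b) (N.src e)) ∧
            ¬ ∃ s ∈ N.src a :: seen, N.sim G s (N.src e)) := fun h => h.2 h2
        have h5 : (∃ b ∈ a :: w, N.sim G (N.src b) (N.src e)) ∧
            ¬ ∃ s ∈ seen, N.sim G s (N.src e) := ⟨h3, h1⟩
        rw [if_pos hae, if_neg h4, if_pos h5]
        omega
      · have : ((∃ b ∈ a :: w, N.sim G (N.src b) (N.src e)) ∧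
              ¬ (∃ s ∈ seen, N.sim G s (N.src e))) ↔
            ((∃ b ∈ w, N.sim G (N.src b) (N.src e)) ∧
              ¬ (∃ s ∈ N.src a :: seen, N.sim G s (N.src e))) := by
          simp [hae]
        simp only [this, if_neg hae]
        omega

/-- A crude bound: every edge costs at most `U`, and an inserted walk at most `A`. -/
theorem Net.weave_safe {N : Net Q E ι} {G : Set E} {W : Q → List E} {x : ι} {A U : ℤ}
    (hU : ∀ e, -U ≤ N.u e x) (hU0 : 0 ≤ U)
    (hW : ∀ q, N.safe x A (W q)) (w : List E) (seen : List Q) (b : ℤ)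
    (hb : w.length * (A + U) ≤ b) : N.safe x b (N.weave G W seen w) := by
  induction w generalizing seen b with
  | nil => simpa [Net.weave, Net.safe] using hb
  | cons e w ih =>
    have hA : 0 ≤ A := (hW (N.src e)).nonneg
    have h0 : (0 : ℤ) ≤ w.length * (A + U) := by positivity
    have hue := hU e
    simp only [List.length_cons] at hb
    push_cast at hb
    unfold Net.weave
    split_ifs
    · exact ⟨by linarith, ih _ _ (by linarith)⟩
    · have hf := (hW (N.src e)).final
      refine Net.safe.append ((hW _).mono (by linarith)) ⟨by linarith, ih _ _ (by linarith)⟩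

/-- The `n`-fold repetition of a list of edges. -/
def rep (n : ℕ) (w : List E) : List E := (List.replicate n w).flatten

theorem rep_succ (n : ℕ) (w : List E) : rep (n + 1) w = rep n w ++ w := by
  simp [rep, List.replicate_succ']

theorem rep_count (n : ℕ) (w : List E) (e : E) : (rep n w).count e = n * w.count e := by
  induction n with
  | zero => simp [rep]
  | succ n ih => rw [rep_succ, List.count_append, ih]; ring

theorem Net.rep_walk {N : Net Q E ι} {p : Q} {w : List E} (h : N.Walk p w p) (n : ℕ) :
    N.Walk p (rep n w) p := by
  induction n with
  | zero => rfl
  | succ n ih => rw [rep_succ]; exact ih.append h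

theorem Net.rep_eff (N : Net Q E ι) (n : ℕ) (w : List E) (x : ι) :
    N.eff (rep n w) x = n * N.eff w x := by
  induction n with
  | zero => simp [rep, Net.eff]
  | succ n ih => rw [rep_succ, Net.eff_append, ih]; push_cast; ring

/-- `A` pays for the drift of the complete rounds, and `B` for the dip inside one round. -/
theorem Net.rep_safe {N : Net Q E ι} {x : ι} {w : List E} {A B : ℤ} (n : ℕ)
    (hA : ∀ r ≤ n, -A ≤ (r : ℤ) * N.eff w x) (hB : N.safe x B w) :
    N.safe x (A + B) (rep n w) := by
  induction n with
  | zero =>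
    have h1 := hA 0 le_rfl
    have h2 := hB.nonneg
    simp only [rep, List.replicate_zero, List.flatten_nil, Net.safe]
    simp at h1
    linarith
  | succ n ih =>
    rw [rep_succ]
    refine (ih fun r hr => hA r (by omega)).append (hB.mono ?_)
    rw [Net.rep_eff]
    have := hA n (by omega)
    linarith

theorem Net.Feas.sum {N : Net Q E ι} {g : ℕ → Set E × Set ι} {l : ℕ} {I : Type*}
    (s : Finset I) (m : I → E → ℕ) (h : ∀ i ∈ s, N.Feas g l (m i)) :
    N.Feas g l (fun e => ∑ i ∈ s, m i e) := by
  induction s using Finset.induction_on with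
  | empty => simpa using Net.Feas.zero N g l
  | insert a s ha ih =>
    simp only [Finset.sum_insert ha]
    exact (h a (Finset.mem_insert_self _ _)).add
      (ih fun i hi => h i (Finset.mem_insert_of_mem hi))

theorem Net.sim_of_walk {N : Net Q E ι} {G : Set E} (hG : ∀ e, e ∈ G) {p q : Q} {w : List E}
    (h : N.Walk p w q) : N.sim G p q := by
  induction w generalizing p with
  | nil => cases h; exact Net.sim_refl _ _ _
  | cons e w ih =>
    have := Net.sim_edge (N := N) (hG e)
    rw [h.1] at this
    exact Net.sim_trans this (ih h.2)

/-- A maximal feasible circulation of layer `l`, obtained as the sum of one witness for each edge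
of `G l` and each counter not bounded through layer `l`. -/
theorem Net.exists_mu {N : Net Q E ι} (hv : ∀ x, 1 ≤ N.v x)
    (hS : ∀ p q, ∃ w, N.Walk p w q) (l : ℕ) :
    ∃ m : E → ℕ, N.Feas N.lay l m ∧ (∀ e, m e ≠ 0 ↔ e ∈ N.G l) ∧
      ∀ x, N.v x ≤ l → (∀ j ≤ l, x ∉ N.B j) → 0 < ∑ e, (m e : ℤ) * N.u e x := by
  have htot : ∀ m, N.Feas N.lay l m → ∀ x, N.v x ≤ l → (∀ j ≤ l, x ∉ N.B j) →
      0 ≤ ∑ e, (m e : ℤ) * N.u e x := by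
    intro m hm x hx hB
    have hl := (hv x).trans hx
    by_cases hE : Nonempty E
    · obtain ⟨e₀⟩ := hE
      have h1 := hm.row x hx 0 hl (by
        rw [Net.wl_of_not_mem fun j hj => hB j hj.le]; omega) (N.src e₀)
      refine h1.trans_eq (Finset.sum_congr rfl fun e _ => ?_)
      rw [if_pos]
      obtain ⟨w, hw⟩ := hS (N.src e₀) (N.src e)
      exact Net.sim_of_walk (Net.G_zero hv hS) hw
    · exact Finset.sum_nonneg fun e _ => absurd ⟨e⟩ hE
  have hex1 : ∀ e, ∃ m, N.Feas N.lay l m ∧ (e ∈ N.G l → m e ≠ 0) := by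
    intro e
    by_cases he : e ∈ N.G l
    · obtain ⟨m, hm, h⟩ := Net.mem_G.1 he
      exact ⟨m, hm, fun _ => h⟩
    · exact ⟨_, Net.Feas.zero N _ l, fun h => absurd h he⟩
  have hex2 : ∀ x, ∃ m, N.Feas N.lay l m ∧ (N.v x ≤ l → (∀ j ≤ l, x ∉ N.B j) →
      0 < ∑ e, (m e : ℤ) * N.u e x) := by
    intro x
    by_cases hx : N.v x ≤ l ∧ ∀ j ≤ l, x ∉ N.B j
    · have h1 := hx.2 l le_rfl
      rw [Net.mem_B] at h1
      push Not at h1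
      obtain ⟨m, hm, h⟩ := h1 hx.1 fun j hj => hx.2 j hj.le
      exact ⟨m, hm, fun _ _ => h⟩
    · exact ⟨_, Net.Feas.zero N _ l, fun h h' => absurd ⟨h, h'⟩ hx⟩
  choose m₁ hm₁ hm₁' using hex1
  choose m₂ hm₂ hm₂' using hex2
  have hf1 := Net.Feas.sum Finset.univ m₁ fun e _ => hm₁ e
  have hf2 := Net.Feas.sum Finset.univ m₂ fun x _ => hm₂ x
  have hf := hf1.add hf2
  refine ⟨_, hf, fun e => ⟨fun h => Net.mem_G.2 ⟨_, hf, h⟩, fun h => ?_⟩, fun x hx hB => ?_⟩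
  · have h1 := hm₁' e h
    have h2 : m₁ e e ≤ ∑ i, m₁ i e :=
      Finset.single_le_sum (f := fun i => m₁ i e) (fun _ _ => Nat.zero_le _) (Finset.mem_univ e)
    omega
  · have h1 := htot _ hf1 x hx hB
    have h2 : 0 < ∑ e, ((∑ y, m₂ y e : ℕ) : ℤ) * N.u e x := by
      push_cast
      simp only [Finset.sum_mul]
      rw [Finset.sum_comm]
      exact Finset.sum_pos' (fun y _ => htot _ (hm₂ y) x hx hB)
        ⟨x, Finset.mem_univ x, hm₂' x hx hB⟩
    push_cast at h1 h2 ⊢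
    simp only [add_mul, Finset.sum_add_distrib]
    linarith

/-- A sum that is nonnegative on all classes is nonnegative on all classes of a coarser partition.
-/
theorem Net.class_sum_nonneg {N : Net Q E ι} {G G' : Set E} (hG : G' ⊆ G) (f : E → ℤ)
    (hf : ∀ p, 0 ≤ ∑ e, if N.sim G' p (N.src e) then f e else 0) (p : Q) :
    0 ≤ ∑ e, if N.sim G p (N.src e) then f e else 0 := by
  rw [← Finset.sum_filter]
  rw [← Finset.sum_fiberwise_of_maps_to (t := Finset.univ)
    (g := fun e => {q | N.sim G' q (N.src e)}) (fun _ _ => Finset.mem_univ _)]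
  refine Finset.sum_nonneg fun c _ => ?_
  by_cases hc : ∃ e₀, N.sim G p (N.src e₀) ∧ {q | N.sim G' q (N.src e₀)} = c
  · obtain ⟨e₀, he₀, rfl⟩ := hc
    have h1 := hf (N.src e₀)
    rw [← Finset.sum_filter] at h1
    refine h1.trans_eq (Finset.sum_congr ?_ fun _ _ => rfl)
    ext e
    simp only [Finset.mem_filter, Finset.mem_univ, true_and]
    constructor
    · intro h
      refine ⟨Net.sim_trans he₀ (Net.sim_mono hG h), ?_⟩
      ext q
      exact ⟨fun h' => Net.sim_trans h' (Net.sim_symm h), fun h' => Net.sim_trans h' h⟩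
    · rintro ⟨_, h⟩
      have : N.src e₀ ∈ {q | N.sim G' q (N.src e)} := by rw [h]; exact Net.sim_refl _ _ _
      exact this
  · rw [Finset.filter_eq_empty_iff.2]
    · simp
    · intro e he h
      exact hc ⟨e, (Finset.mem_filter.1 he).2, h⟩

/-! ### Growth: lower bounds -/

/-- The exponent which the counter `x` provably reaches by means of the first `K` layers. -/
def Net.ex (N : Net Q E ι) (K : ℕ) (x : ι) : ℕ := max (N.v x) (wl N.lay K x)

theorem wl_mono (g : ℕ → Set E × Set ι) {j K : ℕ} (h : j ≤ K) (x : ι) : wl g j x ≤ wl g K x := by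
  refine csInf_le_csInf (OrderBot.bddBelow _) ⟨K, Or.inr le_rfl⟩ ?_
  rintro i (hi | hi)
  · exact Or.inl hi
  · exact Or.inr (h.trans hi)

/-- Circulations of the layers `j ≥ ex K x + l` do not decrease `x` on any class of layer `l`:
feasibility says so on the finer classes of a later layer. -/
theorem Net.class_nonneg {N : Net Q E ι} (hv : ∀ x, 1 ≤ N.v x) {j l K : ℕ} {m : E → ℕ}
    (hm : N.Feas N.lay j m) (hjK : j ≤ K) {x : ι} (hx : N.ex K x + l ≤ j) (p : Q) :
    0 ≤ ∑ e, if N.sim (N.G l) p (N.src e) then (m e : ℤ) * N.u e x else 0 := by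
  have h1 : N.v x ≤ N.ex K x := le_max_left _ _
  have h2 : wl N.lay K x ≤ N.ex K x := le_max_right _ _
  have h3 := wl_mono N.lay hjK x
  have h4 := Net.one_le_wl hv (x := x) (l := j) (by omega)
  exact Net.class_sum_nonneg (Net.G_anti (j := l) (l := j - wl N.lay j x) (by omega)) _
    (hm.row x (by omega) (j - wl N.lay j x) (by omega) (by omega)) p

/-- The part of a circulation on any set of edges lowers a counter by at most a constant. -/
theorem Net.class_lower (N : Net Q E ι) (m : E → ℕ) (x : ι) {U : ℕ}
    (hU : ∀ e, -(U : ℤ) ≤ N.u e x) (P : E → Prop) :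
    -((∑ e, m e : ℕ) * U : ℤ) ≤ ∑ e, if P e then (m e : ℤ) * N.u e x else 0 := by
  push_cast
  rw [Finset.sum_mul, ← Finset.sum_neg_distrib]
  refine Finset.sum_le_sum fun e _ => ?_
  have h1 := hU e
  have h2 : (0 : ℤ) ≤ m e := by positivity
  split_ifs
  · nlinarith
  · have : (0 : ℤ) ≤ m e * U := by positivity
    linarith

theorem Net.exists_U (N : Net Q E ι) : ∃ U : ℕ, ∀ e x, |N.u e x| ≤ (U : ℤ) := by
  refine ⟨∑ e, ∑ x, (N.u e x).natAbs, fun e x => ?_⟩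
  have h1 : (N.u e x).natAbs ≤ ∑ x, (N.u e x).natAbs :=
    Finset.single_le_sum (f := fun x => (N.u e x).natAbs) (fun _ _ => Nat.zero_le _)
      (Finset.mem_univ x)
  have h2 : ∑ x, (N.u e x).natAbs ≤ ∑ e, ∑ x, (N.u e x).natAbs :=
    Finset.single_le_sum (f := fun e => ∑ x, (N.u e x).natAbs) (fun _ _ => Nat.zero_le _)
      (Finset.mem_univ e)
  have := h1.trans h2
  zify at this
  simpa using this

/-- The nested walks. At level `l` the closed walk `W p` consists of `n` rounds of the Eulerian
circuit of `mu l` on the class of `p`, each with the walks of level `l + 1` woven in. It uses an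
edge of the class exactly `∑ j, n ^ (j + 1 - l) * mu j e` times, and never takes more than `C * n
^ ex K x` from a counter `x`. The argument `h` is the number of levels that remain. -/
theorem Net.build {N : Net Q E ι} (hv : ∀ x, 1 ≤ N.v x) (mu : ℕ → E → ℕ)
    (hF : ∀ j, N.Feas N.lay j (mu j)) (hG : ∀ j e, mu j e ≠ 0 ↔ e ∈ N.G j) (K : ℕ) :
    ∀ h l, l + h = K + 1 → ∃ C : ℕ, ∀ n : ℕ, 1 ≤ n → ∃ W : Q → List E, ∀ p,
      N.Walk p (W p) p ∧
      (∀ e, (W p).count e = if N.sim (N.G l) p (N.src e)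
        then ∑ j ∈ Finset.Ico l (K + 1), n ^ (j + 1 - l) * mu j e else 0) ∧
      ∀ x, N.safe x ((C : ℤ) * (n : ℤ) ^ N.ex K x) (W p) := by
  obtain ⟨U, hU⟩ := N.exists_U
  let S : ℕ := ∑ j ∈ Finset.range (K + 1), ∑ e, mu j e
  have hS : ∀ j < K + 1, ∑ e, mu j e ≤ S := fun j hj =>
    Finset.single_le_sum (f := fun j => ∑ e, mu j e) (fun _ _ => Nat.zero_le _)
      (Finset.mem_range.2 hj)
  intro h
  induction h with
  | zero =>
    intro l hl
    refine ⟨0, fun n _ => ⟨fun _ => [], fun p => ⟨rfl, fun e => ?_, fun x => ?_⟩⟩⟩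
    · rw [Finset.Ico_eq_empty (by omega)]; simp
    · simp [Net.safe]
  | succ h ih =>
    intro l hl
    obtain ⟨C₁, hC₁⟩ := ih (l + 1) (by omega)
    refine ⟨(K + 1) * (S * U) + S * (C₁ + U), fun n hn => ?_⟩
    obtain ⟨W', hW'⟩ := hC₁ n hn
    choose ρ hρw hρc using fun p => Net.euler_class (hF l).circ (hG l) p
    refine ⟨fun p => rep n (N.weave (N.G (l + 1)) W' [] (ρ p)), fun p => ?_⟩
    have hround : ∀ e, (N.weave (N.G (l + 1)) W' [] (ρ p)).count e =
        if N.sim (N.G l) p (N.src e)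
          then ∑ j ∈ Finset.Ico l (K + 1), n ^ (j - l) * mu j e else 0 := by
      intro e
      rw [Net.weave_count (c := fun e =>
        ∑ j ∈ Finset.Ico (l + 1) (K + 1), n ^ (j + 1 - (l + 1)) * mu j e) (fun q e => (hW' q).2.1 e),
        hρc]
      have hsplit : ∑ j ∈ Finset.Ico l (K + 1), n ^ (j - l) * mu j e = mu l e +
          ∑ j ∈ Finset.Ico (l + 1) (K + 1), n ^ (j + 1 - (l + 1)) * mu j e := by
        rw [Finset.sum_eq_sum_Ico_succ_bot (by omega)]
        simp
      by_cases hs : N.sim (N.G l) p (N.src e)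
      · rw [if_pos hs, if_pos hs, hsplit]
        congr 1
        by_cases hc0 : ∑ j ∈ Finset.Ico (l + 1) (K + 1), n ^ (j + 1 - (l + 1)) * mu j e = 0
        · rw [hc0]; simp
        · rw [if_pos]
          refine ⟨⟨e, ?_, Net.sim_refl _ _ _⟩, by simp⟩
          obtain ⟨j, hj, hje⟩ := Finset.exists_ne_zero_of_sum_ne_zero hc0
          have h1 : mu j e ≠ 0 := fun h0 => hje (by rw [h0, mul_zero])
          have h2 : e ∈ N.G l := Net.G_anti
            (by have := Finset.mem_Ico.1 hj; omega) ((hG j e).1 h1)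
          have h3 := hρc p e
          rw [if_pos hs] at h3
          refine List.count_pos_iff.1 ?_
          have := (hG l e).2 h2
          omega
      · rw [if_neg hs, if_neg hs, if_neg]
        rintro ⟨⟨a, ha, hae⟩, -⟩
        have h1 := hρc p a
        have h2 := List.count_pos_iff.2 ha
        split_ifs at h1 with h3
        · exact hs (Net.sim_trans h3 (Net.sim_mono (Net.G_anti (Nat.le_succ l)) hae))
        · omega
    refine ⟨Net.rep_walk (Net.weave_walk (fun q => (hW' q).1) _ (hρw p)) n, fun e => ?_, fun x => ?_⟩
    · rw [rep_count, hround]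
      split_ifs
      · rw [Finset.mul_sum]
        refine Finset.sum_congr rfl fun j hj => ?_
        have := Finset.mem_Ico.1 hj
        rw [show j + 1 - l = (j - l) + 1 by omega]
        ring
      · simp
    · have hnD : (1 : ℤ) ≤ (n : ℤ) ^ N.ex K x := one_le_pow₀ (by exact_mod_cast hn)
      have hUx : ∀ e, -(U : ℤ) ≤ N.u e x := fun e => (abs_le.1 (hU e x)).1
      have hρl : (ρ p).length ≤ S := by
        rw [length_eq_sum_count]
        refine le_trans (Finset.sum_le_sum fun e _ => ?_) (hS l (by omega))
        rw [hρc]; split_ifs <;> simp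
      have hsafe : N.safe x ((S * (C₁ + U) : ℤ) * (n : ℤ) ^ N.ex K x)
          (N.weave (N.G (l + 1)) W' [] (ρ p)) := by
        refine Net.weave_safe hUx (by positivity) (fun q => (hW' q).2.2 x) _ _ _ ?_
        have h1 : ((ρ p).length : ℤ) ≤ S := by exact_mod_cast hρl
        have h2 : (U : ℤ) ≤ U * (n : ℤ) ^ N.ex K x := le_mul_of_one_le_right (by positivity) hnD
        calc ((ρ p).length : ℤ) * (C₁ * (n : ℤ) ^ N.ex K x + U)
            ≤ S * (C₁ * (n : ℤ) ^ N.ex K x + U * (n : ℤ) ^ N.ex K x) := by gcongr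
          _ = _ := by ring
      have heff : N.eff (N.weave (N.G (l + 1)) W' [] (ρ p)) x =
          ∑ j ∈ Finset.Ico l (K + 1), (n : ℤ) ^ (j - l) *
            ∑ e, if N.sim (N.G l) p (N.src e) then (mu j e : ℤ) * N.u e x else 0 := by
        rw [Net.eff_eq_sum]
        simp only [hround, Finset.mul_sum]
        rw [Finset.sum_comm]
        refine Finset.sum_congr rfl fun e _ => ?_
        split_ifs
        · push_cast
          rw [Finset.sum_mul]
          exact Finset.sum_congr rfl fun j _ => by ring
        · simp
      have hA : ∀ r ≤ n, -(((K + 1) * (S * U) : ℤ) * (n : ℤ) ^ N.ex K x) ≤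
          (r : ℤ) * N.eff (N.weave (N.G (l + 1)) W' [] (ρ p)) x := by
        intro r hr
        rw [heff, Finset.mul_sum]
        -- High layers do not decrease `x` on the class, by feasibility; low layers are repeated
        -- too few times to lose more than `n ^ ex K x`.
        have hterm : ∀ j ∈ Finset.Ico l (K + 1), -((S * U : ℤ) * (n : ℤ) ^ N.ex K x) ≤
            (r : ℤ) * ((n : ℤ) ^ (j - l) *
              ∑ e, if N.sim (N.G l) p (N.src e) then (mu j e : ℤ) * N.u e x else 0) := by
          intro j hj
          have hj' := Finset.mem_Ico.1 hj
          by_cases hD : N.ex K x + l ≤ j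
          · have h0 := Net.class_nonneg hv (hF j) (K := K) (by omega) hD p
            have h1 : (0 : ℤ) ≤ (r : ℤ) * ((n : ℤ) ^ (j - l) *
              ∑ e, if N.sim (N.G l) p (N.src e) then (mu j e : ℤ) * N.u e x else 0) := by
              positivity
            have h2 : (0 : ℤ) ≤ (S * U : ℤ) * (n : ℤ) ^ N.ex K x := by positivity
            linarith
          · have h0 := Net.class_lower N (mu j) x hUx (fun e => N.sim (N.G l) p (N.src e))
            have h1 : ((∑ e, mu j e : ℕ) : ℤ) ≤ S := by exact_mod_cast hS j hj'.2
            have h2 : -((S : ℤ) * U) ≤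
                ∑ e, if N.sim (N.G l) p (N.src e) then (mu j e : ℤ) * N.u e x else 0 := by
              refine le_trans ?_ h0
              have : ((∑ e, mu j e : ℕ) : ℤ) * U ≤ S * U := by gcongr
              linarith
            have h3 : (r : ℤ) * (n : ℤ) ^ (j - l) ≤ (n : ℤ) ^ N.ex K x := by
              calc (r : ℤ) * (n : ℤ) ^ (j - l) ≤ n * (n : ℤ) ^ (j - l) := by
                    gcongr
                _ = (n : ℤ) ^ (j - l + 1) := by ring
                _ ≤ _ := pow_le_pow_right₀ (by exact_mod_cast hn) (by omega)
            have h4 : (0 : ℤ) ≤ (r : ℤ) * (n : ℤ) ^ (j - l) := by positivity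
            rw [← mul_assoc]
            calc -((S * U : ℤ) * (n : ℤ) ^ N.ex K x)
                ≤ -((S * U : ℤ) * ((r : ℤ) * (n : ℤ) ^ (j - l))) := by
                  have : (S * U : ℤ) * ((r : ℤ) * (n : ℤ) ^ (j - l)) ≤
                    (S * U : ℤ) * (n : ℤ) ^ N.ex K x := by gcongr
                  linarith
              _ = (r : ℤ) * (n : ℤ) ^ (j - l) * -((S : ℤ) * U) := by ring
              _ ≤ _ := mul_le_mul_of_nonneg_left h2 h4
        have h5 := Finset.sum_le_sum hterm
        rw [Finset.sum_const, nsmul_eq_mul] at h5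
        refine le_trans ?_ h5
        have h6 : ((Finset.Ico l (K + 1)).card : ℤ) ≤ K + 1 := by
          rw [Nat.card_Ico]; omega
        have h7 : (0 : ℤ) ≤ (S * U : ℤ) * (n : ℤ) ^ N.ex K x := by positivity
        nlinarith
      have := Net.rep_safe n hA hsafe
      refine this.mono (le_of_eq ?_)
      push_cast
      ring

/-- Every counter is pumped to the order `n ^ ex K x`, all counters at once. Inductively, one
first runs the walk for `K`, which raises the counters to order `n ^ ex K x`; this pays for the
walk of `Net.build` at a scale `m` smaller by a constant factor. In the effect of that walk the
term `m ^ (K + 1) * mu K` dominates, and it increases every counter with `v x ≤ K` not bounded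
through layer `K`. -/
theorem Net.growth {N : Net Q E ι} (hv : ∀ x, 1 ≤ N.v x) (hS : ∀ p q, ∃ w, N.Walk p w q)
    (K : ℕ) : ∃ c N₀ : ℕ, ∀ n ≥ N₀, ∀ p, ∃ w, N.Walk p w p ∧ w.length ≤ c * n ^ K ∧
      ∀ x, N.safe x ((n : ℤ) ^ N.v x) w ∧
        (n : ℤ) ^ N.ex K x ≤ c * ((n : ℤ) ^ N.v x + N.eff w x) := by
  induction K with
  | zero =>
    refine ⟨1, 0, fun n _ p => ⟨[], rfl, by simp, fun x => ⟨?_, ?_⟩⟩⟩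
    · simp only [Net.safe]; positivity
    · have : wl N.lay 0 x = 0 := Nat.le_zero.1 (wl_le _ _ _)
      simp [Net.ex, this, Net.eff]
  | succ K ih =>
    obtain ⟨c, N₀, ih⟩ := ih
    choose mu hF hG hpos using Net.exists_mu hv hS
    obtain ⟨C, hC⟩ := Net.build hv mu hF hG K (K + 1) 0 (by omega)
    obtain ⟨U, hU⟩ := N.exists_U
    let S : ℕ := ∑ j ∈ Finset.range (K + 1), ∑ e, mu j e
    have hSj : ∀ j < K + 1, ∑ e, mu j e ≤ S := fun j hj =>
      Finset.single_le_sum (f := fun j => ∑ e, mu j e) (fun _ _ => Nat.zero_le _)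
        (Finset.mem_range.2 hj)
    -- The scale is divided by `M`, so that the nested walk costs at most half of each counter.
    obtain ⟨M, hM⟩ : ∃ M, M = 2 * c * C + 1 := ⟨_, rfl⟩
    refine ⟨c + S + 2 * c + 2 * (2 * M) ^ (K + 1), max N₀ (M * (2 * (K * (S * U)) + 1)),
      fun n hn p => ?_⟩
    obtain ⟨m, hm⟩ : ∃ m, m = n / M := ⟨_, rfl⟩
    have hM0 : 0 < M := by omega
    have hm1 : 2 * (K * (S * U)) + 1 ≤ m := by
      rw [hm, Nat.le_div_iff_mul_le hM0, mul_comm]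
      exact (le_max_right _ _).trans hn
    have hmM : M * m ≤ n := by rw [hm]; exact Nat.mul_div_le n M
    have hmn : m ≤ n := le_trans (Nat.le_mul_of_pos_left m hM0) hmM
    have hnm : n ≤ 2 * M * m := by
      have h1 : n < M * (n / M + 1) := by
        rw [mul_comm]; exact Nat.lt_mul_of_div_lt (Nat.lt_succ_self _) hM0
      rw [← hm] at h1
      have h2 : M * 1 ≤ M * m := Nat.mul_le_mul_left M (by omega)
      have h3 : M * (m + 1) = M * m + M * 1 := by ring
      have h4 : 2 * M * m = M * m + M * m := by ring
      omega
    obtain ⟨w₁, hw₁, hl₁, hx₁⟩ := ih n ((le_max_left _ _).trans hn) p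
    obtain ⟨W, hW⟩ := hC m (by omega)
    obtain ⟨hw₂, hcnt, hsafe⟩ := hW p
    have hsim : ∀ e, N.sim (N.G 0) p (N.src e) := fun e => by
      obtain ⟨w, hw⟩ := hS p (N.src e)
      exact Net.sim_of_walk (Net.G_zero hv hS) hw
    have hcnt' : ∀ e, (W p).count e = ∑ j ∈ Finset.range (K + 1), m ^ (j + 1) * mu j e := by
      intro e
      rw [hcnt, if_pos (hsim e), Finset.range_eq_Ico]
      exact Finset.sum_congr rfl fun j _ => by rw [Nat.sub_zero]
    refine ⟨w₁ ++ W p, hw₁.append hw₂, ?_, fun x => ?_⟩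
    · have h1 : (W p).length ≤ S * n ^ (K + 1) := by
        rw [length_eq_sum_count]
        simp only [hcnt']
        rw [Finset.sum_comm, Finset.sum_mul]
        refine Finset.sum_le_sum fun j hj => ?_
        rw [← Finset.mul_sum, mul_comm]
        have := Finset.mem_range.1 hj
        refine Nat.mul_le_mul_left _ ?_
        calc m ^ (j + 1) ≤ n ^ (j + 1) := by gcongr
          _ ≤ n ^ (K + 1) := Nat.pow_le_pow_right (by omega) (by omega)
      have h2 : c * n ^ K ≤ c * n ^ (K + 1) := by
        gcongr
        · omega
        · omega
      rw [List.length_append]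
      have h3 : c * n ^ (K + 1) + S * n ^ (K + 1) ≤
        (c + S + 2 * c + 2 * (2 * M) ^ (K + 1)) * n ^ (K + 1) := by
        rw [← add_mul]
        exact Nat.mul_le_mul_right _ (by omega)
      omega
    · obtain ⟨hs₁, hg₁⟩ := hx₁ x
      obtain ⟨y, hy⟩ : ∃ y, y = (n : ℤ) ^ N.v x + N.eff w₁ x := ⟨_, rfl⟩
      rw [← hy] at hg₁
      have hD1 : 1 ≤ N.ex K x := (hv x).trans (le_max_left _ _)
      have hy0 : 0 ≤ y := hy ▸ hs₁.final
      have hMD : (M : ℤ) * (m : ℤ) ^ N.ex K x ≤ c * y := by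
        refine le_trans ?_ hg₁
        have h1 : M * m ^ N.ex K x ≤ n ^ N.ex K x := by
          calc M * m ^ N.ex K x ≤ M ^ N.ex K x * m ^ N.ex K x := by
                gcongr
                exact Nat.le_self_pow (by omega) M
            _ = (M * m) ^ N.ex K x := by rw [mul_pow]
            _ ≤ _ := by gcongr
        exact_mod_cast h1
      have hmD : (0 : ℤ) < (m : ℤ) ^ N.ex K x := by
        have : 0 < m := by omega
        positivity
      have hc0 : (0 : ℤ) < c := by
        by_contra h
        have : (c : ℤ) = 0 := le_antisymm (not_lt.1 h) (by positivity)
        rw [this, zero_mul] at hMD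
        have : (0 : ℤ) < M * (m : ℤ) ^ N.ex K x := by positivity
        omega
      have h2C : 2 * ((C : ℤ) * (m : ℤ) ^ N.ex K x) ≤ y := by
        have h1 : (c : ℤ) * (2 * ((C : ℤ) * (m : ℤ) ^ N.ex K x)) ≤ c * y := by
          refine le_trans ?_ hMD
          have : (M : ℤ) = 2 * c * C + 1 := by rw [hM]; push_cast; ring
          rw [this]
          nlinarith
        exact le_of_mul_le_mul_left h1 hc0
      have hCm0 : (0 : ℤ) ≤ (C : ℤ) * (m : ℤ) ^ N.ex K x := by positivity
      have hfin := (hsafe x).final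
      refine ⟨hs₁.append ((hsafe x).mono (by rw [← hy]; linarith)), ?_⟩
      rw [Net.eff_append, ← add_assoc, ← hy]
      have hy' : 0 ≤ y + N.eff (W p) x := by linarith
      by_cases hex : N.ex (K + 1) x = N.ex K x
      · rw [hex]
        have h1 : (c : ℤ) * y ≤ c * (2 * (y + N.eff (W p) x)) := by
          have : y ≤ 2 * (y + N.eff (W p) x) := by linarith
          gcongr
        have h2 : (2 * c : ℤ) * (y + N.eff (W p) x) ≤
            ((c + S + 2 * c + 2 * (2 * M) ^ (K + 1) : ℕ) : ℤ) * (y + N.eff (W p) x) := by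
          refine mul_le_mul_of_nonneg_right ?_ hy'
          have : 2 * c ≤ c + S + 2 * c + 2 * (2 * M) ^ (K + 1) := by omega
          exact_mod_cast this
        linarith
      · have hnB : ∀ j ≤ K, x ∉ N.B j := by
          intro j hj hxj
          apply hex
          unfold Net.ex
          rw [Net.wl_of_mem hxj hj, Net.wl_of_mem hxj (by omega)]
        have hw1 : wl N.lay (K + 1) x = K + 1 := Net.wl_of_not_mem fun j hj => hnB j (by omega)
        have hvK : N.v x ≤ K := by
          by_contra hlt
          apply hex
          unfold Net.ex
          have := wl_le N.lay K x
          rw [hw1, max_eq_left (by omega), max_eq_left (by omega)]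
        have hexK : N.ex (K + 1) x = K + 1 := by
          unfold Net.ex; rw [hw1]; omega
        rw [hexK]
        have hTK := hpos K x hvK hnB
        have heff : N.eff (W p) x =
            ∑ j ∈ Finset.range (K + 1), (m : ℤ) ^ (j + 1) * ∑ e, (mu j e : ℤ) * N.u e x := by
          rw [Net.eff_eq_sum]
          simp only [hcnt', Finset.mul_sum]
          rw [Finset.sum_comm]
          refine Finset.sum_congr rfl fun e _ => ?_
          push_cast
          rw [Finset.sum_mul]
          exact Finset.sum_congr rfl fun j _ => by ring
        have hlow : -((K : ℤ) * (S * U) * (m : ℤ) ^ K) ≤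
            ∑ j ∈ Finset.range K, (m : ℤ) ^ (j + 1) * ∑ e, (mu j e : ℤ) * N.u e x := by
          have hterm : ∀ j ∈ Finset.range K, -((S * U : ℤ) * (m : ℤ) ^ K) ≤
              (m : ℤ) ^ (j + 1) * ∑ e, (mu j e : ℤ) * N.u e x := by
            intro j hj
            have hj' := Finset.mem_range.1 hj
            have h0 := Net.class_lower N (mu j) x (fun e => (abs_le.1 (hU e x)).1) (fun _ => True)
            simp only [if_true] at h0
            have h1 : ((∑ e, mu j e : ℕ) : ℤ) ≤ S := by exact_mod_cast hSj j (by omega)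
            have h2 : -((S : ℤ) * U) ≤ ∑ e, (mu j e : ℤ) * N.u e x := by
              refine le_trans ?_ h0
              have : ((∑ e, mu j e : ℕ) : ℤ) * U ≤ S * U := by gcongr
              linarith
            have h3 : (m : ℤ) ^ (j + 1) ≤ (m : ℤ) ^ K :=
              pow_le_pow_right₀ (by exact_mod_cast (by omega : 1 ≤ m)) (by omega)
            calc -((S * U : ℤ) * (m : ℤ) ^ K) ≤ -((S * U : ℤ) * (m : ℤ) ^ (j + 1)) := by
                  have : (S * U : ℤ) * (m : ℤ) ^ (j + 1) ≤ (S * U : ℤ) * (m : ℤ) ^ K := by gcongr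
                  linarith
              _ = (m : ℤ) ^ (j + 1) * -((S : ℤ) * U) := by ring
              _ ≤ _ := mul_le_mul_of_nonneg_left h2 (by positivity)
          have h5 := Finset.sum_le_sum hterm
          rw [Finset.sum_const, nsmul_eq_mul, Finset.card_range] at h5
          linarith
        rw [Finset.sum_range_succ] at heff
        have hmK : (0 : ℤ) ≤ (m : ℤ) ^ K := by positivity
        have hlead : (m : ℤ) ^ (K + 1) ≤ (m : ℤ) ^ (K + 1) * ∑ e, (mu K e : ℤ) * N.u e x :=
          le_mul_of_one_le_right (by positivity) (by omega)
        have hm1' : 2 * ((K : ℤ) * (S * U)) ≤ m := by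
          have : 2 * (K * (S * U)) ≤ m := by omega
          exact_mod_cast this
        have hhalf : 2 * ((K : ℤ) * (S * U) * (m : ℤ) ^ K) ≤ (m : ℤ) ^ (K + 1) := by
          rw [pow_succ]
          nlinarith
        have hfinal : (m : ℤ) ^ (K + 1) ≤ 2 * (y + N.eff (W p) x) := by
          rw [heff]; linarith
        have hnK : (n : ℤ) ^ (K + 1) ≤ ((2 * M) ^ (K + 1) : ℤ) * (m : ℤ) ^ (K + 1) := by
          rw [← mul_pow]
          have : n ^ (K + 1) ≤ (2 * M * m) ^ (K + 1) := by gcongr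
          exact_mod_cast this
        have h2 : (2 * (2 * M) ^ (K + 1) : ℤ) * (y + N.eff (W p) x) ≤
            ((c + S + 2 * c + 2 * (2 * M) ^ (K + 1) : ℕ) : ℤ) * (y + N.eff (W p) x) := by
          refine mul_le_mul_of_nonneg_right ?_ hy'
          have : 2 * (2 * M) ^ (K + 1) ≤ c + S + 2 * c + 2 * (2 * M) ^ (K + 1) := by omega
          exact_mod_cast this
        have h3 : ((2 * M) ^ (K + 1) : ℤ) * (m : ℤ) ^ (K + 1) ≤
            ((2 * M) ^ (K + 1) : ℤ) * (2 * (y + N.eff (W p) x)) := by gcongr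
        linarith

end

/-! ### Exponents of a strongly connected net -/

/-- A strongly connected net has an exponent `ω x` for each counter: the layer in which `x` is
bounded, or `∞`. If `ω x = k`, then `x` is `O(n ^ k)` on all runs; and for each `K` a closed walk
of length `O(n ^ K)` pumps all counters simultaneously to their exponents, cut off at `K`. -/
theorem Net.core {Q E ι : Type} [Fintype Q] [Fintype E] [Fintype ι] {N : Net Q E ι}
    (hv : ∀ x, 1 ≤ N.v x) (hS : ∀ p q, ∃ w, N.Walk p w q) :
    ∃ ω : ι → ℕ∞, (∀ x, (N.v x : ℕ∞) ≤ ω x) ∧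
      (∀ x (k : ℕ), ω x = k → ∃ C : ℕ, ∀ n : ℕ, 1 ≤ n → ∀ p y w q z, N.Start n y →
        N.Run p y w q z → z x ≤ (C : ℤ) * (n : ℤ) ^ k) ∧
      ∀ K : ℕ, ∃ c N₀ : ℕ, ∀ n ≥ N₀, ∀ p, ∃ w, N.Walk p w p ∧ w.length ≤ c * n ^ K ∧
        ∀ x, N.safe x ((n : ℤ) ^ N.v x) w ∧ ∀ k : ℕ, k ≤ K → (k : ℕ∞) ≤ ω x →
          (n : ℤ) ^ k ≤ c * ((n : ℤ) ^ N.v x + N.eff w x) := by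
  let ω : ι → ℕ∞ := fun x => if h : ∃ k, x ∈ N.B k then ((h.choose : ℕ) : ℕ∞) else ⊤
  have hωk : ∀ x (k : ℕ), ω x = (k : ℕ∞) → x ∈ N.B k := by
    intro x k hk
    by_cases h : ∃ k, x ∈ N.B k
    · simp only [ω, dif_pos h] at hk
      rw [← ENat.natCast_inj.1 hk]
      exact h.choose_spec
    · simp only [ω, dif_neg h] at hk
      exact absurd hk (ENat.natCast_ne_top k).symm
  have hωt : ∀ x, ω x = ⊤ → ∀ k, x ∉ N.B k := by
    intro x hx k hk
    have h : ∃ k, x ∈ N.B k := ⟨k, hk⟩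
    simp only [ω, dif_pos h] at hx
    exact ENat.natCast_ne_top _ hx
  refine ⟨ω, fun x => ?_, fun x k hk => ?_, fun K => ?_⟩
  · cases hx : ω x using ENat.recTopCoe with
    | top => exact le_top
    | coe k => exact_mod_cast (Net.mem_B.1 (hωk x k hx)).1
  · obtain ⟨C, hC, h⟩ := Net.upper hv hS (k + 1)
    refine ⟨⌈C⌉₊, fun n hn p y w q z hst hr => ?_⟩
    have h1 := (h k (by omega)).2 x (hωk x k hk) n hn p y w q z hst hr
    have h2 : (z x : ℚ) ≤ (⌈C⌉₊ : ℚ) * (n : ℚ) ^ k :=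
      h1.trans (mul_le_mul_of_nonneg_right (Nat.le_ceil C) (by positivity))
    exact_mod_cast h2
  · obtain ⟨c, N₀, h⟩ := Net.growth hv hS K
    refine ⟨c, max N₀ 1, fun n hn p => ?_⟩
    have hn1 : 1 ≤ n := (le_max_right _ _).trans hn
    obtain ⟨w, h1, h2, h3⟩ := h n ((le_max_left _ _).trans hn) p
    refine ⟨w, h1, h2, fun x => ⟨(h3 x).1, fun k hkK hk => le_trans ?_ (h3 x).2⟩⟩
    refine pow_le_pow_right₀ (by exact_mod_cast hn1) (le_trans ?_ (le_max_right _ _))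
    by_cases hx : ∀ j < K, x ∉ N.B j
    · rw [Net.wl_of_not_mem hx]; exact hkK
    · push Not at hx
      obtain ⟨j, hj, hxj⟩ := hx
      rw [Net.wl_of_mem hxj hj.le]
      cases hω : ω x using ENat.recTopCoe with
      | top => exact absurd hxj (hωt x hω j)
      | coe i =>
        rw [hω] at hk
        have hki : k ≤ i := by exact_mod_cast hk
        have h4 := hωk x i hω
        by_contra hlt
        exact (Net.mem_B.1 h4).2.1 j (by omega) hxj

/-! ### Reachability and counter values -/

/-- One step of a computation, whoever owns the state. -/
def VASS.Step (V : VASS d) (c c' : V.Config) : Prop := ∃ t, V.enabled c t ∧ c' = V.applyT c t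

/-- Reachability between configurations. -/
def VASS.Reach (V : VASS d) : V.Config → V.Config → Prop := Relation.ReflTransGen V.Step

theorem VASS.Reach.exists_seq {V : VASS d} {c c' : V.Config} (h : V.Reach c c') :
    ∃ (n : ℕ) (f : ℕ → V.Config), f 0 = c ∧ f n = c' ∧ ∀ k < n, V.Step (f k) (f (k + 1)) := by
  induction h with
  | refl => exact ⟨0, fun _ => c, rfl, rfl, fun k hk => absurd hk (by omega)⟩
  | @tail b c' _ hs ih =>
    obtain ⟨n, f, h0, hn, hf⟩ := ih
    refine ⟨n + 1, fun k => if k ≤ n then f k else c', by simp [h0], by simp, fun k hk => ?_⟩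
    by_cases hkn : k < n
    · simp only [if_pos hkn.le, if_pos (show k + 1 ≤ n by omega)]
      exact hf k hkn
    · have : k = n := by omega
      subst this
      simp only [le_refl, if_true, if_neg (show ¬ k + 1 ≤ k by omega), hn]
      exact hs

/-- The strategy following the sequence `f`: with history `h`, take a transition to `f (h.length +
1)` if there is one, otherwise any enabled transition, otherwise any outgoing one. The last branch
is a junk value for states without outgoing transitions. -/
def followStrategy (V : VASS d) (own : V.Q → Prop) (f : ℕ → V.Config) : Strategy V own where
  choose h c :=
    if h1 : ∃ t, V.enabled c t ∧ f (h.length + 1) = V.applyT c t then h1.choose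
    else if h2 : ∃ t, V.enabled c t then h2.choose
    else if h3 : ∃ t ∈ V.Tran, t.1 = c.1 then h3.choose
    else (c.1, 0, c.1)
  choose_mem h c _ h3 := by
    split_ifs with h1 h2
    · exact ⟨h1.choose_spec.1.1, h1.choose_spec.1.2.1⟩
    · exact ⟨h2.choose_spec.1, h2.choose_spec.2.1⟩
    · exact h3.choose_spec
  choose_enabled h c _ h2 := by
    split_ifs with h1
    · exact h1.choose_spec.1
    · exact h2.choose_spec

/-- In a demonic VASS every value reached by some computation bounds `Cval` from below, since
Demon can follow that computation. -/
theorem le_Cval {V : VASS d} (hD : V.demonic) (i : Fin d) {c c' : V.Config}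
    (h : V.Reach c c') : (c'.2 i : ℕ∞) ≤ Cval V i c := by
  obtain ⟨n, f, h0, hn, hf⟩ := h.exists_seq
  refine le_iInf fun σ => ?_
  let π : DemonStrategy V := followStrategy V _ f
  refine le_iSup_of_le π ?_
  refine le_iSup₂_of_le c' ?_ le_rfl
  have key : ∀ k ≤ n, ∃ h : List V.Config, h.length = k ∧ playAux σ π c k = some (h, f k) := by
    intro k
    induction k with
    | zero => exact fun _ => ⟨[], rfl, by simp [playAux, h0]⟩
    | succ k ih =>
      intro hk
      obtain ⟨h, hl, hp⟩ := ih (by omega)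
      refine ⟨h ++ [f k], by simp [hl], ?_⟩
      have hs : ∃ t, V.enabled (f k) t ∧ f (h.length + 1) = V.applyT (f k) t := by
        rw [hl]; exact hf k (by omega)
      have hch : π.choose h (f k) = hs.choose := dif_pos hs
      simp only [playAux, hp, Option.bind_some, if_neg (hD _), hch, if_pos hs.choose_spec.1]
      rw [← hs.choose_spec.2, hl]
  obtain ⟨h, -, hp⟩ := key n le_rfl
  exact ⟨n, h, by rw [hp, hn]⟩

/-- A bound for all reachable configurations bounds `Cval`, whatever Angel does. -/
theorem Cval_le {V : VASS d} (i : Fin d) {c : V.Config} {b : ℕ∞}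
    (h : ∀ c', V.Reach c c' → (c'.2 i : ℕ∞) ≤ b) : Cval V i c ≤ b := by
  let σ : AngelStrategy V := followStrategy V _ (fun _ => c)
  refine iInf_le_of_le σ (iSup_le fun π => iSup₂_le fun c' hc' => h c' ?_)
  obtain ⟨n, hs, hn⟩ := hc'
  induction n generalizing hs c' with
  | zero =>
    simp only [playAux, Option.some.injEq, Prod.mk.injEq] at hn
    rw [← hn.2]
    exact Relation.ReflTransGen.refl
  | succ n ih =>
    simp only [playAux] at hn
    rw [Option.bind_eq_some_iff] at hn
    obtain ⟨⟨h', c''⟩, h1, h2⟩ := hn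
    split_ifs at h2 with h3 h4
    all_goals
      simp only [Option.some.injEq, Prod.mk.injEq] at h2
      exact Relation.ReflTransGen.tail (ih c'' h' h1) ⟨_, by assumption, h2.2.symm⟩

theorem exp_le_of_BigO_BigOmega {f : ℕ → ℕ∞} {a b : ℕ} (hO : BigO f (fun n => n ^ a))
    (hΩ : BigOmega f (fun n => n ^ b)) : b ≤ a := by
  obtain ⟨C, N, hC⟩ := hO
  obtain ⟨c, N', -, hc⟩ := hΩ
  by_contra hlt
  obtain ⟨n, hn⟩ : ∃ n, n = N + N' + c * C + 1 := ⟨_, rfl⟩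
  have h1 := hC n (by omega)
  have h2 := hc n (by omega)
  have h3 : ((n ^ b : ℕ) : ℕ∞) ≤ ((c * (C * n ^ a) : ℕ) : ℕ∞) := by
    push_cast at h1 h2 ⊢
    exact h2.trans (by gcongr)
  have h4 : n ^ b ≤ c * (C * n ^ a) := by exact_mod_cast h3
  have h5 : n ^ (a + 1) ≤ n ^ b := Nat.pow_le_pow_right (by omega) (by omega)
  have h6 : 0 < n ^ a := Nat.pow_pos (by omega)
  have h7 : n * n ^ a ≤ (c * C) * n ^ a := by
    calc n * n ^ a = n ^ (a + 1) := by ring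
      _ ≤ _ := h5.trans h4
      _ = _ := by ring
  have := Nat.le_of_mul_le_mul_right h7 h6
  omega

/-! ### Components as nets -/

theorem VASS.exists_U (V : VASS d) : ∃ U : ℕ, ∀ t ∈ V.Tran, ∀ x, |t.2.1 x| ≤ (U : ℤ) := by
  refine ⟨∑ t ∈ V.Tran, ∑ x, (t.2.1 x).natAbs, fun t ht x => ?_⟩
  have h1 : (t.2.1 x).natAbs ≤ ∑ x, (t.2.1 x).natAbs :=
    Finset.single_le_sum (f := fun x => (t.2.1 x).natAbs) (fun _ _ => Nat.zero_le _)
      (Finset.mem_univ x)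
  have h2 : ∑ x, (t.2.1 x).natAbs ≤ ∑ t ∈ V.Tran, ∑ x, (t.2.1 x).natAbs :=
    Finset.single_le_sum (f := fun t : V.Q × (Fin d → ℤ) × V.Q => ∑ x, (t.2.1 x).natAbs)
      (fun _ _ => Nat.zero_le _) ht
  have := h1.trans h2
  zify at this
  simpa using this

/-- The transitions inside `C`. -/
abbrev SccE (V : VASS d) (C : Set V.Q) : Type :=
  {t : V.Q × (Fin d → ℤ) × V.Q // t ∈ V.Tran.filter fun t => t.1 ∈ C ∧ t.2.2 ∈ C}

/-- The component `C` as a net, with only those counters that are finite in `v`. -/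
def sccNet (V : VASS d) (C : Set V.Q) (v : Fin d → ℕ∞) :
    Net {q // q ∈ C} (SccE V C) {x : Fin d // v x ≠ ⊤} where
  src t := ⟨t.1.1, (Finset.mem_filter.1 t.2).2.1⟩
  tgt t := ⟨t.1.2.2, (Finset.mem_filter.1 t.2).2.2⟩
  u t x := t.1.2.1 x.1
  v x := (v x.1).toNat

theorem sccNet_conn {V : VASS d} {C : Set V.Q} (hC : IsSCC V C) (v : Fin d → ℕ∞)
    (p q : {q // q ∈ C}) : ∃ w, (sccNet V C v).Walk p w q := by
  obtain ⟨r, rfl⟩ := hC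
  obtain ⟨p, hp⟩ := p
  obtain ⟨q, hq⟩ := q
  have hpq : Relation.ReflTransGen V.edgeRel p q := hp.2.trans hq.1
  induction hpq using Relation.ReflTransGen.head_induction_on with
  | refl => exact ⟨[], rfl⟩
  | @head a b hab hbq ih =>
    have hb : b ∈ sccOf V r := ⟨hp.1.tail hab, hbq.trans hq.2⟩
    obtain ⟨w, hw⟩ := ih hb
    obtain ⟨u, hu⟩ := hab
    exact ⟨⟨(a, u, b), Finset.mem_filter.2 ⟨hu, hp, hb⟩⟩ :: w, rfl, hw⟩

/-- A step along a transition inside `C`, looking only at the counters that are finite in `v`. -/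
def finStep (V : VASS d) (C : Set V.Q) (v : Fin d → ℕ∞) (c c' : V.Config) : Prop :=
  ∃ t ∈ V.Tran.filter (fun t => t.1 ∈ C ∧ t.2.2 ∈ C), t.1 = c.1 ∧ c'.1 = t.2.2 ∧
    ∀ x, v x ≠ ⊤ → 0 ≤ (c.2 x : ℤ) + t.2.1 x ∧ (c'.2 x : ℤ) = (c.2 x : ℤ) + t.2.1 x

/-- Computations inside `C` are runs of the net. -/
theorem run_of_finStep {V : VASS d} {C : Set V.Q} {v : Fin d → ℕ∞} {c c' : V.Config}
    (hc : c.1 ∈ C) (h : Relation.ReflTransGen (finStep V C v) c c') :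
    ∃ (hc' : c'.1 ∈ C) (w : List (SccE V C)),
      (sccNet V C v).Run ⟨c.1, hc⟩ (fun x => (c.2 x.1 : ℤ)) w ⟨c'.1, hc'⟩
        (fun x => (c'.2 x.1 : ℤ)) := by
  induction h with
  | refl => exact ⟨hc, [], Net.Run.nil⟩
  | @tail b c' _ hs ih =>
    obtain ⟨hb, w, hw⟩ := ih
    obtain ⟨q, z⟩ := c'
    obtain ⟨t, ht, h1, h2, h3⟩ := hs
    dsimp only at h2 h3 ⊢
    subst h2
    refine ⟨(Finset.mem_filter.1 ht).2.2, ⟨t, ht⟩ :: w, ?_⟩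
    have := Net.Run.snoc (N := sccNet V C v) (⟨t, ht⟩ : SccE V C) hw (Subtype.ext h1)
      (fun x => (h3 x.1 x.2).1)
    have hz : (fun x : {x // v x ≠ ⊤} => (z x.1 : ℤ)) = fun x => (b.2 x.1 : ℤ) + t.2.1 x.1 :=
      funext fun x => (h3 x.1 x.2).2
    rw [hz]
    exact this

/-- A step staying inside `C`. -/
def VASS.StepIn (V : VASS d) (C : Set V.Q) (c c' : V.Config) : Prop :=
  V.Step c c' ∧ c.1 ∈ C ∧ c'.1 ∈ C

theorem finStep_of_StepIn {V : VASS d} {C : Set V.Q} (v : Fin d → ℕ∞) {c c' : V.Config}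
    (h : V.StepIn C c c') : finStep V C v c c' := by
  obtain ⟨⟨t, ⟨h1, h2, h3⟩, rfl⟩, h4, h5⟩ := h
  exact ⟨t, Finset.mem_filter.2 ⟨h1, h2 ▸ h4, h5⟩, h2, rfl, fun x _ =>
    ⟨h3 x, Int.toNat_of_nonneg (h3 x)⟩⟩

theorem finStep_of_modInf {V : VASS d} {C : Set V.Q} {v : Fin d → ℕ∞} {c c' : V.Config}
    (h : ((V.restrictTo C).modInf v).Step c c') : finStep V C v c c' := by
  obtain ⟨t', ⟨h1, h2, h3⟩, rfl⟩ := h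
  obtain ⟨t, ht, rfl⟩ := Finset.mem_image.1 h1
  refine ⟨t, ht, h2, rfl, fun x hx => ?_⟩
  have h4 := h3 x
  simp only [if_neg hx] at h4
  refine ⟨h4, ?_⟩
  simp only [VASS.applyT, if_neg hx]
  exact Int.toNat_of_nonneg h4

/-- A safe walk of the net is a computation of any VASS `A` that simulates the edges of the net,
provided that the counters infinite in `v`, which are lowered by at most `U` in one step, start at
`U` times the length of the walk or more. This serves both the VASS with those counters erased,
where `U = 0`, and the original one. -/
theorem walk_reach {V : VASS d} {C : Set V.Q} {v : Fin d → ℕ∞} (A : VASS d) (φ : V.Q → A.Q)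
    (U : ℕ) (hE : ∀ t : SccE V C, ∃ t' ∈ A.Tran, t'.1 = φ t.1.1 ∧ t'.2.2 = φ t.1.2.2 ∧
      (∀ x, v x ≠ ⊤ → t'.2.1 x = t.1.2.1 x) ∧ ∀ x, v x = ⊤ → -(U : ℤ) ≤ t'.2.1 x)
    {w : List (SccE V C)} : ∀ {p q : {q // q ∈ C}} (_ : (sccNet V C v).Walk p w q)
    (y : Fin d → ℕ) (_ : ∀ x : {x // v x ≠ ⊤}, (sccNet V C v).safe x (y x.1 : ℤ) w)
    (_ : ∀ x, v x = ⊤ → U * w.length ≤ y x),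
    ∃ z : Fin d → ℕ, A.Reach (φ p.1, y) (φ q.1, z) ∧
      (∀ x : {x // v x ≠ ⊤}, (z x.1 : ℤ) = y x.1 + (sccNet V C v).eff w x) ∧
      ∀ x, v x = ⊤ → y x ≤ z x + U * w.length := by
  induction w with
  | nil =>
    intro p q hw y _ _
    cases hw
    exact ⟨y, Relation.ReflTransGen.refl, fun x => by simp [Net.eff], fun x _ => by simp⟩
  | cons t w ih =>
    intro p q hw y hs hU
    obtain ⟨t', ht', h1, h2, h3, h4⟩ := hE t
    have hy : ∀ x, 0 ≤ (y x : ℤ) + t'.2.1 x := by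
      intro x
      by_cases hx : v x = ⊤
      · have h5 := hU x hx
        have h6 := h4 x hx
        simp only [List.length_cons, mul_add, mul_one] at h5
        have : U ≤ y x := le_trans (Nat.le_add_left _ _) h5
        zify at this
        linarith
      · rw [h3 x hx]
        exact (hs ⟨x, hx⟩).2.nonneg
    let y' : Fin d → ℕ := fun x => ((y x : ℤ) + t'.2.1 x).toNat
    have hy' : ∀ x, (y' x : ℤ) = (y x : ℤ) + t'.2.1 x := fun x => Int.toNat_of_nonneg (hy x)
    obtain ⟨z, hz1, hz2, hz3⟩ := ih hw.2 y' (fun x => by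
        rw [hy', h3 x.1 x.2]; exact (hs x).2) (fun x hx => by
        have h5 := hU x hx
        have h6 := h4 x hx
        have h7 := hy' x
        simp only [List.length_cons, mul_add, mul_one] at h5
        zify at h5 ⊢
        linarith)
    refine ⟨z, Relation.ReflTransGen.head ⟨t', ⟨ht', ?_, hy⟩, ?_⟩ hz1, fun x => ?_, fun x hx => ?_⟩
    · rw [h1]; exact congrArg (fun r : {q // q ∈ C} => φ r.1) hw.1
    · unfold VASS.applyT; rw [h2]; rfl
    · rw [hz2, hy', h3 x.1 x.2, Net.eff_cons]
      simp only [sccNet]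
      ring
    · have h5 := hz3 x hx
      have h6 := h4 x hx
      have h7 := hy' x
      simp only [List.length_cons, mul_add, mul_one]
      zify at h5 ⊢
      linarith

theorem modInf_demonic {V : VASS d} (hD : V.demonic) (C : Set V.Q) (v : Fin d → ℕ∞) :
    ((V.restrictTo C).modInf v).demonic := hD

theorem BigTheta_exp_unique {f : ℕ → ℕ∞} {a b : ℕ} (ha : BigTheta f (fun n => n ^ a))
    (hb : BigTheta f (fun n => n ^ b)) : a = b :=
  le_antisymm (exp_le_of_BigO_BigOmega hb.1 ha.2) (exp_le_of_BigO_BigOmega ha.1 hb.2)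

/-- The facts about `Vfun` of a component used for paths. It is inflationary; it bounds the
computations inside `C` from above; and, for each `K`, the counters can be pumped simultaneously
to their exponents, cut off at `K`, if the counters infinite in `v` start at `n ^ (K + 1)` or
more, which outweighs their loss along a computation of length `O(n ^ K)`. -/
theorem scc_core {V : VASS d} (hD : V.demonic) {C : Set V.Q} (hC : IsSCC V C)
    {v : Fin d → ℕ∞} (hv : ∀ x, 1 ≤ v x) :
    (∀ x, v x ≤ Vfun (V.restrictTo C) v x) ∧
    (∀ x (k : ℕ), Vfun (V.restrictTo C) v x = k → ∃ B : ℕ, ∀ n : ℕ, 1 ≤ n →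
      ∀ c c' : V.Config, c.1 ∈ C → (∀ x (j : ℕ), v x = j → c.2 x ≤ n ^ j) →
        Relation.ReflTransGen (V.StepIn C) c c' → c'.2 x ≤ B * n ^ k) ∧
    ∀ K : ℕ, ∃ b N₀ : ℕ, ∀ n ≥ N₀, ∀ p ∈ C, ∀ y : Fin d → ℕ,
      (∀ x (j : ℕ), v x = j → n ^ j ≤ y x) → (∀ x, v x = ⊤ → n ^ (K + 1) ≤ y x) →
      ∃ z, V.Reach (p, y) (p, z) ∧
        ∀ x (k : ℕ), k ≤ K → (k : ℕ∞) ≤ Vfun (V.restrictTo C) v x → n ^ k ≤ b * z x := by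
  have hvN : ∀ x, 1 ≤ (sccNet V C v).v x := by
    rintro ⟨x, hx⟩
    have := hv x
    lift v x to ℕ using hx with m hm
    simp only [sccNet, ← hm]
    exact_mod_cast this
  have hvx : ∀ x (hx : v x ≠ ⊤), ((sccNet V C v).v ⟨x, hx⟩ : ℕ∞) = v x := fun x hx =>
    ENat.natCast_toNat hx
  obtain ⟨ω, hω1, hω2, hω3⟩ := Net.core hvN (sccNet_conn hC v)
  -- the exponents of the net are those of `Vfun`
  have hfin : ∀ x (hx : v x ≠ ⊤), Vfun (V.restrictTo C) v x = ω ⟨x, hx⟩ := by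
    intro x hx
    have htr : ∀ x (hx : v x ≠ ⊤), vTrunc v x = (sccNet V C v).v ⟨x, hx⟩ := fun x hx => by
      simp [vTrunc, hx, sccNet]
    have hO : ∀ k : ℕ, ω ⟨x, hx⟩ = k →
        BigO (CInf (V.restrictTo C) x v) (fun n => n ^ k) := by
      intro k hk
      obtain ⟨B, hB⟩ := hω2 ⟨x, hx⟩ k hk
      have hvk : (sccNet V C v).v ⟨x, hx⟩ ≤ k := by
        have := hω1 ⟨x, hx⟩
        rw [hk] at this
        exact_mod_cast this
      refine ⟨B + 1, 1, fun n hn => iSup_le fun p => Cval_le _ fun c' hr => ?_⟩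
      have hr' : Relation.ReflTransGen (finStep V C v) (p, fun i => n ^ vTrunc v i) c' :=
        Relation.ReflTransGen.lift (p := finStep V C v) id (fun _ _ h => finStep_of_modInf h) _ _ hr
      have hle : c'.2 x ≤ (B + 1) * n ^ k := by
        by_cases hp : p ∈ C
        · obtain ⟨hc', w, hw⟩ := run_of_finStep hp hr'
          have h1 := hB n hn _ _ _ _ _ (fun x => ⟨by positivity, by
            dsimp only; rw [htr x.1 x.2]; push_cast; exact le_rfl⟩) hw
          dsimp only at h1
          have h2 : c'.2 x ≤ B * n ^ k := by exact_mod_cast h1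
          exact h2.trans (Nat.mul_le_mul_right _ (Nat.le_succ B))
        · rcases Relation.ReflTransGen.cases_head hr' with h | ⟨c'', ⟨t, ht, h1, -⟩, -⟩
          · rw [← h]
            dsimp only
            rw [htr x hx]
            calc n ^ (sccNet V C v).v ⟨x, hx⟩ ≤ n ^ k := Nat.pow_le_pow_right hn hvk
              _ ≤ _ := Nat.le_mul_of_pos_left _ (Nat.succ_pos B)
          · have h2 := (Finset.mem_filter.1 ht).2.1
            rw [h1] at h2
            exact absurd h2 hp
      exact_mod_cast hle
    have hΩ : ∀ k : ℕ, (k : ℕ∞) ≤ ω ⟨x, hx⟩ →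
        BigOmega (CInf (V.restrictTo C) x v) (fun n => n ^ k) := by
      intro k hk
      obtain ⟨b, N₀, hb⟩ := hω3 k
      have hCne : ∃ p, p ∈ C := by
        obtain ⟨r, rfl⟩ := hC
        exact ⟨r, Relation.ReflTransGen.refl, Relation.ReflTransGen.refl⟩
      obtain ⟨p, hp⟩ := hCne
      refine ⟨b + 1, N₀, Nat.succ_pos b, fun n hn => ?_⟩
      obtain ⟨w, hw1, -, hw3⟩ := hb n hn ⟨p, hp⟩
      obtain ⟨z, hz1, hz2, -⟩ := walk_reach (V := V) (C := C) (v := v)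
        ((V.restrictTo C).modInf v) (fun q : V.Q => q) 0
        (fun t => ⟨(t.1.1, (fun i => if v i = ⊤ then 0 else t.1.2.1 i), t.1.2.2),
          Finset.mem_image.2 ⟨t.1, t.2, rfl⟩, rfl, rfl, fun x hx => if_neg hx,
          fun x hx => by simp [hx]⟩) hw1 (fun i => n ^ vTrunc v i)
        (fun x => by
          rw [htr x.1 x.2]; push_cast; exact (hw3 x).1) (fun x _ => by simp)
      have h1 := le_Cval (modInf_demonic hD C v) x hz1
      have h2 : Cval ((V.restrictTo C).modInf v) x (p, fun i => n ^ vTrunc v i) ≤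
          CInf (V.restrictTo C) x v n :=
        le_iSup (fun p : V.Q => Cval ((V.restrictTo C).modInf v) x (p, fun i => n ^ vTrunc v i)) p
      have h3 := (hw3 ⟨x, hx⟩).2 k le_rfl hk
      have h4 := hz2 ⟨x, hx⟩
      dsimp only at h4 h1
      rw [htr x hx] at h4
      push_cast at h4
      rw [← h4] at h3
      have h5 : n ^ k ≤ (b + 1) * z x := by
        have : n ^ k ≤ b * z x := by exact_mod_cast h3
        exact this.trans (Nat.mul_le_mul_right _ (Nat.le_succ b))
      calc ((n ^ k : ℕ) : ℕ∞) ≤ (((b + 1) * z x : ℕ) : ℕ∞) := by exact_mod_cast h5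
        _ = ((b + 1 : ℕ) : ℕ∞) * (z x : ℕ∞) := by push_cast; ring
        _ ≤ _ := by gcongr; exact h1.trans h2
    cases hωx : ω ⟨x, hx⟩ using ENat.recTopCoe with
    | top =>
      unfold Vfun
      rw [dif_neg]
      rintro ⟨-, k, hk⟩
      have := exp_le_of_BigO_BigOmega hk.1 (hΩ (k + 1) (by rw [hωx]; exact le_top))
      omega
    | coe k =>
      have hθ : BigTheta (CInf (V.restrictTo C) x v) (fun n => n ^ k) :=
        ⟨hO k hωx, hΩ k (by rw [hωx])⟩
      have hex : v x ≠ ⊤ ∧ ∃ k : ℕ, BigTheta (CInf (V.restrictTo C) x v) (fun n => n ^ k) :=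
        ⟨hx, k, hθ⟩
      unfold Vfun
      rw [dif_pos hex]
      exact congrArg _ (BigTheta_exp_unique hex.2.choose_spec hθ)
  have hinf : ∀ x, v x = ⊤ → Vfun (V.restrictTo C) v x = ⊤ := fun x hx =>
    dif_neg fun h => h.1 hx
  refine ⟨fun x => ?_, fun x k hk => ?_, fun K => ?_⟩
  · by_cases hx : v x = ⊤
    · rw [hinf x hx]; exact le_top
    · rw [hfin x hx, ← hvx x hx]; exact hω1 _
  · have hx : v x ≠ ⊤ := fun hx => by
      rw [hinf x hx] at hk
      exact ENat.natCast_ne_top k hk.symm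
    rw [hfin x hx] at hk
    obtain ⟨B, hB⟩ := hω2 _ k hk
    refine ⟨B, fun n hn c c' hc hst hr => ?_⟩
    obtain ⟨hc', w, hw⟩ := run_of_finStep hc
      (Relation.ReflTransGen.lift (p := finStep V C v) id (fun _ _ h => finStep_of_StepIn v h)
        _ _ hr)
    have := hB n hn _ _ _ _ _ (fun x => ⟨by positivity, by
      exact_mod_cast hst x.1 _ (hvx x.1 x.2).symm⟩) hw
    exact_mod_cast this
  · obtain ⟨b, N₀, hb⟩ := hω3 K
    obtain ⟨U, hU⟩ := V.exists_U
    refine ⟨b + 1, max N₀ (U * b + 1), fun n hn p hp y hy hyt => ?_⟩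
    have hn2 : U * b + 1 ≤ n := (le_max_right _ _).trans hn
    obtain ⟨w, hw1, hw2, hw3⟩ := hb n ((le_max_left _ _).trans hn) ⟨p, hp⟩
    have hlen : U * w.length + n ^ K ≤ n ^ (K + 1) := by
      calc U * w.length + n ^ K ≤ U * (b * n ^ K) + n ^ K := by gcongr
        _ = (U * b + 1) * n ^ K := by ring
        _ ≤ n * n ^ K := Nat.mul_le_mul_right _ hn2
        _ = _ := by ring
    have hyf : ∀ x : {x // v x ≠ ⊤}, ((n : ℤ) ^ (sccNet V C v).v x) ≤ y x.1 := fun x => by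
      exact_mod_cast hy x.1 _ (hvx x.1 x.2).symm
    obtain ⟨z, hz1, hz2, hz3⟩ := walk_reach (v := v) V (fun q => q) U
      (fun t => ⟨t.1, (Finset.mem_filter.1 t.2).1, rfl, rfl, fun _ _ => rfl,
        fun x _ => (abs_le.1 (hU t.1 (Finset.mem_filter.1 t.2).1 x)).1⟩) hw1 y
      (fun x => (hw3 x).1.mono (hyf x)) (fun x hx => by
        have := hyt x hx; omega)
    refine ⟨z, hz1, fun x k hkK hk => ?_⟩
    by_cases hx : v x = ⊤
    · have h1 := hz3 x hx
      have h2 := hyt x hx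
      have h3 : n ^ k ≤ n ^ K := Nat.pow_le_pow_right (by omega) hkK
      calc n ^ k ≤ z x := by omega
        _ ≤ _ := Nat.le_mul_of_pos_left _ (Nat.succ_pos b)
    · rw [hfin x hx] at hk
      have h1 := (hw3 ⟨x, hx⟩).2 k hkK hk
      have h2 := hz2 ⟨x, hx⟩
      have h3 := hyf ⟨x, hx⟩
      dsimp only at h2 h3
      have h4 : (n : ℤ) ^ k ≤ b * z x := by
        refine h1.trans (mul_le_mul_of_nonneg_left ?_ (by positivity))
        linarith
      have h5 : n ^ k ≤ b * z x := by exact_mod_cast h4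
      exact h5.trans (Nat.mul_le_mul_right _ (Nat.le_succ b))

/-! ### Paths in the DAG of components -/

/-- `RPath V C r`: the list `C :: r`, read from its end to its head, is a path in `D(A)` from a
root to `C`.  Storing the last component first makes the recursion of `pathVec` structural. -/
inductive RPath (V : VASS d) : Set V.Q → List (Set V.Q) → Prop
  | root {C : Set V.Q} : IsRootSCC V C → RPath V C []
  | step {C C' : Set V.Q} {r : List (Set V.Q)} :
      RPath V C r → IsSCC V C' → sccEdge V C C' → RPath V C' (C :: r)

/-- The vector `v_m` attached to the reversed path `C :: r`. -/
def rvec (V : VASS d) (C : Set V.Q) (r : List (Set V.Q)) : Fin d → ℕ∞ :=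
  pathVec V (C :: r).reverse

theorem rvec_nil (V : VASS d) (C : Set V.Q) :
    rvec V C [] = Vfun (V.restrictTo C) fun _ => 1 := by
  simp [rvec, pathVec]

theorem rvec_cons (V : VASS d) (C' C : Set V.Q) (r : List (Set V.Q)) :
    rvec V C' (C :: r) = Vfun (V.restrictTo C') (rvec V C r) := by
  simp [rvec, pathVec]

theorem RPath.isSCC {V : VASS d} {C : Set V.Q} {r : List (Set V.Q)} (h : RPath V C r) :
    IsSCC V C := by
  cases h with
  | root h => exact h.1
  | step _ h _ => exact h

theorem RPath.isRooted {V : VASS d} {C : Set V.Q} {r : List (Set V.Q)} (h : RPath V C r) :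
    IsRootedSCCPath V (C :: r).reverse := by
  induction h with
  | @root C h =>
    refine ⟨by simpa using h.1, ?_, C, [], rfl, h⟩
    exact List.isChain_singleton C
  | @step C C' r hr hC' he ih =>
    obtain ⟨h1, h2, C₀, rest, h3, h4⟩ := ih
    refine ⟨?_, ?_, C₀, rest ++ [C'], ?_, h4⟩
    · intro D hD
      rw [List.reverse_cons, List.mem_append, List.mem_singleton] at hD
      rcases hD with hD | rfl
      · exact h1 D hD
      · exact hC'
    · have h2' : List.IsChain (sccEdge V) (C :: r).reverse := h2
      rw [List.isChain_reverse] at h2'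
      have : List.IsChain (sccEdge V) (C' :: C :: r).reverse := by
        rw [List.isChain_reverse]
        exact List.isChain_cons_cons.2 ⟨he, h2'⟩
      exact this
    · rw [List.reverse_cons, h3]; rfl

theorem exists_rpath_of_isRooted {V : VASS d} {l : List (Set V.Q)}
    (h : IsRootedSCCPath V l) : ∃ C r, l = (C :: r).reverse ∧ RPath V C r := by
  obtain ⟨h1, h2, h3⟩ := h
  replace h2 : List.IsChain (sccEdge V) l := h2
  obtain ⟨l, rfl⟩ : ∃ m, l = List.reverse m := ⟨l.reverse, by simp⟩
  rw [List.isChain_reverse] at h2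
  induction l with
  | nil => obtain ⟨C₀, rest, h, -⟩ := h3; simp at h
  | cons C' l ih =>
    cases l with
    | nil =>
      obtain ⟨C₀, rest, h, h4⟩ := h3
      simp at h
      exact ⟨C', [], rfl, RPath.root (h.1 ▸ h4)⟩
    | cons C r =>
      obtain ⟨he, h2'⟩ := List.isChain_cons_cons.1 h2
      obtain ⟨D, s, hDs, hp⟩ := ih (fun D hD => h1 D (by
          rw [List.reverse_cons]; exact List.mem_append_left _ hD))
        (by
          obtain ⟨C₀, rest, h, h4⟩ := h3
          rw [List.reverse_cons] at h
          cases hl : (C :: r).reverse with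
          | nil => simp at hl
          | cons E t =>
            rw [hl] at h
            simp only [List.cons_append, List.cons.injEq] at h
            exact ⟨E, t, rfl, h.1 ▸ h4⟩) h2'
      have := List.reverse_injective hDs
      obtain ⟨rfl, rfl⟩ := List.cons.inj this
      exact ⟨C', C :: r, rfl, RPath.step hp (h1 C' (by simp)) he⟩

theorem RPath.one_le_rvec {V : VASS d} (hD : V.demonic) {C : Set V.Q} {r : List (Set V.Q)}
    (h : RPath V C r) : ∀ x, 1 ≤ rvec V C r x := by
  induction h with
  | root h =>
    intro x
    rw [rvec_nil]
    exact (scc_core hD h.1 (v := fun _ => 1) fun _ => le_rfl).1 x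
  | step hr hC' _ ih =>
    intro x
    rw [rvec_cons]
    exact (ih x).trans ((scc_core hD hC' ih).1 x)

/-! ### Cheap walks and monotonicity -/

theorem step_of_edge (V : VASS d) : ∃ U : ℕ,
    (∀ p q, V.edgeRel p q → ∀ y : Fin d → ℕ, (∀ x, U ≤ y x) →
      ∃ z, V.Step (p, y) (q, z) ∧ ∀ x, y x ≤ z x + U) ∧
    ∀ c c' : V.Config, V.Step c c' → ∀ x, c'.2 x ≤ c.2 x + U := by
  obtain ⟨U, hU⟩ := V.exists_U
  refine ⟨U, fun p q ⟨u, hu⟩ y hy => ?_, ?_⟩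
  · have h0 : ∀ x, 0 ≤ (y x : ℤ) + u x := fun x => by
      have h1 := (abs_le.1 (hU _ hu x)).1
      have h2 := hy x
      dsimp only at h1
      omega
    refine ⟨fun x => ((y x : ℤ) + u x).toNat, ⟨(p, u, q), ⟨hu, rfl, h0⟩, rfl⟩, fun x => ?_⟩
    have h1 := (abs_le.1 (hU _ hu x)).1
    dsimp only at h1 ⊢
    omega
  · rintro c c' ⟨t, ⟨ht, -, h0⟩, rfl⟩ x
    have h1 := (abs_le.1 (hU _ ht x)).2
    have h2 := h0 x
    simp only [VASS.applyT]
    omega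

/-- Between any two connected states one can walk at a bounded loss in every counter. -/
theorem exists_walk_cost (V : VASS d) : ∃ B : ℕ, ∀ p q, Relation.ReflTransGen V.edgeRel p q →
    ∀ y : Fin d → ℕ, (∀ x, B ≤ y x) → ∃ z, V.Reach (p, y) (q, z) ∧ ∀ x, y x ≤ z x + B := by
  obtain ⟨U, hU, -⟩ := step_of_edge V
  have hpair : ∀ a : V.Q × V.Q, ∃ B : ℕ, Relation.ReflTransGen V.edgeRel a.1 a.2 →
      ∀ y : Fin d → ℕ, (∀ x, B ≤ y x) →
        ∃ z, V.Reach (a.1, y) (a.2, z) ∧ ∀ x, y x ≤ z x + B := by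
    rintro ⟨p, q⟩
    by_cases hpq : Relation.ReflTransGen V.edgeRel p q
    · suffices h : ∃ B : ℕ, ∀ y : Fin d → ℕ, (∀ x, B ≤ y x) →
          ∃ z, V.Reach (p, y) (q, z) ∧ ∀ x, y x ≤ z x + B from
        h.imp fun B hB _ => hB
      induction hpq with
      | refl => exact ⟨0, fun y _ => ⟨y, Relation.ReflTransGen.refl, fun x => le_rfl⟩⟩
      | tail _ he ih =>
        obtain ⟨B, hB⟩ := ih
        refine ⟨B + U, fun y hy => ?_⟩
        obtain ⟨z, hz1, hz2⟩ := hB y fun x => (Nat.le_add_right _ _).trans (hy x)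
        obtain ⟨z', hz3, hz4⟩ := hU _ _ he z fun x => by
          have := hy x; have := hz2 x; omega
        exact ⟨z', hz1.tail hz3, fun x => by have := hz2 x; have := hz4 x; omega⟩
    · exact ⟨0, fun h => absurd h hpq⟩
  choose B hB using hpair
  refine ⟨∑ a, B a, fun p q hpq y hy => ?_⟩
  have hle : B (p, q) ≤ ∑ a, B a :=
    Finset.single_le_sum (fun _ _ => Nat.zero_le _) (Finset.mem_univ (p, q))
  obtain ⟨z, hz1, hz2⟩ := hB (p, q) hpq y fun x => hle.trans (hy x)
  exact ⟨z, hz1, fun x => (hz2 x).trans (Nat.add_le_add_left hle _)⟩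

theorem reach_mono {V : VASS d} {c c' : V.Config} (h : V.Reach c c') {y : Fin d → ℕ}
    (hy : ∀ x, c.2 x ≤ y x) : ∃ z, V.Reach (c.1, y) (c'.1, z) ∧ ∀ x, c'.2 x ≤ z x := by
  induction h with
  | refl => exact ⟨y, Relation.ReflTransGen.refl, hy⟩
  | @tail b c' _ hs ih =>
    obtain ⟨z, hz1, hz2⟩ := ih
    obtain ⟨t, ⟨ht, hb, h0⟩, rfl⟩ := hs
    refine ⟨fun x => ((z x : ℤ) + t.2.1 x).toNat,
      hz1.tail ⟨t, ⟨ht, hb, fun x => ?_⟩, rfl⟩, fun x => ?_⟩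
    · have h1 := h0 x
      have h2 := hz2 x
      dsimp only
      omega
    · have h2 := hz2 x
      simp only [VASS.applyT]
      omega

/-! ### Lower bound along a path -/

theorem IsSCC.reach {V : VASS d} {C : Set V.Q} (hC : IsSCC V C) {p q : V.Q} (hp : p ∈ C)
    (hq : q ∈ C) : Relation.ReflTransGen V.edgeRel p q := by
  obtain ⟨r, rfl⟩ := hC
  exact hp.2.trans hq.1

theorem IsSCC.nonempty {V : VASS d} {C : Set V.Q} (hC : IsSCC V C) : ∃ p, p ∈ C := by
  obtain ⟨r, rfl⟩ := hC
  exact ⟨r, Relation.ReflTransGen.refl, Relation.ReflTransGen.refl⟩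

/-- Every counter can be pumped to its path exponent (cut off at `K`), all counters at once, and
the computation can be made to end in any state of the last component.  Between two components
the scale `n` is divided by a constant, which absorbs the constants lost so far and the cost of
the connecting walk. -/
theorem RPath.lower {V : VASS d} (hD : V.demonic) {C : Set V.Q} {r : List (Set V.Q)}
    (h : RPath V C r) : ∀ K : ℕ, ∃ c N₀ : ℕ, ∀ n ≥ N₀, ∀ q ∈ C, ∃ p y,
      V.Reach (p, fun _ => n) (q, y) ∧
      ∀ x (k : ℕ), k ≤ K → (k : ℕ∞) ≤ rvec V C r x → n ^ k ≤ c * y x := by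
  induction h with
  | @root C h =>
    intro K
    obtain ⟨-, -, h3⟩ := scc_core hD h.1 (v := fun _ => 1) fun _ => le_rfl
    obtain ⟨b, N₀, hb⟩ := h3 K
    refine ⟨b, N₀, fun n hn q hq => ?_⟩
    obtain ⟨z, hz1, hz2⟩ := hb n hn q hq (fun _ => n) (fun x j hj => by
      have : j = 1 := by exact_mod_cast hj.symm
      subst this
      simp) (fun x hx => absurd hx (by simp))
    refine ⟨q, z, hz1, ?_⟩
    rw [rvec_nil]
    exact hz2
  | @step C C' r hr hC' he ih =>
    intro K
    have hw1 := hr.one_le_rvec hD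
    obtain ⟨-, -, h3⟩ := scc_core hD hC' hw1
    obtain ⟨b, N₁, hb⟩ := h3 K
    obtain ⟨B, hB⟩ := exists_walk_cost V
    obtain ⟨c, N₀, hc⟩ := ih (K + 1 + ∑ x, (rvec V C r x).toNat)
    set M : ℕ := 2 * (c + 1) with hM
    obtain ⟨-, a, ha, a', ha', hedge⟩ := he
    refine ⟨(2 * M) ^ K * b, N₀ + M * (N₁ + B + 1), fun n hn q hq => ?_⟩
    obtain ⟨p, y, hy1, hy2⟩ := hc n (by omega) a ha
    set n' := n / M with hn'
    have hMpos : 0 < M := by omega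
    have hn'1 : N₁ + B + 1 ≤ n' := by
      rw [hn', Nat.le_div_iff_mul_le hMpos]
      nlinarith
    have hMn : M * n' ≤ n := Nat.mul_div_le n M
    have hnM : n ≤ 2 * M * n' := by
      have h1 : n < M * (n' + 1) := by
        rw [hn']; exact Nat.lt_mul_div_succ n hMpos
      have h2 : M ≤ M * n' := Nat.le_mul_of_pos_right _ (by omega)
      nlinarith
    have hkey : ∀ x (k : ℕ), 1 ≤ k → k ≤ K + 1 + ∑ x, (rvec V C r x).toNat →
        (k : ℕ∞) ≤ rvec V C r x → n' ^ k + B ≤ y x := by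
      intro x k hk1 hkK hk
      have h1 := hy2 x k hkK hk
      have h2 : B ≤ n' ^ k := (show B ≤ n' by omega).trans (Nat.le_self_pow (by omega) n')
      have h3 : M * n' ^ k ≤ n ^ k :=
        calc M * n' ^ k ≤ M ^ k * n' ^ k := Nat.mul_le_mul_right _ (Nat.le_self_pow (by omega) M)
          _ = (M * n') ^ k := (mul_pow _ _ _).symm
          _ ≤ _ := Nat.pow_le_pow_left hMn k
      have h4 : (c + 1) * (2 * n' ^ k) ≤ (c + 1) * y x := by
        calc (c + 1) * (2 * n' ^ k) = M * n' ^ k := by rw [hM]; ring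
          _ ≤ c * y x := h3.trans h1
          _ ≤ _ := Nat.mul_le_mul_right _ (Nat.le_succ c)
      have h5 := Nat.le_of_mul_le_mul_left h4 (Nat.succ_pos c)
      omega
    have hyB : ∀ x, B ≤ y x := fun x => by
      have := hkey x 1 le_rfl (by omega) (by exact_mod_cast hw1 x)
      omega
    obtain ⟨z, hz1, hz2⟩ := hB a q ((hC'.reach ha' hq).head hedge) y hyB
    obtain ⟨z', hz3, hz4⟩ := hb n' (by omega) q hq z
      (fun x j hj => by
        have hj1 : 1 ≤ j := by have := hw1 x; rw [hj] at this; exact_mod_cast this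
        have hjK : j ≤ ∑ x, (rvec V C r x).toNat := by
          have := Finset.single_le_sum (f := fun x => (rvec V C r x).toNat)
            (fun _ _ => Nat.zero_le _) (Finset.mem_univ x)
          simpa [hj] using this
        have := hkey x j hj1 (by omega) hj.ge
        have := hz2 x
        omega)
      (fun x hx => by
        have := hkey x (K + 1) (by omega) (by omega) (by rw [hx]; exact le_top)
        have := hz2 x
        omega)
    refine ⟨p, z', (hy1.trans hz1).trans hz3, fun x k hkK hk => ?_⟩
    rw [rvec_cons] at hk
    calc n ^ k ≤ (2 * M * n') ^ k := Nat.pow_le_pow_left hnM k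
      _ = (2 * M) ^ k * n' ^ k := mul_pow _ _ _
      _ ≤ (2 * M) ^ K * (b * z' x) :=
        Nat.mul_le_mul (Nat.pow_le_pow_right (by omega) hkK) (hz4 x k hkK hk)
      _ = _ := by ring

/-! ### Upper bound along a path -/

/-- `Thru c₀ C r c`: some computation from `c₀` to `c` traverses exactly the components of the
reversed path `C :: r`, in order. -/
inductive Thru {V : VASS d} (c₀ : V.Config) : Set V.Q → List (Set V.Q) → V.Config → Prop
  | root {C : Set V.Q} {c : V.Config} :
      c₀.1 ∈ C → Relation.ReflTransGen (V.StepIn C) c₀ c → Thru c₀ C [] c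
  | step {C C' : Set V.Q} {r : List (Set V.Q)} {c₁ c₂ c : V.Config} :
      Thru c₀ C r c₁ → V.Step c₁ c₂ → c₂.1 ∈ C' →
        Relation.ReflTransGen (V.StepIn C') c₂ c → Thru c₀ C' (C :: r) c

theorem Thru.tail {V : VASS d} {c₀ c c' : V.Config} {C : Set V.Q} {r : List (Set V.Q)}
    (h : Thru c₀ C r c) (hs : V.StepIn C c c') : Thru c₀ C r c' := by
  cases h with
  | root h1 h2 => exact Thru.root h1 (h2.tail hs)
  | step h1 h2 h3 h4 => exact Thru.step h1 h2 h3 (h4.tail hs)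

/-- A computation that traverses the components of a path cannot exceed the path exponents: by
induction, the counters enter the last component at `O(n ^ v)`, and its bound applies at a scale
larger by a constant factor. -/
theorem RPath.upper {V : VASS d} (hD : V.demonic) {C : Set V.Q} {r : List (Set V.Q)}
    (h : RPath V C r) : ∀ x (k : ℕ), rvec V C r x = k → ∃ B : ℕ, ∀ n : ℕ, 1 ≤ n →
      ∀ c₀ c : V.Config, (∀ x, c₀.2 x ≤ n) → Thru c₀ C r c → c.2 x ≤ B * n ^ k := by
  induction h with
  | @root C h =>
    intro x k hk
    obtain ⟨-, h2, -⟩ := scc_core hD h.1 (v := fun _ => 1) fun _ => le_rfl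
    rw [rvec_nil] at hk
    obtain ⟨B, hB⟩ := h2 x k hk
    refine ⟨B, fun n hn c₀ c hc₀ ht => ?_⟩
    cases ht with
    | root h3 h4 =>
      refine hB n hn c₀ c h3 (fun x j hj => ?_) h4
      have : j = 1 := by exact_mod_cast hj.symm
      subst this
      simpa using hc₀ x
  | @step C C' r hr hC' he ih =>
    intro x k hk
    have hw1 := hr.one_le_rvec hD
    obtain ⟨-, h2, -⟩ := scc_core hD hC' hw1
    rw [rvec_cons] at hk
    obtain ⟨B, hB⟩ := h2 x k hk
    obtain ⟨U, -, hU⟩ := step_of_edge V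
    have ih' : ∀ x, ∃ B : ℕ, ∀ k : ℕ, rvec V C r x = k → ∀ n : ℕ, 1 ≤ n →
        ∀ c₀ c : V.Config, (∀ x, c₀.2 x ≤ n) → Thru c₀ C r c → c.2 x ≤ B * n ^ k := by
      intro x
      by_cases hx : ∃ k : ℕ, rvec V C r x = k
      · obtain ⟨k, hk⟩ := hx
        obtain ⟨B, hB⟩ := ih x k hk
        refine ⟨B, fun k' hk' => ?_⟩
        have : k' = k := by exact_mod_cast hk'.symm.trans hk
        exact this ▸ hB
      · exact ⟨0, fun k hk => absurd ⟨k, hk⟩ hx⟩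
    choose F hF using ih'
    set S : ℕ := ∑ x, F x + U + 1 with hS
    refine ⟨B * S ^ k, fun n hn c₀ c hc₀ ht => ?_⟩
    cases ht with
    | @step _ _ _ c₁ c₂ _ h3 h4 h5 h6 =>
      have hSn : 1 ≤ S * n := Nat.mul_pos (by omega) hn
      have := hB (S * n) hSn c₂ c h5 (fun x j hj => ?_) h6
      · calc c.2 x ≤ B * (S * n) ^ k := this
          _ = _ := by rw [mul_pow]; ring
      · have hj1 : 1 ≤ j := by have := hw1 x; rw [hj] at this; exact_mod_cast this
        have h7 := hF x j hj n hn c₀ c₁ hc₀ h3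
        have h8 := hU c₁ c₂ h4 x
        have h9 : F x ≤ ∑ x, F x :=
          Finset.single_le_sum (fun _ _ => Nat.zero_le _) (Finset.mem_univ x)
        have h10 : 1 ≤ n ^ j := Nat.one_le_pow _ _ hn
        calc c₂.2 x ≤ F x * n ^ j + U := by omega
          _ ≤ (∑ x, F x) * n ^ j + U * n ^ j :=
            Nat.add_le_add (Nat.mul_le_mul_right _ h9) (Nat.le_mul_of_pos_right _ h10)
          _ ≤ S * n ^ j := by rw [← add_mul]; exact Nat.mul_le_mul_right _ (by omega)
          _ ≤ S ^ j * n ^ j := Nat.mul_le_mul_right _ (Nat.le_self_pow (by omega) S)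
          _ = _ := (mul_pow _ _ _).symm

/-- A computation from a root component traverses the components of some path. -/
theorem exists_thru {V : VASS d} {c₀ c : V.Config} (hroot : IsRootSCC V (sccOf V c₀.1))
    (h : V.Reach c₀ c) : ∃ C r, RPath V C r ∧ Thru c₀ C r c ∧ c.1 ∈ C := by
  have hself : ∀ p : V.Q, p ∈ sccOf V p := fun p =>
    ⟨Relation.ReflTransGen.refl, Relation.ReflTransGen.refl⟩
  induction h with
  | refl =>
    exact ⟨_, [], RPath.root hroot, Thru.root (hself _) Relation.ReflTransGen.refl, hself _⟩
  | @tail c c' _ hs ih =>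
    obtain ⟨C, r, h1, h2, h3⟩ := ih
    by_cases hc' : c'.1 ∈ C
    · exact ⟨C, r, h1, h2.tail ⟨hs, h3, hc'⟩, hc'⟩
    · have hedge : V.edgeRel c.1 c'.1 := by
        obtain ⟨t, ⟨ht, h4, -⟩, rfl⟩ := hs
        exact ⟨t.2.1, by rw [← h4]; exact ht⟩
      refine ⟨sccOf V c'.1, C :: r, RPath.step h1 ⟨_, rfl⟩ ⟨?_, _, h3, _, hself _, hedge⟩,
        Thru.step h2 hs (hself _) Relation.ReflTransGen.refl, hself _⟩
      rintro rfl
      exact hc' (hself _)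

theorem IsSCC.eq_of_mutual {V : VASS d} {C C' : Set V.Q} (hC : IsSCC V C) (hC' : IsSCC V C')
    {p q : V.Q} (hp : p ∈ C) (hq : q ∈ C') (h1 : Relation.ReflTransGen V.edgeRel p q)
    (h2 : Relation.ReflTransGen V.edgeRel q p) : C = C' := by
  obtain ⟨a, rfl⟩ := hC
  obtain ⟨b, rfl⟩ := hC'
  have hab := (hp.1.trans h1).trans hq.2
  have hba := (hq.1.trans h2).trans hp.2
  ext x
  exact ⟨fun hx => ⟨hba.trans hx.1, hx.2.trans hab⟩, fun hx => ⟨hab.trans hx.1, hx.2.trans hba⟩⟩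

/-- A path in `D(A)` never repeats a component; hence there are only finitely many paths. -/
theorem RPath.nodup {V : VASS d} {C : Set V.Q} {r : List (Set V.Q)} (h : RPath V C r) :
    (C :: r).Nodup ∧ ∀ D ∈ C :: r, ∃ p ∈ D, ∃ q ∈ C, Relation.ReflTransGen V.edgeRel p q := by
  induction h with
  | @root C h =>
    obtain ⟨p, hp⟩ := h.1.nonempty
    exact ⟨List.nodup_singleton C, fun D hD => by
      rw [List.mem_singleton] at hD
      subst hD
      exact ⟨p, hp, p, hp, Relation.ReflTransGen.refl⟩⟩
  | @step C C' r hr hC' he ih =>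
    obtain ⟨ih1, ih2⟩ := ih
    obtain ⟨hne, a, ha, a', ha', hedge⟩ := he
    refine ⟨List.nodup_cons.2 ⟨fun hmem => ?_, ih1⟩, fun D hD => ?_⟩
    · obtain ⟨p, hp, q, hq, hpq⟩ := ih2 C' hmem
      exact hne (hr.isSCC.eq_of_mutual hC' ha ha' (.single hedge)
        (((hC'.reach ha' hp).trans hpq).trans (hr.isSCC.reach hq ha)))
    · rcases List.mem_cons.1 hD with rfl | hD
      · exact ⟨a', ha', a', ha', Relation.ReflTransGen.refl⟩
      · obtain ⟨p, hp, q, hq, hpq⟩ := ih2 D hD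
        exact ⟨p, hp, a', ha', (hpq.trans (hr.isSCC.reach hq ha)).tail hedge⟩

/-- Every state is reachable from a state of a root component: take an ancestor with the fewest
ancestors. -/
theorem exists_root (V : VASS d) (p : V.Q) :
    ∃ r, IsRootSCC V (sccOf V r) ∧ Relation.ReflTransGen V.edgeRel r p := by
  let anc : V.Q → Finset V.Q := fun q =>
    Finset.univ.filter fun a => Relation.ReflTransGen V.edgeRel a q
  have hanc : ∀ a q, a ∈ anc q ↔ Relation.ReflTransGen V.edgeRel a q := fun a q => by simp [anc]
  obtain ⟨r, hr, hmin⟩ := Finset.exists_min_image (anc p) (fun q => (anc q).card)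
    ⟨p, (hanc p p).2 Relation.ReflTransGen.refl⟩
  rw [hanc] at hr
  refine ⟨r, ⟨⟨r, rfl⟩, fun C' hC' ⟨hne, a, ha, b, hb, hab⟩ => hne ?_⟩, hr⟩
  have har : Relation.ReflTransGen V.edgeRel a r := hb.2.head hab
  have hsub : anc a ⊆ anc r := fun x hx => (hanc x r).2 (((hanc x a).1 hx).trans har)
  have heq : anc a = anc r :=
    Finset.eq_of_subset_of_card_le hsub (hmin a ((hanc a p).2 (har.trans hr)))
  have hra : Relation.ReflTransGen V.edgeRel r a :=
    (hanc r a).1 (heq ▸ (hanc r r).2 Relation.ReflTransGen.refl)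
  exact hC'.eq_of_mutual ⟨r, rfl⟩ ha ⟨Relation.ReflTransGen.refl, Relation.ReflTransGen.refl⟩
    har hra

/-- There are finitely many paths, so one constant serves all of them. A computation that starts
outside the root components is compared with one that first walks there from a root, at a bounded
cost. -/
theorem bigO_of_paths {V : VASS d} (hD : V.demonic) (i : Fin d) (k : ℕ)
    (h : ∀ C r, RPath V C r → rvec V C r i ≤ k) : BigO (Ccomp V i) fun n => n ^ k := by
  have hpath : ∀ l : {l : List (Set V.Q) // l.Nodup}, ∃ B : ℕ, ∀ C r, l.1 = C :: r →
      RPath V C r → ∀ n : ℕ, 1 ≤ n → ∀ c₀ c : V.Config, (∀ x, c₀.2 x ≤ n) →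
        Thru c₀ C r c → c.2 i ≤ B * n ^ k := by
    rintro ⟨l, hl⟩
    by_cases hex : ∃ C r, l = C :: r ∧ RPath V C r
    · obtain ⟨C, r, rfl, hp⟩ := hex
      have hle := h C r hp
      obtain ⟨k', hk'⟩ := ENat.ne_top_iff_exists.1 (ne_top_of_le_ne_top (ENat.natCast_ne_top k) hle)
      have hkk : k' ≤ k := by rw [← hk'] at hle; exact_mod_cast hle
      obtain ⟨B, hB⟩ := hp.upper hD i k' hk'.symm
      refine ⟨B, fun C' r' he _ n hn c₀ c hc₀ ht => ?_⟩
      obtain ⟨rfl, rfl⟩ := List.cons.inj he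
      exact (hB n hn c₀ c hc₀ ht).trans (Nat.mul_le_mul_left _ (Nat.pow_le_pow_right hn hkk))
    · exact ⟨0, fun C r he hp => absurd ⟨C, r, he, hp⟩ hex⟩
  choose F hF using hpath
  have hfin : Fintype {l : List (Set V.Q) // l.Nodup} := fintypeNodupList
  obtain ⟨B, hB⟩ := exists_walk_cost V
  refine ⟨(∑ l, F l) * (1 + B) ^ k, 1, fun n hn => iSup_le fun p => Cval_le _ fun c' hr => ?_⟩
  -- a start outside the roots is simulated by a start in a root with slightly larger counters
  obtain ⟨r, hroot, hrp⟩ := exists_root V p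
  obtain ⟨z, hz1, hz2⟩ := hB r p hrp (fun _ => n + B) fun _ => Nat.le_add_left _ _
  obtain ⟨z', hz3, hz4⟩ := reach_mono hr (y := z) fun x => by have := hz2 x; dsimp only; omega
  obtain ⟨C, s, h1, h2, -⟩ := exists_thru hroot (hz1.trans hz3)
  have h3 := hF ⟨C :: s, h1.nodup.1⟩ C s rfl h1 (n + B) (by omega) _ _ (fun _ => le_rfl) h2
  have h4 : F ⟨C :: s, h1.nodup.1⟩ ≤ ∑ l, F l :=
    Finset.single_le_sum (fun _ _ => Nat.zero_le _) (Finset.mem_univ _)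
  have h5 : n + B ≤ (1 + B) * n := by nlinarith
  have : c'.2 i ≤ (∑ l, F l) * (1 + B) ^ k * n ^ k :=
    calc c'.2 i ≤ z' i := hz4 i
      _ ≤ _ := h3
      _ ≤ (∑ l, F l) * ((1 + B) * n) ^ k := Nat.mul_le_mul h4 (Nat.pow_le_pow_left h5 k)
      _ = _ := by rw [mul_pow]; ring
  exact_mod_cast this

/-- The lower bound of `RPath.lower`, realised by Demon. -/
theorem bigOmega_of_path {V : VASS d} (hD : V.demonic) (i : Fin d) (k : ℕ) {C : Set V.Q}
    {r : List (Set V.Q)} (h : RPath V C r) (hk : (k : ℕ∞) ≤ rvec V C r i) :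
    BigOmega (Ccomp V i) fun n => n ^ k := by
  obtain ⟨c, N₀, hc⟩ := h.lower hD k
  obtain ⟨q, hq⟩ := h.isSCC.nonempty
  refine ⟨c + 1, N₀, Nat.succ_pos c, fun n hn => ?_⟩
  obtain ⟨p, y, hy1, hy2⟩ := hc n hn q hq
  have h1 : n ^ k ≤ (c + 1) * y i :=
    (hy2 i k le_rfl hk).trans (Nat.mul_le_mul_right _ (Nat.le_succ c))
  have h2 : (y i : ℕ∞) ≤ Ccomp V i n :=
    (le_Cval hD i hy1).trans (le_iSup (fun p : V.Q => Cval V i (p, fun _ => n)) p)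
  calc ((n ^ k : ℕ) : ℕ∞) ≤ (((c + 1) * y i : ℕ) : ℕ∞) := by exact_mod_cast h1
    _ = ((c + 1 : ℕ) : ℕ∞) * (y i : ℕ∞) := by push_cast; ring
    _ ≤ _ := by gcongr

/-- Let `A` be a demonic VASS.  For every counter `c_i` and every `k ∈ ℕ`:
`C_A[c_i] ∈ Ω(n^k)` iff there is a path `η_1,…,η_m` in `D(A)` from a root with
`v_m(i) ≥ k`; and `C_A[c_i] ∈ O(n^k)` iff for every path `η_1,…,η_m` in `D(A)` from a root,
`v_m(i) ≤ k`. -/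
theorem demonic_scc_path_characterization {d : ℕ} (V : VASS d) (hT : V.total)
    (hD : V.demonic) (i : Fin d) (k : ℕ) :
    (BigOmega (Ccomp V i) (fun n => n ^ k) ↔
      ∃ ηs : List (Set V.Q), IsRootedSCCPath V ηs ∧ (k : ℕ∞) ≤ pathVec V ηs i) ∧
    (BigO (Ccomp V i) (fun n => n ^ k) ↔
      ∀ ηs : List (Set V.Q), IsRootedSCCPath V ηs → pathVec V ηs i ≤ (k : ℕ∞)) := by
  refine ⟨⟨fun hΩ => ?_, ?_⟩, fun hO => ?_, fun h => ?_⟩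
  · by_contra! hlt
    cases k with
    | zero =>
      obtain ⟨r, hr, -⟩ := exists_root V (Classical.arbitrary V.Q)
      exact absurd (hlt _ (RPath.root hr).isRooted) (by simp)
    | succ k =>
      have := exp_le_of_BigO_BigOmega (bigO_of_paths hD i k fun C r hp => ?_) hΩ
      · omega
      · have := hlt _ hp.isRooted
        push_cast at this
        exact Order.le_of_lt_add_one this
  · rintro ⟨ηs, h1, h2⟩
    obtain ⟨C, r, rfl, hp⟩ := exists_rpath_of_isRooted h1
    exact bigOmega_of_path hD i k hp h2
  · intro ηs h1
    obtain ⟨C, r, rfl, hp⟩ := exists_rpath_of_isRooted h1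
    by_contra! hlt
    have := exp_le_of_BigO_BigOmega hO (bigOmega_of_path hD i (k + 1) hp (by
      push_cast
      exact Order.add_one_le_of_lt hlt))
    omega
  · exact bigO_of_paths hD i k fun C r hp => h _ hp.isRooted

end
end VassPaper
end

section
/- For every VASS game A, the locking decomposition G_A is acyclic, and the length of every path in G_A is at most |Q| + |Q_A|, with at most |Q| demonic vertices on any path. -/
/-! The order of a path in `G_A` is controlled by reachability through demonic states. Write
`a ⟶* b` in `A_L` when a path leads from `a` to `b` all of whose *sources* are demonic in `A_L`
(`SemiReach`; the target may be angelic). Locking a further state only turns an angelic state into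
a demonic one, so this relation can only grow along a path of `G_A`, and every state of an earlier
vertex of the path reaches every state of a later one.

Demonic vertices are counted by charging each of them to a state of its class, all charges being
distinct (`exists_charge`). When a demonic edge enters `[b]` from `[a]`, the state `b` is new: a
charged `b` would reach `a`, and then `[a] = [b]`. When the angelic state `p` is locked to
`(p,u,q)` and `[q]` is demonic, either `q` reaches `p`, so that `p ∈ [q]` and `p` can be charged
because it was angelic so far; or `q` does not reach `p`, and `q` is new because all
charged states reach `p`. Hence there are at most `|Q|` demonic vertices. An angelic vertex
`([p],L)` locks the unlocked angelic state `p`, so there are at most `|Q_A|` of these. Finally, a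
cycle would produce arbitrarily long paths. -/

open scoped Classical

namespace VassPaper

noncomputable section

variable {d : ℕ}

/-- A locking set: a set of transitions of `A` with angelic source states, containing at most
one outgoing transition per state. -/
def IsLockingSet {d : ℕ} (V : VASS d) (L : Finset (V.Q × (Fin d → ℤ) × V.Q)) : Prop :=
  (∀ t ∈ L, t ∈ V.Tran ∧ V.angelic t.1) ∧
  ∀ t ∈ L, ∀ t' ∈ L, t.1 = t'.1 → t = t'

/-- A state is locked by `L` if `L` contains one of its outgoing transitions. -/
def lockedBy {d : ℕ} {V : VASS d} (L : Finset (V.Q × (Fin d → ℤ) × V.Q)) (p : V.Q) : Prop :=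
  ∃ t ∈ L, t.1 = p

/-- The VASS game `A_L`: each state locked by `L` becomes demonic, with its transition in `L`
as its only outgoing transition. -/
def VASS.lock {d : ℕ} (V : VASS d) (L : Finset (V.Q × (Fin d → ℤ) × V.Q)) : VASS d :=
  { V with
    Tran := V.Tran.filter (fun t => ¬ lockedBy L t.1) ∪ L
    angelic := fun q => V.angelic q ∧ ¬ lockedBy L q }

/-- Reachability via a finite path leading only through demonic states. -/
def demReach {d : ℕ} (W : VASS d) (p q : W.Q) : Prop :=
  Relation.ReflTransGen (fun a b => ¬ W.angelic a ∧ ¬ W.angelic b ∧ W.edgeRel a b) p q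

/-- The equivalence underlying the demonic decomposition `D_A`: `p ~ q` iff `p = q`, or both
are demonic and mutually reachable via paths through demonic states. -/
def demEquiv {d : ℕ} (W : VASS d) (p q : W.Q) : Prop :=
  p = q ∨ (¬ W.angelic p ∧ ¬ W.angelic q ∧ demReach W p q ∧ demReach W q p)

/-- The vertex `[p]` of the demonic decomposition `D_W`. -/
def demClass {d : ℕ} (W : VASS d) (p : W.Q) : Set W.Q := {q | demEquiv W p q}

/-- The edges of the demonic decomposition `D_W`. -/
def DEdge {d : ℕ} (W : VASS d) (C C' : Set W.Q) : Prop :=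
  C ≠ C' ∧ ∃ p ∈ C, ∃ q ∈ C', W.edgeRel p q

/-- The vertices of the locking decomposition `G_A` of a VASS game `A` (defined as the least
collection closed under the given rules). -/
inductive IsGVert {d : ℕ} (V : VASS d) :
    Set V.Q → Finset (V.Q × (Fin d → ℤ) × V.Q) → Prop
  | base (p : V.Q) : IsGVert V (demClass (V.lock ∅) p) ∅
  | dem {C : Set V.Q} {L : Finset (V.Q × (Fin d → ℤ) × V.Q)} (p q : V.Q)
      (h : IsGVert V C L) (hp : p ∈ C) (hdem : ¬ (V.lock L).angelic p)
      (hedge : DEdge (V.lock L) C (demClass (V.lock L) q)) :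
      IsGVert V (demClass (V.lock L) q) L
  | ang {C : Set V.Q} {L : Finset (V.Q × (Fin d → ℤ) × V.Q)} (p : V.Q)
      (u : Fin d → ℤ) (q : V.Q)
      (h : IsGVert V C L) (hp : p ∈ C) (hang : (V.lock L).angelic p)
      (ht : (p, u, q) ∈ V.Tran) :
      IsGVert V (demClass (V.lock (insert (p, u, q) L)) q) (insert (p, u, q) L)

/-- The edges of the locking decomposition `G_A`. -/
def GEdge {d : ℕ} (V : VASS d) :
    (Set V.Q × Finset (V.Q × (Fin d → ℤ) × V.Q)) →
    (Set V.Q × Finset (V.Q × (Fin d → ℤ) × V.Q)) → Prop := fun x y =>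
  IsGVert V x.1 x.2 ∧
  ((y.2 = x.2 ∧ (∃ p ∈ x.1, ¬ (V.lock x.2).angelic p) ∧
      (∃ q : V.Q, y.1 = demClass (V.lock x.2) q) ∧ DEdge (V.lock x.2) x.1 y.1) ∨
   (∃ p ∈ x.1, (V.lock x.2).angelic p ∧ ∃ u q, (p, u, q) ∈ V.Tran ∧
      y.2 = insert (p, u, q) x.2 ∧ y.1 = demClass (V.lock y.2) q))

/-- The state `a` is demonic in `A_L`. -/
def Dem (V : VASS d) (L : Finset (V.Q × (Fin d → ℤ) × V.Q)) (a : V.Q) : Prop :=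
  ¬ (V.lock L).angelic a

/-- An edge of `A_L` whose source is demonic; its target is arbitrary. -/
def SemiStep (V : VASS d) (L : Finset (V.Q × (Fin d → ℤ) × V.Q)) (a b : V.Q) : Prop :=
  Dem V L a ∧ ∃ u, (a, u, b) ∈ (V.lock L).Tran

/-- Reachability in `A_L` by paths all of whose sources are demonic. -/
def SemiReach (V : VASS d) (L : Finset (V.Q × (Fin d → ℤ) × V.Q)) : V.Q → V.Q → Prop :=
  Relation.ReflTransGen (SemiStep V L)

/-! ### Demonic classes in terms of `SemiReach` -/

lemma SemiReach.dem {V : VASS d} {L : Finset (V.Q × (Fin d → ℤ) × V.Q)} {a b : V.Q}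
    (h : SemiReach V L a b) (hb : Dem V L b) : Dem V L a := by
  rcases Relation.ReflTransGen.cases_head h with h | ⟨c, hc, -⟩
  · exact h ▸ hb
  · exact hc.1

lemma demReach_iff {V : VASS d} {L : Finset (V.Q × (Fin d → ℤ) × V.Q)} {a b : V.Q}
    (hb : Dem V L b) : demReach (V.lock L) a b ↔ SemiReach V L a b := by
  constructor
  · intro h
    exact Relation.ReflTransGen.mono (fun x y hxy => ⟨hxy.1, hxy.2.2⟩) _ _ h
  · intro h
    induction h using Relation.ReflTransGen.head_induction_on with
    | refl => exact Relation.ReflTransGen.refl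
    | head hac hcb ih => exact Relation.ReflTransGen.head ⟨hac.1, SemiReach.dem hcb hb, hac.2⟩ ih

lemma mem_demClass_iff {V : VASS d} {L : Finset (V.Q × (Fin d → ℤ) × V.Q)} {a b : V.Q} :
    b ∈ demClass (V.lock L) a ↔
      a = b ∨ (Dem V L a ∧ Dem V L b ∧ SemiReach V L a b ∧ SemiReach V L b a) := by
  change (a = b ∨ (Dem V L a ∧ Dem V L b ∧ demReach (V.lock L) a b ∧
    demReach (V.lock L) b a)) ↔ _
  constructor
  · rintro (h | ⟨h1, h2, h3, h4⟩)
    · exact Or.inl h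
    · exact Or.inr ⟨h1, h2, (demReach_iff h2).1 h3, (demReach_iff h1).1 h4⟩
  · rintro (h | ⟨h1, h2, h3, h4⟩)
    · exact Or.inl h
    · exact Or.inr ⟨h1, h2, (demReach_iff h2).2 h3, (demReach_iff h1).2 h4⟩

lemma semiReach_of_mem {V : VASS d} {L : Finset (V.Q × (Fin d → ℤ) × V.Q)} {c a b : V.Q}
    (ha : a ∈ demClass (V.lock L) c) (hb : b ∈ demClass (V.lock L) c) : SemiReach V L a b := by
  rw [mem_demClass_iff] at ha hb
  have h1 : SemiReach V L a c := by
    rcases ha with rfl | h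
    · exact Relation.ReflTransGen.refl
    · exact h.2.2.2
  have h2 : SemiReach V L c b := by
    rcases hb with rfl | h
    · exact Relation.ReflTransGen.refl
    · exact h.2.2.1
  exact h1.trans h2

lemma dem_of_mem {V : VASS d} {L : Finset (V.Q × (Fin d → ℤ) × V.Q)} {c a b : V.Q}
    (ha : a ∈ demClass (V.lock L) c) (hb : b ∈ demClass (V.lock L) c) (hd : Dem V L a) :
    Dem V L b :=
  (semiReach_of_mem hb ha).dem hd

lemma demClass_eq {V : VASS d} {L : Finset (V.Q × (Fin d → ℤ) × V.Q)} {a b : V.Q}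
    (h : b ∈ demClass (V.lock L) a) : demClass (V.lock L) a = demClass (V.lock L) b := by
  rcases mem_demClass_iff.1 h with rfl | ⟨h1, h2, h3, h4⟩
  · rfl
  · ext r
    have e : ∀ {s t : V.Q}, Dem V L s → Dem V L t → SemiReach V L s t → SemiReach V L t s →
        r ∈ demClass (V.lock L) s → r ∈ demClass (V.lock L) t := by
      intro s t hs ht hst hts hr
      rcases mem_demClass_iff.1 hr with rfl | ⟨-, h6, h7, h8⟩
      · exact mem_demClass_iff.2 (Or.inr ⟨ht, hs, hts, hst⟩)
      · exact mem_demClass_iff.2 (Or.inr ⟨ht, h6, hts.trans h7, h8.trans hst⟩)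
    exact ⟨e h1 h2 h3 h4, e h2 h1 h4 h3⟩

lemma self_mem_demClass {V : VASS d} {L : Finset (V.Q × (Fin d → ℤ) × V.Q)} {a : V.Q} :
    a ∈ demClass (V.lock L) a := mem_demClass_iff.2 (Or.inl rfl)

lemma IsGVert.exists_eq {V : VASS d} {C : Set V.Q} {L : Finset (V.Q × (Fin d → ℤ) × V.Q)}
    (h : IsGVert V C L) : ∃ c : V.Q, C = demClass (V.lock L) c := by
  cases h with
  | base p => exact ⟨p, rfl⟩
  | dem p q => exact ⟨q, rfl⟩
  | ang p u q => exact ⟨q, rfl⟩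

/-! ### Locking one more state -/

lemma Dem.lock_insert {V : VASS d} {L : Finset (V.Q × (Fin d → ℤ) × V.Q)} {a : V.Q}
    (h : Dem V L a) (t : V.Q × (Fin d → ℤ) × V.Q) : Dem V (insert t L) a := by
  rintro ⟨h1, h2⟩
  refine h ⟨h1, ?_⟩
  rintro ⟨s, hs, hsa⟩
  exact h2 ⟨s, Finset.mem_insert_of_mem hs, hsa⟩

lemma dem_lock_insert_self {V : VASS d} {L : Finset (V.Q × (Fin d → ℤ) × V.Q)}
    (t : V.Q × (Fin d → ℤ) × V.Q) : Dem V (insert t L) t.1 :=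
  fun h => h.2 ⟨t, Finset.mem_insert_self _ _, rfl⟩

lemma semiStep_lock_insert_self {V : VASS d} {L : Finset (V.Q × (Fin d → ℤ) × V.Q)}
    {p q : V.Q} {u : Fin d → ℤ} : SemiStep V (insert (p, u, q) L) p q :=
  ⟨dem_lock_insert_self (p, u, q), u,
    Finset.mem_union_right _ (Finset.mem_insert_self _ _)⟩

/-- Outgoing transitions of demonic states survive the locking of an angelic state. -/
lemma SemiReach.lock_insert {V : VASS d} {L : Finset (V.Q × (Fin d → ℤ) × V.Q)} {a b p q : V.Q}
    {u : Fin d → ℤ} (h : SemiReach V L a b) (hp : ¬ Dem V L p) :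
    SemiReach V (insert (p, u, q) L) a b := by
  refine Relation.ReflTransGen.mono ?_ _ _ h
  rintro x y ⟨hx, w, hw⟩
  refine ⟨hx.lock_insert _, w, ?_⟩
  have hw' : (x, w, y) ∈ V.Tran.filter (fun t => ¬ lockedBy L t.1) ∪ L := hw
  change (x, w, y) ∈ V.Tran.filter (fun t => ¬ lockedBy (insert (p, u, q) L) t.1) ∪
    insert (p, u, q) L
  rw [Finset.mem_union, Finset.mem_filter] at hw' ⊢
  rcases hw' with ⟨h1, h2⟩ | h1
  · refine Or.inl ⟨h1, ?_⟩
    rintro ⟨t, ht, htx⟩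
    rcases Finset.mem_insert.1 ht with rfl | ht
    · have hpx : p = x := htx
      exact hp (hpx ▸ hx)
    · exact h2 ⟨t, ht, htx⟩
  · exact Or.inr (Finset.mem_insert_of_mem h1)

/-! ### Counting the demonic vertices of a path -/

/-- The vertex `x` of `G_A` is demonic. -/
def DemVert (V : VASS d) (x : Set V.Q × Finset (V.Q × (Fin d → ℤ) × V.Q)) : Prop :=
  ∃ p ∈ x.1, ¬ (V.lock x.2).angelic p

/-- `S` is an admissible set of states charged up to the vertex `x` of a path: its elements are
demonic at `x` and reach every state of `x`. -/
def Charged (V : VASS d) (x : Set V.Q × Finset (V.Q × (Fin d → ℤ) × V.Q)) (S : Finset V.Q) :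
    Prop :=
  ∀ s ∈ S, Dem V x.2 s ∧ ∀ r ∈ x.1, SemiReach V x.2 s r

/-- Along an edge into `y`, the charged set stays admissible, and a new state can be charged
if `y` is demonic. -/
lemma exists_charge {V : VASS d} {x y : Set V.Q × Finset (V.Q × (Fin d → ℤ) × V.Q)}
    (h : GEdge V x y) {S : Finset V.Q} (hS : Charged V x S) :
    ∃ S', Charged V y S' ∧ S'.card = S.card + if DemVert V y then 1 else 0 := by
  obtain ⟨C, L⟩ := x
  obtain ⟨C', L'⟩ := y
  obtain ⟨hx, h⟩ := h
  obtain ⟨c, hc⟩ := hx.exists_eq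
  -- It suffices that old charges reach `C'`, and that a demonic `C'` has an uncharged state.
  suffices hk : Charged V (C', L') S ∧ (DemVert V (C', L') →
      ∃ s, s ∉ S ∧ Dem V L' s ∧ ∀ r ∈ C', SemiReach V L' s r) by
    obtain ⟨h1, h2⟩ := hk
    by_cases hd : DemVert V (C', L')
    · obtain ⟨s, hs, hsd, hsr⟩ := h2 hd
      refine ⟨insert s S, ?_, by rw [Finset.card_insert_of_notMem hs, if_pos hd]⟩
      intro t ht
      rcases Finset.mem_insert.1 ht with rfl | ht
      · exact ⟨hsd, hsr⟩
      · exact h1 t ht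
    · exact ⟨S, h1, by rw [if_neg hd]; rfl⟩
  dsimp only at h hc
  subst hc
  rcases h with ⟨rfl, ⟨p, hp, hpd⟩, ⟨q, rfl⟩, hne, a, ha, b, hb, w, hw⟩ |
    ⟨p, hp, hpa, u, q, ht, rfl, rfl⟩
  · have had : Dem V L' a := dem_of_mem hp ha hpd
    have hab : SemiReach V L' a b := Relation.ReflTransGen.single ⟨had, w, hw⟩
    refine ⟨fun s hs => ⟨(hS s hs).1, fun r hr => ?_⟩, ?_⟩
    · exact (((hS s hs).2 a ha).trans hab).trans (semiReach_of_mem hb hr)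
    · rintro ⟨r, hr, hrd⟩
      have hbd : Dem V L' b := dem_of_mem hr hb hrd
      refine ⟨b, fun hbS => hne ?_, hbd, fun r hr => semiReach_of_mem hb hr⟩
      have hba : SemiReach V L' b a := (hS b hbS).2 a ha
      rw [demClass_eq ha, demClass_eq hb]
      exact demClass_eq (mem_demClass_iff.2 (Or.inr ⟨had, hbd, hab, hba⟩))
  · have hpn : ¬ Dem V L p := fun h => h hpa
    have hpq : SemiReach V (insert (p, u, q) L) p q :=
      Relation.ReflTransGen.single semiStep_lock_insert_self
    have hSp : ∀ s ∈ S, SemiReach V (insert (p, u, q) L) s p :=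
      fun s hs => ((hS s hs).2 p hp).lock_insert hpn
    refine ⟨fun s hs => ⟨(hS s hs).1.lock_insert _, fun r hr => ?_⟩, ?_⟩
    · exact ((hSp s hs).trans hpq).trans (semiReach_of_mem self_mem_demClass hr)
    · rintro ⟨r, hr, hrd⟩
      have hqd : Dem V (insert (p, u, q) L) q := dem_of_mem hr self_mem_demClass hrd
      by_cases hqp : SemiReach V (insert (p, u, q) L) q p
      · exact ⟨p, fun hpS => hpn (hS p hpS).1, dem_lock_insert_self (p, u, q),
          fun r hr => hpq.trans (semiReach_of_mem self_mem_demClass hr)⟩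
      · exact ⟨q, fun hqS => hqp (hSp q hqS), hqd,
          fun r hr => semiReach_of_mem self_mem_demClass hr⟩

lemma card_add_countP_dem_le {V : VASS d}
    (vs : List (Set V.Q × Finset (V.Q × (Fin d → ℤ) × V.Q))) :
    ∀ (x : Set V.Q × Finset (V.Q × (Fin d → ℤ) × V.Q)) (S : Finset V.Q), Charged V x S →
      (x :: vs).IsChain (GEdge V) →
      S.card + vs.countP (fun x => decide (DemVert V x)) ≤ Nat.card V.Q := by
  induction vs with
  | nil =>
    intro x S _ _
    simpa using Finset.card_le_univ S
  | cons y vs ih =>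
    intro x S hS hch
    rw [List.isChain_cons_cons] at hch
    obtain ⟨S', hS', hcard⟩ := exists_charge hch.1 hS
    have := ih y S' hS' hch.2
    rw [List.countP_cons]
    simp only [decide_eq_true_eq]
    omega

lemma countP_dem_le {V : VASS d} (vs : List (Set V.Q × Finset (V.Q × (Fin d → ℤ) × V.Q)))
    (hch : vs.IsChain (GEdge V)) (hv : ∀ x ∈ vs, IsGVert V x.1 x.2) :
    vs.countP (fun x => decide (DemVert V x)) ≤ Nat.card V.Q := by
  cases vs with
  | nil => simp
  | cons x vs =>
    rw [List.countP_cons]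
    simp only [decide_eq_true_eq]
    by_cases hd : DemVert V x
    · rw [if_pos hd]
      obtain ⟨p, hp, hpd⟩ := hd
      obtain ⟨c, hc⟩ := (hv x List.mem_cons_self).exists_eq
      have hS : Charged V x {p} := by
        intro s hs
        rw [Finset.mem_singleton.1 hs]
        refine ⟨hpd, fun r hr => ?_⟩
        rw [hc] at hp hr
        exact semiReach_of_mem hp hr
      have := card_add_countP_dem_le vs x {p} hS hch
      rw [Finset.card_singleton] at this
      omega
    · rw [if_neg hd]
      have := card_add_countP_dem_le vs x ∅ (by intro s hs; simp at hs) hch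
      rw [Finset.card_empty] at this
      omega

/-! ### Counting the angelic vertices of a path -/

/-- The angelic states of `A` that are locked by `L`. -/
def lockedStates (V : VASS d) (L : Finset (V.Q × (Fin d → ℤ) × V.Q)) :
    Finset {q : V.Q // V.angelic q} :=
  Finset.univ.filter fun q => lockedBy L q.1

lemma card_lockedStates_lt {V : VASS d} {L : Finset (V.Q × (Fin d → ℤ) × V.Q)} {p : V.Q}
    (h : (V.lock L).angelic p) : (lockedStates V L).card < Nat.card {q : V.Q // V.angelic q} := by
  rw [Nat.card_eq_fintype_card]
  refine Finset.card_lt_univ_of_notMem (x := ⟨p, h.1⟩) ?_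
  simpa [lockedStates] using h.2

lemma card_lockedStates_insert {V : VASS d} {L : Finset (V.Q × (Fin d → ℤ) × V.Q)}
    {t : V.Q × (Fin d → ℤ) × V.Q} (h : (V.lock L).angelic t.1) :
    (lockedStates V L).card + 1 ≤ (lockedStates V (insert t L)).card := by
  refine Finset.card_lt_card (Finset.ssubset_iff_of_subset ?_ |>.2 ⟨⟨t.1, h.1⟩, ?_, ?_⟩)
  · intro q hq
    obtain ⟨s, hs, hsq⟩ := (Finset.mem_filter.1 hq).2
    exact Finset.mem_filter.2 ⟨Finset.mem_univ _, s, Finset.mem_insert_of_mem hs, hsq⟩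
  · exact Finset.mem_filter.2 ⟨Finset.mem_univ _, t, Finset.mem_insert_self _ _, rfl⟩
  · intro hq
    exact h.2 (Finset.mem_filter.1 hq).2

lemma card_lockedStates_add_countP_le {V : VASS d}
    (vs : List (Set V.Q × Finset (V.Q × (Fin d → ℤ) × V.Q))) :
    ∀ x : Set V.Q × Finset (V.Q × (Fin d → ℤ) × V.Q), (x :: vs).IsChain (GEdge V) →
      (∀ y ∈ x :: vs, IsGVert V y.1 y.2) →
      (lockedStates V x.2).card + (x :: vs).countP (fun x => !decide (DemVert V x)) ≤
        Nat.card {q : V.Q // V.angelic q} := by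
  induction vs with
  | nil =>
    intro x _ hv
    by_cases hd : DemVert V x
    · have := Finset.card_le_univ (lockedStates V x.2)
      rw [Nat.card_eq_fintype_card]
      simpa [hd] using this
    · obtain ⟨c, hc⟩ := (hv x List.mem_cons_self).exists_eq
      have hca : (V.lock x.2).angelic c := by
        by_contra hcd
        exact hd ⟨c, hc ▸ self_mem_demClass, hcd⟩
      have := card_lockedStates_lt hca
      simpa [hd] using this
  | cons y vs ih =>
    intro x hch hv
    rw [List.isChain_cons_cons] at hch
    have h := ih y hch.2 (fun z hz => hv z (List.mem_cons_of_mem _ hz))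
    obtain ⟨c, hc⟩ := (hv x List.mem_cons_self).exists_eq
    rw [List.countP_cons]
    rcases hch.1.2 with ⟨h2, hd, -⟩ | ⟨p, hp, hpa, u, q, ht, h2, -⟩
    · have hd' : DemVert V x := hd
      rw [h2] at h
      simpa [hd'] using h
    · have := card_lockedStates_insert (t := (p, u, q)) hpa
      rw [h2] at h
      split_ifs <;> omega

/-! ### Length of paths and acyclicity -/

lemma length_le {V : VASS d} (vs : List (Set V.Q × Finset (V.Q × (Fin d → ℤ) × V.Q)))
    (hch : vs.IsChain (GEdge V)) (hv : ∀ x ∈ vs, IsGVert V x.1 x.2) :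
    vs.length ≤ Nat.card V.Q + Nat.card {q : V.Q // V.angelic q} := by
  have h1 := countP_dem_le vs hch hv
  have h2 : vs.countP (fun x => !decide (DemVert V x)) ≤ Nat.card {q : V.Q // V.angelic q} := by
    cases vs with
    | nil => simp
    | cons x vs =>
      have := card_lockedStates_add_countP_le vs x hch hv
      omega
  have h3 := List.length_eq_countP_add_countP (fun x => decide (DemVert V x)) (l := vs)
  have h4 : vs.countP (fun x => decide ¬ (decide (DemVert V x) = true)) =
      vs.countP (fun x => !decide (DemVert V x)) := by
    congr 1
    funext x
    simp
  omega

/-- A nonempty walk from `x` to `y` prolongs every path of `G_A` from `y` to a strictly longer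
one from `x`. -/
lemma exists_longer_path {V : VASS d} {x y : Set V.Q × Finset (V.Q × (Fin d → ℤ) × V.Q)}
    (h : Relation.TransGen (GEdge V) x y) {n : ℕ}
    (hy : ∃ l, (y :: l).IsChain (GEdge V) ∧ (∀ z ∈ y :: l, IsGVert V z.1 z.2) ∧ n ≤ l.length) :
    ∃ l, (x :: l).IsChain (GEdge V) ∧ (∀ z ∈ x :: l, IsGVert V z.1 z.2) ∧ n + 1 ≤ l.length := by
  have key : ∀ {a b : Set V.Q × Finset (V.Q × (Fin d → ℤ) × V.Q)} {m : ℕ}, GEdge V a b →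
      (∃ l, (b :: l).IsChain (GEdge V) ∧ (∀ z ∈ b :: l, IsGVert V z.1 z.2) ∧ m ≤ l.length) →
      ∃ l, (a :: l).IsChain (GEdge V) ∧ (∀ z ∈ a :: l, IsGVert V z.1 z.2) ∧
        m + 1 ≤ l.length := by
    rintro a b m hab ⟨l, h1, h2, h3⟩
    refine ⟨b :: l, List.isChain_cons_cons.2 ⟨hab, h1⟩, ?_, by simpa using h3⟩
    intro z hz
    rcases List.mem_cons.1 hz with rfl | hz
    · exact hab.1
    · exact h2 z hz
  induction h using Relation.TransGen.head_induction_on with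
  | single hab => exact key hab hy
  | head hab _ ih =>
    obtain ⟨l, h1, h2, h3⟩ := key hab ih
    exact ⟨l, h1, h2, by omega⟩

/-- For every VASS game `A`, the locking decomposition `G_A` is acyclic,
and every path in `G_A` has length at most `|Q| + |Q_A|`, with at most `|Q|` demonic
vertices on any path. -/
theorem locking_decomposition_acyclic {d : ℕ} (V : VASS d) (hT : V.total) :
    (∀ x, ¬ Relation.TransGen (GEdge V) x x) ∧
    (∀ vs : List (Set V.Q × Finset (V.Q × (Fin d → ℤ) × V.Q)),
      vs.Chain' (GEdge V) → (∀ x ∈ vs, IsGVert V x.1 x.2) →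
      vs.length ≤ Nat.card V.Q + Nat.card {q : V.Q // V.angelic q} ∧
      (vs.countP fun x => decide (∃ p ∈ x.1, ¬ (V.lock x.2).angelic p)) ≤ Nat.card V.Q) := by
  refine ⟨fun x hx => ?_, fun vs hch hv => ⟨length_le vs hch hv, ?_⟩⟩
  swap
  -- The two counts differ only in their decidability instances.
  · convert countP_dem_le vs hch hv
    rfl
  have hxv : IsGVert V x.1 x.2 := by
    obtain ⟨y, hy, -⟩ := Relation.TransGen.head'_iff.1 hx
    exact hy.1
  have long : ∀ n : ℕ, ∃ l, (x :: l).IsChain (GEdge V) ∧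
      (∀ z ∈ x :: l, IsGVert V z.1 z.2) ∧ n ≤ l.length := by
    intro n
    induction n with
    | zero => exact ⟨[], List.isChain_singleton x, by simpa using hxv, le_rfl⟩
    | succ n ih => exact exists_longer_path hx ih
  obtain ⟨l, h1, h2, h3⟩ := long (Nat.card V.Q + Nat.card {q : V.Q // V.angelic q})
  have := length_le _ h1 h2
  rw [List.length_cons] at this
  omega

end
end VassPaper
end
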